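/- arXiv:1207.2178 — 3 statements merged into one kernel-verified Lean document; each statement's English description precedes it below -/
import Mathlib

section
/- Let k ≥ 4 be an integer and let G be a finite simple graph on n vertices whose edges are coloured (not necessarily properly) by a colouring c. If every vertex of G has colour degree at least k and n ≥ 4k − 4, then G contains a rainbow matching of size k. -/
/-- A rainbow matching in an edge-coloured graph `(G, c)`: a finite set of edges of `G`
that are pairwise vertex-disjoint and whose colours are pairwise distinct. -/
def IsRainbowMatching {V : Type*} (G : SimpleGraph V) (c : Sym2 V → ℕ)
    (M : Finset (Sym2 V)) : Prop :=
  (∀ e ∈ M, e ∈ G.edgeSet) ∧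
  (∀ e ∈ M, ∀ f ∈ M, e ≠ f → ∀ v : V, ¬(v ∈ e ∧ v ∈ f)) ∧
  (∀ e ∈ M, ∀ f ∈ M, c e = c f → e = f)

/-- The colour degree of a vertex `v`: the number of distinct colours on edges incident
with `v`. -/
noncomputable def colourDegree {V : Type*} (G : SimpleGraph V) (c : Sym2 V → ℕ)
    (v : V) : ℕ :=
  (c '' G.incidenceSet v).ncard

open Classical in
/-- vertices covered by a set of edges -/
noncomputable def rverts {V : Type*} [Fintype V] (M : Finset (Sym2 V)) : Finset V :=
  Finset.univ.filter (fun v => ∃ e ∈ M, v ∈ e)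

section
set_option linter.unusedSectionVars false
open Classical Finset
variable {V : Type*} [Fintype V]

lemma mem_rverts {M : Finset (Sym2 V)} {v : V} : v ∈ rverts M ↔ ∃ e ∈ M, v ∈ e := by
  simp [rverts]

lemma rverts_mono {M N : Finset (Sym2 V)} (h : M ⊆ N) : rverts M ⊆ rverts N := by
  intro v hv
  rw [mem_rverts] at *
  obtain ⟨e, he, hv⟩ := hv
  exact ⟨e, h he, hv⟩

lemma rverts_insert {M : Finset (Sym2 V)} {x y v : V} :
    v ∈ rverts (insert s(x, y) M) ↔ v = x ∨ v = y ∨ v ∈ rverts M := by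
  simp only [mem_rverts, Finset.mem_insert]
  constructor
  · rintro ⟨e, rfl | he, hv⟩
    · rcases Sym2.mem_iff.1 hv with h | h <;> simp [h]
    · exact Or.inr (Or.inr ⟨e, he, hv⟩)
  · rintro (h | h | ⟨e, he, hv⟩)
    · exact ⟨s(x, y), Or.inl rfl, by simp [h]⟩
    · exact ⟨s(x, y), Or.inl rfl, by simp [h]⟩
    · exact ⟨e, Or.inr he, hv⟩

lemma rverts_union {M N : Finset (Sym2 V)} : rverts (M ∪ N) = rverts M ∪ rverts N := by
  ext v
  simp only [mem_rverts, Finset.mem_union]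
  constructor
  · rintro ⟨e, he | he, hv⟩
    · exact Or.inl ⟨e, he, hv⟩
    · exact Or.inr ⟨e, he, hv⟩
  · rintro (⟨e, he, hv⟩ | ⟨e, he, hv⟩)
    · exact ⟨e, Or.inl he, hv⟩
    · exact ⟨e, Or.inr he, hv⟩

lemma rverts_card_le (M : Finset (Sym2 V)) : (rverts M).card ≤ 2 * M.card := by
  have h : rverts M ⊆ M.biUnion (fun e => e.toFinset) := by
    intro v hv
    obtain ⟨e, he, hv⟩ := mem_rverts.1 hv
    exact Finset.mem_biUnion.2 ⟨e, he, by simpa using hv⟩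
  calc _ ≤ _ := Finset.card_le_card h
    _ ≤ M.card * 2 := Finset.card_biUnion_le_card_mul _ _ _ (fun e _ => by
        induction e with | _ x y =>
        rw [Sym2.toFinset_mk_eq]
        exact Finset.card_le_two)
    _ = _ := Nat.mul_comm _ _

/-- a set of covered vertices, at most one in each edge -/
lemma card_le_of_edges {M : Finset (Sym2 V)} {T : Finset V}
    (h : ∀ v ∈ T, ∃ e ∈ M, v ∈ e)
    (h1 : ∀ e ∈ M, ∀ v ∈ T, ∀ w ∈ T, v ∈ e → w ∈ e → v = w) : T.card ≤ M.card := by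
  rcases T.eq_empty_or_nonempty with rfl | ⟨v0, -⟩
  · simp
  have : Nonempty (Sym2 V) := ⟨s(v0, v0)⟩
  choose! f hf hf2 using h
  refine Finset.card_le_card_of_injOn f (fun v hv => hf v hv) ?_
  intro v hv w hw hvw
  exact h1 _ (hf v hv) v hv w hw (hf2 v hv) (hvw ▸ hf2 w hw)

variable {G : SimpleGraph V} {c : Sym2 V → ℕ}

lemma IsRainbowMatching.sub {M N : Finset (Sym2 V)} (h : IsRainbowMatching G c M)
    (hN : N ⊆ M) : IsRainbowMatching G c N :=
  ⟨fun e he => h.1 e (hN he), fun e he f hf => h.2.1 e (hN he) f (hN hf),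
    fun e he f hf => h.2.2 e (hN he) f (hN hf)⟩

lemma IsRainbowMatching.uniq {M : Finset (Sym2 V)} (h : IsRainbowMatching G c M)
    {e f : Sym2 V} (he : e ∈ M) (hf : f ∈ M) {v : V} (h1 : v ∈ e) (h2 : v ∈ f) : e = f := by
  by_contra hne
  exact h.2.1 e he f hf hne v ⟨h1, h2⟩

lemma IsRainbowMatching.union {M N : Finset (Sym2 V)} (h : IsRainbowMatching G c M)
    (h' : IsRainbowMatching G c N) (hd : ∀ v ∈ rverts M, v ∉ rverts N)
    (hc : ∀ e ∈ M, ∀ f ∈ N, c e ≠ c f) :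
    IsRainbowMatching G c (M ∪ N) ∧ (M ∪ N).card = M.card + N.card := by
  refine ⟨⟨?_, ?_, ?_⟩, ?_⟩
  · intro e he
    rcases Finset.mem_union.1 he with he | he
    exacts [h.1 e he, h'.1 e he]
  · intro e he f hf hne v ⟨h1, h2⟩
    rcases Finset.mem_union.1 he with he | he <;> rcases Finset.mem_union.1 hf with hf | hf
    · exact h.2.1 e he f hf hne v ⟨h1, h2⟩
    · exact hd v (mem_rverts.2 ⟨e, he, h1⟩) (mem_rverts.2 ⟨f, hf, h2⟩)
    · exact hd v (mem_rverts.2 ⟨f, hf, h2⟩) (mem_rverts.2 ⟨e, he, h1⟩)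
    · exact h'.2.1 e he f hf hne v ⟨h1, h2⟩
  · intro e he f hf hef
    rcases Finset.mem_union.1 he with he | he <;> rcases Finset.mem_union.1 hf with hf | hf
    · exact h.2.2 e he f hf hef
    · exact absurd hef (hc e he f hf)
    · exact absurd hef.symm (hc f hf e he)
    · exact h'.2.2 e he f hf hef
  · apply Finset.card_union_of_disjoint
    rw [Finset.disjoint_left]
    intro e he he'
    exact hc e he e he' rfl

lemma IsRainbowMatching.ins {M : Finset (Sym2 V)} (h : IsRainbowMatching G c M)
    {x y : V} (hxy : G.Adj x y) (hx : x ∉ rverts M) (hy : y ∉ rverts M)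
    (hc : ∀ e ∈ M, c e ≠ c s(x, y)) :
    IsRainbowMatching G c (insert s(x, y) M) ∧ (insert s(x, y) M).card = M.card + 1 := by
  have h1 : IsRainbowMatching G c {s(x, y)} := by
    refine ⟨?_, ?_, ?_⟩
    · intro e he
      rw [Finset.mem_singleton] at he
      rw [he]; exact hxy
    · intro e he f hf hne
      rw [Finset.mem_singleton] at he hf
      exact absurd (he.trans hf.symm) hne
    · intro e he f hf _
      rw [Finset.mem_singleton] at he hf
      exact he.trans hf.symm
  have := h.union h1 (by
    intro v hv hv2
    obtain ⟨e, he, hve⟩ := mem_rverts.1 hv2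
    rw [Finset.mem_singleton] at he
    subst he
    rcases Sym2.mem_iff.1 hve with r | r
    · exact hx (r ▸ hv)
    · exact hy (r ▸ hv)) (by
    intro e he f hf
    rw [Finset.mem_singleton] at hf
    subst hf
    exact hc e he)
  rw [Finset.union_comm, ← Finset.insert_eq, Finset.card_singleton] at this
  exact this

lemma IsRainbowMatching.not_mem_erase {M : Finset (Sym2 V)} (h : IsRainbowMatching G c M)
    {e : Sym2 V} (he : e ∈ M) {v : V} (hv : v ∈ e) : v ∉ rverts (M.erase e) := by
  intro hv2
  obtain ⟨f, hf, hvf⟩ := mem_rverts.1 hv2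
  rw [Finset.mem_erase] at hf
  exact hf.1 (h.uniq hf.2 he hvf hv)

/-- replace the edge `e ∋ b` by `ub` -/
lemma IsRainbowMatching.swap {M : Finset (Sym2 V)} (h : IsRainbowMatching G c M)
    {e : Sym2 V} (he : e ∈ M) {u b : V} (hb : b ∈ e) (hu : u ∉ rverts M) (hub : G.Adj u b)
    (hc : ∀ e ∈ M, c e ≠ c s(u, b)) :
    IsRainbowMatching G c (insert s(u, b) (M.erase e)) ∧
      (insert s(u, b) (M.erase e)).card = M.card := by
  have h1 := (h.sub (Finset.erase_subset e M)).ins hub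
    (fun hh => hu (rverts_mono (Finset.erase_subset e M) hh)) (h.not_mem_erase he hb)
    (fun f hf => hc f (Finset.mem_of_mem_erase hf))
  refine ⟨h1.1, ?_⟩
  rw [h1.2, Finset.card_erase_of_mem he]
  have := Finset.card_pos.2 ⟨e, he⟩
  omega

structure RCore (H : SimpleGraph V) (c : Sym2 V → ℕ) (X W : Finset V) (ν : ℕ)
    (Q : Finset (Sym2 V)) : Prop where
  h1 : ∀ P, IsRainbowMatching H c P → P.card ≠ ν + 1
  h2 : ∀ P, IsRainbowMatching H c P → P.card = ν → ∀ x y, H.Adj x y → x ∉ rverts P →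
    y ∉ rverts P → False
  h3 : ∀ x ∈ X, ∃ C : Finset ℕ, ν + 1 ≤ C.card ∧ ∀ f ∈ C, (∃ y, H.Adj x y ∧ c s(x, y) = f) ∨
    (∀ P, IsRainbowMatching H c P → P.card = ν → x ∉ rverts P → ∃ e ∈ P, c e = f)
  hWX : W ⊆ X
  hW : ∀ x y, H.Adj x y → x ∈ W → y ∉ W
  hQ : IsRainbowMatching H c Q
  hQc : Q.card = ν
  hmax : ∀ P, IsRainbowMatching H c P → P.card = ν →
    (rverts P ∩ W).card ≤ (rverts Q ∩ W).card

structure RState (H : SimpleGraph V) (c : Sym2 V → ℕ) (W : Finset V) (ν : ℕ)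
    (Q : Finset (Sym2 V)) (S : Finset V) (J : Finset (Sym2 V)) : Prop where
  hJ : J ⊆ Q
  hJW : ∀ e ∈ J, ∃ w ∈ W, w ∈ e
  hSJ : S.card ≤ J.card
  hS : S ⊆ W
  hSQ : ∀ s ∈ S, s ∉ rverts Q
  rel : ∀ f, (∀ e ∈ Q \ J, c e ≠ f) → ∃ P, IsRainbowMatching H c P ∧ P.card = ν ∧
    (∀ e ∈ P, c e ≠ f) ∧ Q \ J ⊆ P ∧ rverts P ⊆ rverts Q ∪ S ∧
    (rverts Q ∩ W).card ≤ (rverts P ∩ W).card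

variable {H : SimpleGraph V} {X W : Finset V} {ν : ℕ} {Q : Finset (Sym2 V)}

lemma adj_of_mem_edge {P : Finset (Sym2 V)} (hP : IsRainbowMatching H c P) {e : Sym2 V}
    (he : e ∈ P) {b : V} (hb : b ∈ e) : ∃ w, e = s(b, w) ∧ H.Adj b w := by
  obtain ⟨w, rfl⟩ := Sym2.mem_iff_exists.1 hb
  exact ⟨w, rfl, hP.1 _ he⟩

/-- the reachable neighbours of an unused vertex -/
lemma RState.nbrs (h : RCore H c X W ν Q) {S : Finset V} {J : Finset (Sym2 V)}
    (hs : RState H c W ν Q S J) {u : V} (hu : u ∈ W) (huQ : u ∉ rverts Q) (huS : u ∉ S) :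
    ∃ T : Finset V, J.card + 1 ≤ T.card ∧ ∀ b ∈ T, H.Adj u b ∧ b ∉ W ∧
      (∃ e ∈ Q, b ∈ e ∧ ∃ w ∈ W, w ∈ e) ∧ ∀ e ∈ Q \ J, c e ≠ c s(u, b) := by
  obtain ⟨C, hC, hC2⟩ := h.h3 u (h.hWX hu)
  set C' := C \ (Q \ J).image c with hC'
  have hcard : J.card + 1 ≤ C'.card := by
    have e1 := Finset.le_card_sdiff ((Q \ J).image c) C
    rw [← hC'] at e1
    have e2 : ((Q \ J).image c).card ≤ (Q \ J).card := Finset.card_image_le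
    have e3 := Finset.card_sdiff_add_card_eq_card hs.hJ
    have e4 := h.hQc
    omega
  have key : ∀ f ∈ C', ∃ y, H.Adj u y ∧ c s(u, y) = f ∧ y ∉ W ∧
      (∃ e ∈ Q, y ∈ e ∧ ∃ w ∈ W, w ∈ e) := by
    intro f hf
    rw [hC', Finset.mem_sdiff] at hf
    have hf2 : ∀ e ∈ Q \ J, c e ≠ f := by
      intro e he hef
      exact hf.2 (Finset.mem_image.2 ⟨e, he, hef⟩)
    obtain ⟨P, hP, hPc, hPf, hPJ, hPv, hPW⟩ := hs.rel f hf2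
    have huP : u ∉ rverts P := by
      intro hh
      rcases Finset.mem_union.1 (hPv hh) with hh | hh
      exacts [huQ hh, huS hh]
    rcases hC2 f hf.1 with ⟨y, hy, hyf⟩ | hbad
    · have hyW : y ∉ W := h.hW u y hy hu
      have hyS : y ∉ S := fun hh => hyW (hs.hS hh)
      refine ⟨y, hy, hyf, hyW, ?_⟩
      have hyQ : y ∈ rverts Q := by
        by_contra hyQ
        have hyP : y ∉ rverts P := by
          intro hh
          rcases Finset.mem_union.1 (hPv hh) with hh | hh
          exacts [hyQ hh, hyS hh]
        have := hP.ins hy huP hyP (by rw [hyf]; exact hPf)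
        exact h.h1 _ this.1 (by rw [this.2, hPc])
      obtain ⟨e, he, hye⟩ := mem_rverts.1 hyQ
      refine ⟨e, he, hye, ?_⟩
      by_contra hno
      push Not at hno
      have heJ : e ∉ J := by
        intro hh
        obtain ⟨w, hw, hwe⟩ := hs.hJW e hh
        exact hno w hw hwe
      have heP : e ∈ P := hPJ (Finset.mem_sdiff.2 ⟨he, heJ⟩)
      have hsw := hP.swap heP hye huP hy (by rw [hyf]; exact hPf)
      have hm := h.hmax _ hsw.1 (hsw.2.trans hPc)
      have hsub : insert u (rverts P ∩ W) ⊆ rverts (insert s(u, y) (P.erase e)) ∩ W := by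
        intro v hv
        rw [Finset.mem_insert] at hv
        rw [Finset.mem_inter, rverts_insert]
        rcases hv with rfl | hv
        · exact ⟨Or.inl rfl, hu⟩
        · rw [Finset.mem_inter] at hv
          refine ⟨Or.inr (Or.inr ?_), hv.2⟩
          obtain ⟨g, hg, hvg⟩ := mem_rverts.1 hv.1
          refine mem_rverts.2 ⟨g, Finset.mem_erase.2 ⟨?_, hg⟩, hvg⟩
          rintro rfl
          exact hno v hv.2 hvg
      have hc2 := Finset.card_le_card hsub
      rw [Finset.card_insert_of_notMem (by simp [huP])] at hc2
      omega
    · obtain ⟨e, he, hef⟩ := hbad P hP hPc huP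
      exact absurd hef (hPf e he)
  have : Nonempty V := ⟨u⟩
  choose! y hy1 hy2 hy3 hy4 using key
  refine ⟨C'.image y, ?_, ?_⟩
  · rw [Finset.card_image_of_injOn]
    · exact hcard
    · intro f hf g hg hfg
      rw [← hy2 f hf, ← hy2 g hg, hfg]
  · intro b hb
    obtain ⟨f, hf, rfl⟩ := Finset.mem_image.1 hb
    refine ⟨hy1 f hf, hy3 f hf, hy4 f hf, ?_⟩
    intro e he hef
    rw [hy2 f hf] at hef
    exact (Finset.mem_sdiff.1 hf).2 (Finset.mem_image.2 ⟨e, he, hef⟩)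

lemma other_unique {e : Sym2 V} {b b' w : V} (hb : b ∈ e) (hb' : b' ∈ e) (hw : w ∈ e)
    (h1 : b ≠ w) (h2 : b' ≠ w) : b = b' := by
  induction e with | _ x y =>
  simp only [Sym2.mem_iff] at *
  grind

lemma RState.step (h : RCore H c X W ν Q) {S : Finset V} {J : Finset (Sym2 V)}
    (hs : RState H c W ν Q S J) {u : V} (hu : u ∈ W) (huQ : u ∉ rverts Q) (huS : u ∉ S) :
    ∃ J', RState H c W ν Q (insert u S) J' := by
  obtain ⟨T, hT, hT2⟩ := hs.nbrs h hu huQ huS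
  have : ∃ b ∈ T, ∀ e ∈ J, b ∉ e := by
    by_contra hno
    push Not at hno
    have := card_le_of_edges (M := J) (T := T) hno (by
      intro e he v hv w hw hve hwe
      obtain ⟨z, hz, hze⟩ := hs.hJW e he
      refine other_unique hve hwe hze ?_ ?_
      · rintro rfl; exact (hT2 v hv).2.1 hz
      · rintro rfl; exact (hT2 w hw).2.1 hz)
    omega
  obtain ⟨b, hb, hbJ⟩ := this
  obtain ⟨hub, hbW, ⟨e, he, hbe, w, hw, hwe⟩, hcb⟩ := hT2 b hb
  have heJ : e ∉ J := fun hh => hbJ e hh hbe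
  have heQJ : e ∈ Q \ J := Finset.mem_sdiff.2 ⟨he, heJ⟩
  refine ⟨insert e J, ?_, ?_, ?_, ?_, ?_, ?_⟩
  · intro g hg
    rcases Finset.mem_insert.1 hg with rfl | hg
    exacts [he, hs.hJ hg]
  · intro g hg
    rcases Finset.mem_insert.1 hg with rfl | hg
    exacts [⟨w, hw, hwe⟩, hs.hJW g hg]
  · rw [Finset.card_insert_of_notMem huS, Finset.card_insert_of_notMem heJ]
    exact Nat.succ_le_succ hs.hSJ
  · intro v hv
    rcases Finset.mem_insert.1 hv with rfl | hv
    exacts [hu, hs.hS hv]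
  · intro v hv
    rcases Finset.mem_insert.1 hv with rfl | hv
    exacts [huQ, hs.hSQ v hv]
  · intro f hf
    by_cases hf2 : ∀ g ∈ Q \ J, c g ≠ f
    · obtain ⟨P, hP, hPc, hPf, hPJ, hPv, hPW⟩ := hs.rel f hf2
      refine ⟨P, hP, hPc, hPf, ?_, ?_, hPW⟩
      · exact (Finset.sdiff_subset_sdiff (Finset.Subset.refl _)
          (Finset.subset_insert _ _)).trans hPJ
      · exact hPv.trans (Finset.union_subset_union_right (Finset.subset_insert _ _))
    · push Not at hf2
      obtain ⟨g, hg, hgf⟩ := hf2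
      have hge : g = e := by
        by_contra hne
        refine hf g ?_ hgf
        rw [Finset.mem_sdiff] at hg ⊢
        refine ⟨hg.1, ?_⟩
        rw [Finset.mem_insert]
        rintro (r | r)
        exacts [hne r, hg.2 r]
      subst hge
      obtain ⟨P, hP, hPc, hPf, hPJ, hPv, hPW⟩ := hs.rel _ hcb
      have huP : u ∉ rverts P := by
        intro hh
        rcases Finset.mem_union.1 (hPv hh) with hh | hh
        exacts [huQ hh, huS hh]
      have hgP : g ∈ P := hPJ hg
      have hsw := hP.swap hgP hbe huP hub hPf
      refine ⟨_, hsw.1, hsw.2.trans hPc, ?_, ?_, ?_, ?_⟩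
      · intro e' he' hce
        rcases Finset.mem_insert.1 he' with rfl | he'
        · exact hcb g hg (hgf.trans hce.symm)
        · rw [Finset.mem_erase] at he'
          exact he'.1 (hP.2.2 _ he'.2 _ hgP (hce.trans hgf.symm))
      · intro e' he'
        rw [Finset.mem_sdiff, Finset.mem_insert] at he'
        push Not at he'
        rw [Finset.mem_insert, Finset.mem_erase]
        exact Or.inr ⟨he'.2.1, hPJ (Finset.mem_sdiff.2 ⟨he'.1, he'.2.2⟩)⟩
      · intro v hv
        rw [rverts_insert] at hv
        rw [Finset.mem_union, Finset.mem_insert]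
        rcases hv with rfl | rfl | hv
        · exact Or.inr (Or.inl rfl)
        · exact Or.inl (mem_rverts.2 ⟨g, he, hbe⟩)
        · rcases Finset.mem_union.1 (hPv (rverts_mono (Finset.erase_subset _ _) hv)) with r | r
          exacts [Or.inl r, Or.inr (Or.inr r)]
      · set P' := insert s(u, b) (P.erase g) with hP'
        have huP' : u ∈ rverts P' ∩ W :=
          Finset.mem_inter.2 ⟨rverts_insert.2 (Or.inl rfl), hu⟩
        have hsub : rverts P ∩ W ⊆ insert w ((rverts P' ∩ W).erase u) := by
          intro v hv
          rw [Finset.mem_inter] at hv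
          rw [Finset.mem_insert, Finset.mem_erase, Finset.mem_inter, hP', rverts_insert]
          by_cases hvw : v = w
          · exact Or.inl hvw
          · refine Or.inr ⟨?_, Or.inr (Or.inr ?_), hv.2⟩
            · rintro rfl; exact huP hv.1
            · obtain ⟨e', he', hve'⟩ := mem_rverts.1 hv.1
              refine mem_rverts.2 ⟨e', Finset.mem_erase.2 ⟨?_, he'⟩, hve'⟩
              rintro rfl
              have : b = v := other_unique hbe hve' hwe (by rintro rfl; exact hbW hw) hvw
              exact hbW (this ▸ hv.2)
        have k1 := Finset.card_le_card hsub
        have k2 := Finset.card_insert_le w ((rverts P' ∩ W).erase u)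
        have k3 := Finset.card_erase_add_one huP'
        omega

lemma RCore.states (h : RCore H c X W ν Q) (S : Finset V) (hS : S ⊆ W)
    (hSQ : ∀ s ∈ S, s ∉ rverts Q) : ∃ J, RState H c W ν Q S J := by
  induction S using Finset.induction_on with
  | empty =>
    refine ⟨∅, by simp, by simp, by simp, by simp, by simp, ?_⟩
    intro f hf
    rw [Finset.sdiff_empty] at hf
    exact ⟨Q, h.hQ, h.hQc, hf, by simp, by simp, le_rfl⟩
  | insert u S hu ih =>
    obtain ⟨J, hJ⟩ := ih (fun v hv => hS (Finset.mem_insert_of_mem hv))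
      (fun v hv => hSQ v (Finset.mem_insert_of_mem hv))
    exact hJ.step h (hS (Finset.mem_insert_self _ _)) (hSQ u (Finset.mem_insert_self _ _)) hu

lemma card_inter_le (hW : ∀ x y, H.Adj x y → x ∈ W → y ∉ W) {P : Finset (Sym2 V)}
    (hP : IsRainbowMatching H c P) :
    (rverts P ∩ W).card ≤ (P.filter (fun e => ∃ w ∈ W, w ∈ e)).card := by
  apply card_le_of_edges
  · intro v hv
    rw [Finset.mem_inter] at hv
    obtain ⟨e, he, hve⟩ := mem_rverts.1 hv.1
    exact ⟨e, Finset.mem_filter.2 ⟨he, v, hv.2, hve⟩, hve⟩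
  · intro e he v hv w hw hve hwe
    by_contra hne
    rw [Finset.mem_filter] at he
    rw [Finset.mem_inter] at hv hw
    obtain ⟨z, rfl, hz⟩ := adj_of_mem_edge hP he.1 hve
    rcases Sym2.mem_iff.1 hwe with r | r
    · exact hne r.symm
    · subst r; exact hW _ _ hz hv.2 hw.2

theorem RCore.contra (h : RCore H c X W ν Q) (hν : 1 ≤ ν) (hX : 4 * ν ≤ X.card)
    (hWc : 2 * ν ≤ W.card) : False := by
  set U := W \ rverts Q with hU
  have hUW : U ⊆ W := Finset.sdiff_subset
  have hUQ : ∀ s ∈ U, s ∉ rverts Q := fun s hs => (Finset.mem_sdiff.1 hs).2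
  obtain ⟨J, hJ⟩ := h.states U hUW hUQ
  set R := Q.filter (fun e => ∃ w ∈ W, w ∈ e) with hR
  have hJR : J ⊆ R := fun e he => Finset.mem_filter.2 ⟨hJ.hJ he, hJ.hJW e he⟩
  have hRQ : R ⊆ Q := Finset.filter_subset _ _
  have c1 := card_inter_le h.hW h.hQ
  rw [← hR] at c1
  have c2 := Finset.card_le_card hJR
  have c3 := Finset.card_le_card hRQ
  have c4 := h.hQc
  have c5 := hJ.hSJ
  have c6 : U.card + (rverts Q ∩ W).card = W.card := by
    rw [Finset.inter_comm]; exact Finset.card_sdiff_add_card_inter W (rverts Q)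
  have hRQ' : R = Q := Finset.eq_of_subset_of_card_le hRQ (by omega)
  have hJQ : J = Q := Finset.eq_of_subset_of_card_le hJ.hJ (by omega)
  have hUc : U.card = ν := by omega
  have hQW : ∀ e ∈ Q, ∃ w ∈ W, w ∈ e := by
    intro e he
    rw [← hRQ'] at he
    exact (Finset.mem_filter.1 he).2
  set B := rverts Q \ W with hB
  have hBc : B.card ≤ ν := by
    rw [← c4]
    apply card_le_of_edges
    · intro v hv
      exact mem_rverts.1 (Finset.mem_sdiff.1 hv).1
    · intro e he v hv w hw hve hwe
      obtain ⟨z, hz, hze⟩ := hQW e he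
      refine other_unique hve hwe hze ?_ ?_
      · rintro rfl; exact (Finset.mem_sdiff.1 hv).2 hz
      · rintro rfl; exact (Finset.mem_sdiff.1 hw).2 hz
  have hv : ∃ v ∈ X, v ∉ W ∪ B := by
    by_contra hno
    push Not at hno
    have k1 := Finset.card_le_card (show X ⊆ W ∪ B from hno)
    have k2 := Finset.card_union_le W B
    omega
  obtain ⟨v, hvX, hvWB⟩ := hv
  have hvW : v ∉ W := fun hh => hvWB (Finset.mem_union_left _ hh)
  have hvQ : v ∉ rverts Q := by
    intro hh
    exact hvWB (Finset.mem_union_right _ (Finset.mem_sdiff.2 ⟨hh, hvW⟩))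
  have hvP : ∀ P : Finset (Sym2 V), rverts P ⊆ rverts Q ∪ U → v ∉ rverts P := by
    intro P hP hh
    rcases Finset.mem_union.1 (hP hh) with r | r
    exacts [hvQ r, hvW (hUW r)]
  have hrel : ∀ f, ∃ P, IsRainbowMatching H c P ∧ P.card = ν ∧
    (∀ e ∈ P, c e ≠ f) ∧ rverts P ⊆ rverts Q ∪ U := by
    intro f
    obtain ⟨P, a1, a2, a3, a4, a5, a6⟩ := hJ.rel f (by rw [hJQ]; simp)
    exact ⟨P, a1, a2, a3, a5⟩
  have hUB : ∀ u ∈ U, ∀ b ∈ B, H.Adj u b := by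
    intro u hu b hb
    obtain ⟨J', hJ'⟩ := h.states (U.erase u) ((Finset.erase_subset _ _).trans hUW)
      (fun s hs => hUQ s (Finset.mem_of_mem_erase hs))
    obtain ⟨T, hT, hT2⟩ := hJ'.nbrs h (hUW hu) (hUQ u hu) (Finset.notMem_erase _ _)
    have hTB : T ⊆ B := by
      intro b hb
      obtain ⟨-, b2, ⟨e, he, hbe, -⟩, -⟩ := hT2 b hb
      exact Finset.mem_sdiff.2 ⟨mem_rverts.2 ⟨e, he, hbe⟩, b2⟩
    have k1 := hJ'.hSJ
    have k2 := Finset.card_erase_add_one hu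
    have : T = B := Finset.eq_of_subset_of_card_le hTB (by omega)
    exact (hT2 b (this ▸ hb)).1
  obtain ⟨C, hC, hC2⟩ := h.h3 v hvX
  have key : ∀ f ∈ C, ∃ y, H.Adj v y ∧ c s(v, y) = f ∧ y ∈ rverts Q := by
    intro f hf
    rcases hC2 f hf with ⟨y, hy, hyf⟩ | hbad
    · refine ⟨y, hy, hyf, ?_⟩
      by_contra hyQ
      exact h.h2 Q h.hQ c4 v y hy hvQ hyQ
    · obtain ⟨P, a1, a2, a3, a4⟩ := hrel f
      obtain ⟨e, he, hef⟩ := hbad P a1 a2 (hvP P a4)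
      exact absurd hef (a3 e he)
  have : Nonempty V := ⟨v⟩
  choose! y hy1 hy2 hy3 using key
  have hex : ∃ f ∈ C, y f ∈ W := by
    by_contra hno
    push Not at hno
    have k1 : C.card ≤ B.card := by
      refine Finset.card_le_card_of_injOn y ?_ ?_
      · intro f hf
        exact Finset.mem_sdiff.2 ⟨hy3 f hf, hno f hf⟩
      · intro f hf g hg hfg
        rw [← hy2 f hf, ← hy2 g hg, hfg]
    omega
  obtain ⟨f, hf, hfW⟩ := hex
  obtain ⟨P, a1, a2, a3, a4⟩ := hrel f
  have hvP' := hvP P a4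
  have hcf : ∀ e ∈ P, c e ≠ c s(v, y f) := by rw [hy2 f hf]; exact a3
  by_cases hw : y f ∈ rverts P
  · obtain ⟨e, he, hwe⟩ := mem_rverts.1 hw
    obtain ⟨b, rfl, hwb⟩ := adj_of_mem_edge a1 he hwe
    have hbW : b ∉ W := h.hW _ _ hwb hfW
    have hbP : b ∈ rverts P := mem_rverts.2 ⟨_, he, by simp⟩
    have hbB : b ∈ B := by
      refine Finset.mem_sdiff.2 ⟨?_, hbW⟩
      rcases Finset.mem_union.1 (a4 hbP) with r | r
      exacts [r, absurd (hUW r) hbW]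
    have hu : ∃ u ∈ U, u ∉ rverts P := by
      by_contra hno
      push Not at hno
      have k1 : insert (y f) U ⊆ rverts P ∩ W := by
        intro z hz
        rcases Finset.mem_insert.1 hz with rfl | hz
        · exact Finset.mem_inter.2 ⟨hw, hfW⟩
        · exact Finset.mem_inter.2 ⟨hno z hz, hUW hz⟩
      have k2 := Finset.card_le_card k1
      rw [Finset.card_insert_of_notMem (fun hh => hUQ _ hh (hy3 f hf))] at k2
      have k3 := (card_inter_le h.hW a1).trans (Finset.card_filter_le _ _)
      omega
    obtain ⟨u, huU, huP⟩ := hu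
    have hsw := a1.swap he hwe hvP' (hy1 f hf) hcf
    refine h.h2 _ hsw.1 (hsw.2.trans a2) u b (hUB u huU b hbB) ?_ ?_
    · rw [rverts_insert]
      rintro (r | r | r)
      · exact hvW (r ▸ hUW huU)
      · exact huP (r ▸ hw)
      · exact huP (rverts_mono (Finset.erase_subset _ _) r)
    · rw [rverts_insert]
      rintro (r | r | r)
      · exact hvP' (r ▸ hbP)
      · exact hbW (r ▸ hfW)
      · exact a1.not_mem_erase he (by simp) r
  · have := a1.ins (hy1 f hf) hvP' hw hcf
    exact h.h1 _ this.1 (by rw [this.2, a2])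

/-- the core lemma -/
theorem rainbow_core (M0 : Finset (Sym2 V)) (hM0 : IsRainbowMatching H c M0)
    (hM0c : M0.card = ν) (hν : 1 ≤ ν) (hX : 4 * ν ≤ X.card)
    (hXH : ∀ x y, H.Adj x y → x ∈ X)
    (h1 : ∀ P, IsRainbowMatching H c P → P.card ≠ ν + 1)
    (h2 : ∀ P, IsRainbowMatching H c P → P.card = ν → ∀ x y, H.Adj x y → x ∉ rverts P →
      y ∉ rverts P → False)
    (h3 : ∀ x ∈ X, ∃ C : Finset ℕ, ν + 1 ≤ C.card ∧
      ∀ f ∈ C, (∃ y, H.Adj x y ∧ c s(x, y) = f) ∨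
      (∀ P, IsRainbowMatching H c P → P.card = ν → x ∉ rverts P → ∃ e ∈ P, c e = f)) :
    False := by
  set W := X \ rverts M0 with hW
  obtain ⟨Q, hQ, hQm⟩ := Finset.exists_max_image
    (Finset.univ.filter (fun P : Finset (Sym2 V) => IsRainbowMatching H c P ∧ P.card = ν))
    (fun P => (rverts P ∩ W).card) ⟨M0, by simp [hM0, hM0c]⟩
  simp only [Finset.mem_filter, Finset.mem_univ, true_and] at hQ hQm
  have hcore : RCore H c X W ν Q := by
    refine ⟨h1, h2, h3, Finset.sdiff_subset, ?_, hQ.1, hQ.2, fun P a b => hQm P ⟨a, b⟩⟩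
    intro x y hxy hx hy
    exact h2 M0 hM0 hM0c x y hxy (Finset.mem_sdiff.1 hx).2 (Finset.mem_sdiff.1 hy).2
  refine hcore.contra hν hX ?_
  have k1 := Finset.le_card_sdiff (rverts M0) X
  rw [← hW] at k1
  have k2 := rverts_card_le M0
  omega

/-- colours at a vertex, as a finset -/
lemma colours_finset (v : V) : ∃ C : Finset ℕ, C.card = colourDegree G c v ∧
    ∀ f ∈ C, ∃ y, G.Adj v y ∧ c s(v, y) = f := by
  refine ⟨(Finset.univ.filter (fun y => G.Adj v y)).image (fun y => c s(v, y)), ?_, ?_⟩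
  · rw [colourDegree, ← Set.ncard_coe_finset]
    congr 1
    ext f
    simp only [Finset.coe_image, Finset.coe_filter, Finset.mem_univ, true_and, Set.mem_image,
      Set.mem_setOf_eq]
    constructor
    · rintro ⟨y, hy, rfl⟩
      exact ⟨s(v, y), ⟨hy, by simp⟩, rfl⟩
    · rintro ⟨e, ⟨he, hv⟩, rfl⟩
      obtain ⟨y, rfl⟩ := Sym2.mem_iff_exists.1 hv
      exact ⟨y, he, rfl⟩
  · intro f hf
    obtain ⟨y, hy, rfl⟩ := Finset.mem_image.1 hf
    exact ⟨y, (Finset.mem_filter.1 hy).2, rfl⟩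

/-- the global configuration -/
structure RGlob (G : SimpleGraph V) (c : Sym2 V → ℕ) (m : ℕ) (M E : Finset (Sym2 V)) : Prop where
  hM : IsRainbowMatching G c M
  hMc : M.card = m
  hE : IsRainbowMatching G c E
  hdis : ∀ v ∈ rverts M, v ∉ rverts E
  hm : ∀ P, IsRainbowMatching G c P → P.card ≠ m + 1
  hmax : ∀ P F, IsRainbowMatching G c P → P.card = m → IsRainbowMatching G c F →
    (∀ v ∈ rverts P, v ∉ rverts F) → F.card ≤ E.card

variable {m : ℕ} {M E : Finset (Sym2 V)}

lemma RGlob.col (h : RGlob G c m M E) : ∀ e ∈ E, ∃ f ∈ M, c f = c e := by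
  intro e he
  by_contra hno
  push Not at hno
  induction e with | _ x y =>
  have := h.hM.ins (h.hE.1 _ he) (fun hh => h.hdis x hh (mem_rverts.2 ⟨_, he, by simp⟩))
    (fun hh => h.hdis y hh (mem_rverts.2 ⟨_, he, by simp⟩)) hno
  exact h.hm _ this.1 (by rw [this.2, h.hMc])

lemma IsRainbowMatching.card_image {P : Finset (Sym2 V)} (h : IsRainbowMatching G c P) :
    (P.image c).card = P.card :=
  Finset.card_image_of_injOn (fun e he f hf hef => h.2.2 e he f hf hef)

/-- selections -/
lemma RGlob.sel (h : RGlob G c m M E) (x y : V)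
    (h1 : ∀ e ∈ M, ∀ e' ∈ E, x ∈ e → y ∈ e' → c e ≠ c e')
    (h2 : ∀ e ∈ M, ∀ e' ∈ E, y ∈ e → x ∈ e' → c e ≠ c e') :
    ∃ S : Finset (Sym2 V), IsRainbowMatching G c S ∧ S.image c = E.image c ∧
      S.card = E.card ∧ S ⊆ (M.filter (fun e => c e ∈ E.image c)) ∪ E ∧
      x ∉ rverts S ∧ y ∉ rverts S := by
  let p : ℕ → Prop := fun l => ∃ e ∈ M, (x ∈ e ∨ y ∈ e) ∧ c e = l
  set A := M.filter (fun e => c e ∈ E.image c ∧ ¬ p (c e)) with hA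
  set B := E.filter (fun e => p (c e)) with hB
  have hAM : A ⊆ M := Finset.filter_subset _ _
  have hBE : B ⊆ E := Finset.filter_subset _ _
  have hS := (h.hM.sub hAM).union (h.hE.sub hBE)
    (fun v hv hv2 => h.hdis v (rverts_mono hAM hv) (rverts_mono hBE hv2)) (by
      intro e he f hf hef
      rw [hA, Finset.mem_filter] at he
      rw [hB, Finset.mem_filter] at hf
      exact he.2.2 (hef ▸ hf.2))
  have him : (A ∪ B).image c = E.image c := by
    ext l
    simp only [Finset.mem_image, Finset.mem_union]
    constructor
    · rintro ⟨e, he | he, rfl⟩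
      · rw [hA, Finset.mem_filter] at he
        exact Finset.mem_image.1 he.2.1
      · exact ⟨e, hBE he, rfl⟩
    · rintro ⟨e, he, rfl⟩
      by_cases hp : p (c e)
      · exact ⟨e, Or.inr (Finset.mem_filter.2 ⟨he, hp⟩), rfl⟩
      · obtain ⟨f, hf, hfe⟩ := h.col e he
        refine ⟨f, Or.inl (Finset.mem_filter.2 ⟨hf, ?_, ?_⟩), hfe⟩
        · rw [hfe]; exact Finset.mem_image_of_mem c he
        · rw [hfe]; exact hp
  have hav : ∀ z, (z = x ∨ z = y) → z ∉ rverts (A ∪ B) := by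
    intro z hz hzS
    obtain ⟨e, he, hze⟩ := mem_rverts.1 hzS
    rcases Finset.mem_union.1 he with he | he
    · rw [hA, Finset.mem_filter] at he
      exact he.2.2 ⟨e, he.1, by rcases hz with rfl | rfl <;> simp [hze], rfl⟩
    · rw [hB, Finset.mem_filter] at he
      obtain ⟨heE, f, hf, hxy, hfe⟩ := he
      have hzz : ∀ z, z ∈ f → z ∉ e := fun z hzf hze =>
        h.hdis z (mem_rverts.2 ⟨f, hf, hzf⟩) (mem_rverts.2 ⟨e, heE, hze⟩)
      rcases hz with rfl | rfl <;> rcases hxy with r | r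
      · exact hzz _ r hze
      · exact h2 f hf e heE r hze hfe
      · exact h1 f hf e heE r hze hfe
      · exact hzz _ r hze
  refine ⟨A ∪ B, hS.1, him, ?_, ?_, hav x (Or.inl rfl), hav y (Or.inr rfl)⟩
  · rw [← hS.1.card_image, him, h.hE.card_image]
  · intro e he
    rcases Finset.mem_union.1 he with he | he
    · rw [hA, Finset.mem_filter] at he
      exact Finset.mem_union_left _ (Finset.mem_filter.2 ⟨he.1, he.2.1⟩)
    · exact Finset.mem_union_right _ (hBE he)

lemma RGlob.filter_card (h : RGlob G c m M E) :
    (M.filter (fun e => c e ∈ E.image c)).card = E.card := by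
  rw [← (h.hM.sub (Finset.filter_subset _ _)).card_image, ← h.hE.card_image]
  congr 1
  ext l
  simp only [Finset.mem_image, Finset.mem_filter]
  constructor
  · rintro ⟨e, ⟨_, he⟩, rfl⟩
    exact he
  · rintro ⟨e, he, rfl⟩
    obtain ⟨f, hf, hfe⟩ := h.col e he
    exact ⟨f, ⟨hf, ⟨e, he, hfe.symm⟩⟩, hfe⟩

theorem RGlob.case_pos (h : RGlob G c m M E) (hlt : E.card < M.card)
    (hdeg : ∀ v : V, m + 1 ≤ colourDegree G c v) (hn : 4 * m ≤ Fintype.card V) : False := by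
  set D := E.image c with hD
  have hDc : D.card = E.card := h.hE.card_image
  set MD := M.filter (fun e => c e ∈ D) with hMD
  have hMDc : MD.card = E.card := h.filter_card
  have hMDM : MD ⊆ M := Finset.filter_subset _ _
  set M0 := M.filter (fun e => c e ∉ D) with hM0
  have hM0M : M0 ⊆ M := Finset.filter_subset _ _
  have hM0c : MD.card + M0.card = M.card := Finset.card_filter_add_card_filter_not _
  set K := rverts MD ∪ rverts E with hK
  set X := Finset.univ \ K with hX
  have hmX : ∀ v, v ∈ X ↔ v ∉ K := by intro v; simp [hX]
  let H : SimpleGraph V :=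
    { Adj := fun x y => G.Adj x y ∧ c s(x, y) ∉ D ∧ x ∈ X ∧ y ∈ X
      symm := ⟨fun x y hxy => ⟨hxy.1.symm, by rw [Sym2.eq_swap]; exact hxy.2.1, hxy.2.2.2,
        hxy.2.2.1⟩⟩
      loopless := ⟨fun x hx => G.loopless.irrefl x hx.1⟩ }
  have hHadj : ∀ x y, H.Adj x y ↔ G.Adj x y ∧ c s(x, y) ∉ D ∧ x ∈ X ∧ y ∈ X :=
    fun x y => Iff.rfl
  have hHG : ∀ P, IsRainbowMatching H c P → IsRainbowMatching G c P ∧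
      (∀ e ∈ P, c e ∉ D) ∧ ∀ v ∈ rverts P, v ∈ X := by
    intro P hP
    refine ⟨⟨?_, hP.2.1, hP.2.2⟩, ?_, ?_⟩
    · intro e he
      have := hP.1 e he
      induction e with | _ x y =>
      exact this.1
    · intro e he
      have := hP.1 e he
      induction e with | _ x y =>
      exact this.2.1
    · intro v hv
      obtain ⟨e, he, hve⟩ := mem_rverts.1 hv
      obtain ⟨w, rfl, hw⟩ := adj_of_mem_edge hP he hve
      exact hw.2.2.1
  have hM0H : IsRainbowMatching H c M0 := by
    refine ⟨?_, (h.hM.sub hM0M).2.1, (h.hM.sub hM0M).2.2⟩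
    intro e he
    have heM := hM0M he
    have hev : ∀ v ∈ e, v ∈ X := by
      intro v hv
      rw [hmX, hK, Finset.mem_union]
      rintro (r | r)
      · obtain ⟨f, hf, hvf⟩ := mem_rverts.1 r
        have : e = f := h.hM.uniq heM (hMDM hf) hv hvf
        subst this
        exact (Finset.mem_filter.1 he).2 (Finset.mem_filter.1 hf).2
      · exact h.hdis v (mem_rverts.2 ⟨e, heM, hv⟩) r
    have h1 := h.hM.1 e heM
    have h2 := (Finset.mem_filter.1 he).2
    induction e with | _ x y =>
    exact ⟨h1, h2, hev x (by simp), hev y (by simp)⟩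
  have hXc : 4 * M0.card ≤ X.card := by
    have k1 : X.card = Fintype.card V - K.card := by
      rw [hX, Finset.card_sdiff_of_subset (Finset.subset_univ _), Finset.card_univ]
    have k2 : K.card ≤ (rverts MD).card + (rverts E).card := Finset.card_union_le _ _
    have k3 := rverts_card_le MD
    have k4 := rverts_card_le E
    have k5 := h.hMc
    omega
  have hSX : ∀ S : Finset (Sym2 V), S ⊆ MD ∪ E → ∀ v ∈ rverts S, v ∈ K := by
    intro S hS v hv
    have := rverts_mono hS hv
    rwa [rverts_union] at this
  have hMc := h.hMc
  refine rainbow_core (H := H) (c := c) (X := X) (ν := M0.card) M0 hM0H rfl (by omega) hXc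
    (fun x y hxy => hxy.2.2.1) ?_ ?_ ?_
  · intro P hP hPc
    obtain ⟨p1, p2, p3⟩ := hHG P hP
    have := p1.union (h.hM.sub hMDM) (by
      intro v hv hv2
      exact (hmX v).1 (p3 v hv) (hSX MD Finset.subset_union_left v hv2)) (by
      intro e he f hf hef
      exact p2 e he (hef ▸ (Finset.mem_filter.1 hf).2))
    exact h.hm _ this.1 (by rw [this.2]; omega)
  · intro P hP hPc x y hxy hx hy
    obtain ⟨p1, p2, p3⟩ := hHG P hP
    have hun := p1.union (h.hM.sub hMDM) (by
      intro v hv hv2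
      exact (hmX v).1 (p3 v hv) (hSX MD Finset.subset_union_left v hv2)) (by
      intro e he f hf hef
      exact p2 e he (hef ▸ (Finset.mem_filter.1 hf).2))
    rw [hHadj] at hxy
    have hxE : x ∉ rverts E := fun hh =>
      (hmX x).1 hxy.2.2.1 (hSX E Finset.subset_union_right x hh)
    have hyE : y ∉ rverts E := fun hh =>
      (hmX y).1 hxy.2.2.2 (hSX E Finset.subset_union_right y hh)
    have hxM : x ∉ rverts MD := fun hh =>
      (hmX x).1 hxy.2.2.1 (hSX MD Finset.subset_union_left x hh)
    have hyM : y ∉ rverts MD := fun hh =>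
      (hmX y).1 hxy.2.2.2 (hSX MD Finset.subset_union_left y hh)
    have hE' := h.hE.ins hxy.1 hxE hyE (by
      intro e he hef
      exact hxy.2.1 (hef ▸ Finset.mem_image_of_mem c he))
    have := h.hmax _ _ hun.1 (by rw [hun.2]; omega) hE'.1 (by
      intro v hv hv2
      rw [rverts_union, Finset.mem_union] at hv
      rw [rverts_insert] at hv2
      rcases hv2 with rfl | rfl | hv2
      · rcases hv with hv | hv
        exacts [hx hv, hxM hv]
      · rcases hv with hv | hv
        exacts [hy hv, hyM hv]
      · rcases hv with hv | hv
        · exact (hmX v).1 (p3 v hv) (hSX E Finset.subset_union_right v hv2)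
        · exact h.hdis v (rverts_mono hMDM hv) hv2)
    omega
  · intro x hx
    obtain ⟨C, hC, hC2⟩ := colours_finset (G := G) (c := c) x
    refine ⟨C \ D, ?_, ?_⟩
    · have k1 := Finset.le_card_sdiff D C
      have k2 := hdeg x
      omega
    · intro f hf
      rw [Finset.mem_sdiff] at hf
      obtain ⟨y, hy, rfl⟩ := hC2 f hf.1
      by_cases hyX : y ∈ X
      · exact Or.inl ⟨y, ⟨hy, hf.2, hx, hyX⟩, rfl⟩
      · right
        intro P hP hPc hxP
        by_contra hno
        push Not at hno
        obtain ⟨p1, p2, p3⟩ := hHG P hP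
        have hyy : ∀ e ∈ M, ∀ e' ∈ E, y ∈ e → y ∈ e' → c e ≠ c e' := by
          intro e he e' he' h1 h2
          exact absurd (mem_rverts.2 ⟨e', he', h2⟩) (h.hdis y (mem_rverts.2 ⟨e, he, h1⟩))
        obtain ⟨S, s1, s2, s3, s4, s5, -⟩ := h.sel y y hyy hyy
        have hSK := hSX S s4
        have hSD : ∀ e ∈ S, c e ∈ D := by
          intro e he
          rw [hD, ← s2]
          exact Finset.mem_image_of_mem c he
        have hun := p1.union s1 (by
          intro v hv hv2
          exact (hmX v).1 (p3 v hv) (hSK v hv2)) (by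
          intro e he f hf hef
          exact p2 e he (hef ▸ hSD f hf))
        have hin := hun.1.ins hy (by
          rw [rverts_union, Finset.mem_union]
          rintro (r | r)
          · exact hxP r
          · exact (hmX x).1 hx (hSK x r)) (by
          rw [rverts_union, Finset.mem_union]
          rintro (r | r)
          · exact hyX (p3 y r)
          · exact s5 r) (by
          intro e he hef
          rcases Finset.mem_union.1 he with he | he
          · exact hno e he hef
          · exact hf.2 (hef ▸ hSD e he))
        exact h.hm _ hin.1 (by rw [hin.2, hun.2]; omega)

theorem RGlob.case_zero (h : RGlob G c m M E) (heq : E.card = M.card)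
    (hdeg : ∀ v : V, m + 1 ≤ colourDegree G c v) (hdeg4 : ∀ v : V, 4 ≤ colourDegree G c v)
    (x : V) : False := by
  have hMc := h.hMc
  set D := E.image c with hD
  have hDc : D.card = E.card := h.hE.card_image
  -- every edge with a new colour joins the two edges of the same colour
  have hA : ∀ x y, G.Adj x y → c s(x, y) ∉ D →
      ∃ e ∈ M, ∃ e' ∈ E, c e = c e' ∧ ((x ∈ e ∧ y ∈ e') ∨ (y ∈ e ∧ x ∈ e')) := by
    intro x y hxy hc
    by_contra hno
    push Not at hno
    obtain ⟨S, s1, s2, s3, s4, s5, s6⟩ := h.sel x y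
      (fun e he e' he' h1 h2 h3 => (hno e he e' he' h3).1 h1 h2)
      (fun e he e' he' h1 h2 h3 => (hno e he e' he' h3).2 h1 h2)
    have := s1.ins hxy s5 s6 (by
      intro e he hef
      apply hc
      rw [← hef, hD, ← s2]
      exact Finset.mem_image_of_mem c he)
    exact h.hm _ this.1 (by rw [this.2]; omega)
  have hnew : ∀ x, ∃ y, G.Adj x y ∧ c s(x, y) ∉ D := by
    intro x
    obtain ⟨C, hC, hC2⟩ := colours_finset (G := G) (c := c) x
    have : ∃ f ∈ C, f ∉ D := by
      by_contra hno
      push Not at hno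
      have k1 := Finset.card_le_card (show C ⊆ D from hno)
      have k2 := hdeg x
      omega
    obtain ⟨f, hf, hfD⟩ := this
    obtain ⟨y, hy, rfl⟩ := hC2 f hf
    exact ⟨y, hy, hfD⟩
  -- every vertex lies in some pair
  have hpair : ∀ x, ∃ e ∈ M, ∃ e' ∈ E, c e = c e' ∧ (x ∈ e ∨ x ∈ e') := by
    intro x
    obtain ⟨y, hy, hc⟩ := hnew x
    obtain ⟨e, he, e', he', hee, r⟩ := hA x y hy hc
    exact ⟨e, he, e', he', hee, by tauto⟩
  -- a new edge in each pair avoiding a vertex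
  have hav : ∀ e ∈ M, ∀ e' ∈ E, c e = c e' → ∀ q, ∃ z z', G.Adj z z' ∧ c s(z, z') ∉ D ∧
      z ∈ e ∧ z' ∈ e' ∧ z ≠ q ∧ z' ≠ q := by
    intro e he e' he' hee q
    have hdd : ∀ z, z ∈ e → z ∉ e' := fun z h1 h2 =>
      h.hdis z (mem_rverts.2 ⟨e, he, h1⟩) (mem_rverts.2 ⟨e', he', h2⟩)
    by_cases hq : q ∈ e'
    · obtain ⟨z', rfl, hz'⟩ := adj_of_mem_edge h.hE he' hq
      obtain ⟨z, hz, hc⟩ := hnew z'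
      obtain ⟨g, hg, g', hg', hgg, r⟩ := hA z' z hz hc
      rcases r with ⟨r1, r2⟩ | ⟨r1, r2⟩
      · exact absurd (mem_rverts.2 ⟨_, he', by simp⟩) (h.hdis z' (mem_rverts.2 ⟨g, hg, r1⟩))
      · have e1 : g' = s(q, z') := h.hE.uniq hg' he' r2 (by simp)
        have e2 : g = e := h.hM.2.2 g hg e he (by rw [hgg, hee, e1])
        subst e2
        refine ⟨z, z', hz.symm, by rwa [Sym2.eq_swap], r1, by simp, ?_, hz'.ne.symm⟩
        rintro rfl
        exact hdd z r1 hq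
    · have hzz : ∃ z ∈ e, z ≠ q := by
        have h1 := h.hM.1 e he
        induction e with | _ a b =>
        by_cases ha : a = q
        · refine ⟨b, by simp, ?_⟩
          rintro rfl
          exact G.loopless.irrefl b (ha ▸ h1)
        · exact ⟨a, by simp, ha⟩
      obtain ⟨z, hze, hzq⟩ := hzz
      obtain ⟨z', hz, hc⟩ := hnew z
      obtain ⟨g, hg, g', hg', hgg, r⟩ := hA z z' hz hc
      rcases r with ⟨r1, r2⟩ | ⟨r1, r2⟩
      · have e1 : g = e := h.hM.uniq hg he r1 hze
        have e2 : g' = e' := h.hE.2.2 g' hg' e' he' (by rw [← hgg, ← hee, e1])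
        subst e2
        refine ⟨z, z', hz, hc, hze, r2, hzq, ?_⟩
        rintro rfl
        exact hq r2
      · exact absurd (mem_rverts.2 ⟨_, hg', r2⟩) (h.hdis z (mem_rverts.2 ⟨e, he, hze⟩))
  obtain ⟨ex, hex, ex', hex', hexx, hxin⟩ := hpair x
  -- a neighbour outside the pair of `x`
  have hy : ∃ y, G.Adj x y ∧ y ∉ ex ∧ y ∉ ex' := by
    by_contra hno
    push Not at hno
    obtain ⟨C, hC, hC2⟩ := colours_finset (G := G) (c := c) x
    have : Nonempty V := ⟨x⟩
    choose! y hy1 hy2 using hC2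
    have k1 : C.card ≤ ((rverts {ex, ex'}).erase x).card := by
      refine Finset.card_le_card_of_injOn y ?_ ?_
      · intro f hf
        refine Finset.mem_erase.2 ⟨(hy1 f hf).ne.symm, mem_rverts.2 ?_⟩
        by_cases hh : y f ∈ ex
        · exact ⟨ex, by simp, hh⟩
        · exact ⟨ex', by simp, hno _ (hy1 f hf) hh⟩
      · intro f hf g hg hfg
        rw [← hy2 f hf, ← hy2 g hg, hfg]
    have k2 : x ∈ rverts {ex, ex'} := by
      rcases hxin with r | r
      · exact mem_rverts.2 ⟨ex, by simp, r⟩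
      · exact mem_rverts.2 ⟨ex', by simp, r⟩
    have k3 := Finset.card_erase_add_one k2
    have k4 := rverts_card_le ({ex, ex'} : Finset (Sym2 V))
    have k5 := Finset.card_le_two (a := ex) (b := ex')
    have k6 := hdeg4 x
    omega
  obtain ⟨y, hxy, hyex, hyex'⟩ := hy
  -- `x` and `y` are not in a common pair
  have hsep : ∀ e ∈ M, ∀ e' ∈ E, c e = c e' → (x ∈ e ∨ x ∈ e') → (y ∈ e ∨ y ∈ e') → False := by
    intro e he e' he' hee hx hy
    have : e = ex ∧ e' = ex' := by
      have hcross : ∀ a ∈ M, ∀ b ∈ E, x ∈ a → x ∈ b → False := fun a ha b hb h1 h2 =>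
        h.hdis x (mem_rverts.2 ⟨a, ha, h1⟩) (mem_rverts.2 ⟨b, hb, h2⟩)
      rcases hx with hx | hx <;> rcases hxin with r | r
      · have e1 := h.hM.uniq he hex hx r
        exact ⟨e1, h.hE.2.2 _ he' _ hex' (by rw [← hee, ← hexx, e1])⟩
      · exact (hcross _ he _ hex' hx r).elim
      · exact (hcross _ hex _ he' r hx).elim
      · have e1 := h.hE.uniq he' hex' hx r
        exact ⟨h.hM.2.2 _ he _ hex (by rw [hee, hexx, e1]), e1⟩
    obtain ⟨rfl, rfl⟩ := this
    tauto
  by_cases hcD : c s(x, y) ∈ D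
  swap
  · obtain ⟨e, he, e', he', hee, r⟩ := hA x y hxy hcD
    exact hsep e he e' he' hee (by tauto) (by tauto)
  obtain ⟨e', he', hce'⟩ := Finset.mem_image.1 hcD
  obtain ⟨e, he, hee⟩ := h.col e' he'
  -- new edge in the pair of colour `c s(x,y)` avoiding both `x` and `y`
  have hzz : ∃ z z', G.Adj z z' ∧ c s(z, z') ∉ D ∧ z ∈ e ∧ z' ∈ e' ∧ z ≠ x ∧ z' ≠ x ∧
      z ≠ y ∧ z' ≠ y := by
    by_cases hx : x ∈ e ∨ x ∈ e'
    · obtain ⟨z, z', a1, a2, a3, a4, a5, a6⟩ := hav e he e' he' hee x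
      refine ⟨z, z', a1, a2, a3, a4, a5, a6, ?_, ?_⟩
      · rintro rfl; exact hsep e he e' he' hee hx (Or.inl a3)
      · rintro rfl; exact hsep e he e' he' hee hx (Or.inr a4)
    · obtain ⟨z, z', a1, a2, a3, a4, a5, a6⟩ := hav e he e' he' hee y
      refine ⟨z, z', a1, a2, a3, a4, ?_, ?_, a5, a6⟩
      · rintro rfl; exact hx (Or.inl a3)
      · rintro rfl; exact hx (Or.inr a4)
  obtain ⟨z, z', hz, hzc, hze, hze', zx, zx', zy, zy'⟩ := hzz
  obtain ⟨S, s1, s2, s3, s4, s5, s6⟩ := h.sel x y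
    (fun g hg g' hg' h1 h2 h3 => hsep g hg g' hg' h3 (Or.inl h1) (Or.inr h2))
    (fun g hg g' hg' h1 h2 h3 => hsep g hg g' hg' h3 (Or.inr h2) (Or.inl h1))
  have : c s(x, y) ∈ S.image c := by rw [s2]; exact hcD
  obtain ⟨g, hg, hgc⟩ := Finset.mem_image.1 this
  have hSM : ∀ a ∈ S.erase g, ∀ w, w ∈ a → w ∉ e ∧ w ∉ e' := by
    intro a ha w hw
    rw [Finset.mem_erase] at ha
    have hca : c a ≠ c e' := by
      intro hh
      exact ha.1 (s1.2.2 a ha.2 g hg (by rw [hh, hce', hgc]))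
    rcases Finset.mem_union.1 (s4 ha.2) with r | r
    · have haM := (Finset.mem_filter.1 r).1
      refine ⟨fun hh => hca ?_, fun hh => ?_⟩
      · rw [h.hM.uniq haM he hw hh, hee]
      · exact h.hdis w (mem_rverts.2 ⟨a, haM, hw⟩) (mem_rverts.2 ⟨e', he', hh⟩)
    · refine ⟨fun hh => ?_, fun hh => hca ?_⟩
      · exact h.hdis w (mem_rverts.2 ⟨e, he, hh⟩) (mem_rverts.2 ⟨a, r, hw⟩)
      · rw [h.hE.uniq r he' hw hh]
  have hsub := Finset.erase_subset g S
  have t1 := (s1.sub hsub).ins hxy (fun hh => s5 (rverts_mono hsub hh))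
    (fun hh => s6 (rverts_mono hsub hh)) (by
      intro a ha hac
      rw [Finset.mem_erase] at ha
      exact ha.1 (s1.2.2 a ha.2 g hg (hac.trans hgc.symm)))
  have t2 := t1.1.ins hz (by
      rw [rverts_insert]
      rintro (r | r | r)
      · exact zx r
      · exact zy r
      · obtain ⟨a, ha, hza⟩ := mem_rverts.1 r
        exact (hSM a ha z hza).1 hze) (by
      rw [rverts_insert]
      rintro (r | r | r)
      · exact zx' r
      · exact zy' r
      · obtain ⟨a, ha, hza⟩ := mem_rverts.1 r
        exact (hSM a ha z' hza).2 hze') (by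
      intro a ha hac
      apply hzc
      rw [← hac]
      rcases Finset.mem_insert.1 ha with rfl | ha
      · exact hcD
      · rw [hD, ← s2]
        exact Finset.mem_image_of_mem c (hsub ha))
  have k1 := Finset.card_erase_add_one hg
  exact h.hm _ t2.1 (by rw [t2.2, t1.2]; omega)

theorem rainbow_main (G : SimpleGraph V) (c : Sym2 V → ℕ) (k : ℕ) (hk : 4 ≤ k)
    (hdeg : ∀ v : V, k ≤ colourDegree G c v)
    (hn : 4 * k - 4 ≤ Fintype.card V) :
    ∃ M : Finset (Sym2 V), IsRainbowMatching G c M ∧ M.card = k := by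
  by_contra hno
  push Not at hno
  have hlt : ∀ P, IsRainbowMatching G c P → P.card < k := by
    intro P hP
    by_contra hge
    push Not at hge
    obtain ⟨N, hN, hNc⟩ := Finset.exists_subset_card_eq hge
    exact hno N (hP.sub hN) hNc
  have hempty : IsRainbowMatching G c ∅ := ⟨by simp, by simp, by simp⟩
  obtain ⟨M1, hM1, hM1m⟩ := Finset.exists_max_image
    (Finset.univ.filter (fun P : Finset (Sym2 V) => IsRainbowMatching G c P))
    Finset.card ⟨∅, by simp [hempty]⟩
  simp only [Finset.mem_filter, Finset.mem_univ, true_and] at hM1 hM1m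
  obtain ⟨ME, hME, hMEm⟩ := Finset.exists_max_image
    (Finset.univ.filter (fun P : Finset (Sym2 V) × Finset (Sym2 V) =>
      IsRainbowMatching G c P.1 ∧ P.1.card = M1.card ∧ IsRainbowMatching G c P.2 ∧
      ∀ v ∈ rverts P.1, v ∉ rverts P.2))
    (fun P => P.2.card) ⟨(M1, ∅), by simp [hempty, hM1, mem_rverts]⟩
  simp only [Finset.mem_filter, Finset.mem_univ, true_and] at hME hMEm
  have hg : RGlob G c M1.card ME.1 ME.2 := by
    refine ⟨hME.1, hME.2.1, hME.2.2.1, hME.2.2.2, ?_, ?_⟩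
    · intro P hP hPc
      have := hM1m P hP
      omega
    · intro P F a1 a2 a3 a4
      exact hMEm (P, F) ⟨a1, a2, a3, a4⟩
  have hk1 := hlt M1 hM1
  have hle : ME.2.card ≤ ME.1.card := by
    have := hM1m ME.2 hME.2.2.1
    have := hME.2.1
    omega
  rcases hle.lt_or_eq with hl | hl
  · exact hg.case_pos hl (fun v => le_trans (by omega) (hdeg v)) (by omega)
  · have hpos : 0 < Fintype.card V := by omega
    obtain ⟨x⟩ := Fintype.card_pos_iff.1 hpos
    exact hg.case_zero hl (fun v => le_trans (by omega) (hdeg v))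
      (fun v => le_trans (by omega) (hdeg v)) x

end


/-- If `G` is an edge-coloured graph on `n` vertices with minimum colour degree at least
`k ≥ 4` and `n ≥ 4k - 4`, then `G` contains a rainbow matching of size `k`. -/
theorem rainbow_matching_of_min_colour_degree {V : Type*} [Fintype V]
    (G : SimpleGraph V) (c : Sym2 V → ℕ) (k : ℕ) (hk : 4 ≤ k)
    (hdeg : ∀ v : V, k ≤ colourDegree G c v)
    (hn : 4 * k - 4 ≤ Fintype.card V) :
    ∃ M : Finset (Sym2 V), IsRainbowMatching G c M ∧ M.card = k := by
  exact rainbow_main G c k hk hdeg hn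
end

section
/- Let k ≤ 3 be a positive integer and let G be a finite simple graph on n vertices whose edges are coloured (not necessarily properly) by a colouring c. If every vertex of G has colour degree at least k and n ≥ 4k − 3, then G contains a rainbow matching of size k. -/
/-!
Proof by a verified refutation: a `RPat` is a small coloured configuration together with a hint
for showing that it cannot occur in a counterexample.
-/

structure RPat where
  m : ℕ
  q : ℕ
  E : List (ℕ × ℕ × ℕ)
  v : ℕ
  S : List ℕ
  hints : List (ℕ × List ℕ × List ℕ)

namespace RPat

/-- Two coloured edges are vertex-disjoint and have different colours. -/
def compat (e f : ℕ × ℕ × ℕ) : Bool :=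
  !(Nat.beq e.1 f.1) && !(Nat.beq e.1 f.2.1) && !(Nat.beq e.2.1 f.1) &&
    !(Nat.beq e.2.1 f.2.1) && !(Nat.beq e.2.2 f.2.2)

def hasRM : ℕ → List (ℕ × ℕ × ℕ) → Bool
  | 0, _ => true
  | k + 1, E => E.any fun e => hasRM k (E.filter (compat e))

def isEdge (E : List (ℕ × ℕ × ℕ)) (a b c : ℕ) : Bool :=
  E.any fun f => Nat.beq f.2.2 c &&
    ((Nat.beq f.1 a && Nat.beq f.2.1 b) || (Nat.beq f.1 b && Nat.beq f.2.1 a))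

def memb (l : List ℕ) (a : ℕ) : Bool := l.any (Nat.beq a)

def nodupB : List ℕ → Bool
  | [] => true
  | a :: l => !(memb l a) && nodupB l

/-- The pattern `P` embeds via the maps `vm`, `cm`. -/
def embOK (P : RPat) (vm cm : List ℕ) (m q : ℕ) (E : List (ℕ × ℕ × ℕ)) : Bool :=
  Nat.beq vm.length P.m && Nat.beq cm.length P.q &&
  P.E.all (fun e => isEdge E (vm.getD e.1 0) (vm.getD e.2.1 0) (cm.getD e.2.2 0)) &&
  vm.all (fun x => Nat.blt x m) && cm.all (fun x => Nat.blt x q) &&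
  nodupB vm && nodupB cm

def branchOK (K : ℕ) (P : RPat) (ps : List RPat) (m' u c : ℕ) : Bool :=
  Nat.beq u P.v || memb P.S c ||
  P.E.any (fun f => !(Nat.beq f.2.2 c) &&
    ((Nat.beq f.1 u && Nat.beq f.2.1 P.v) || (Nat.beq f.1 P.v && Nat.beq f.2.1 u))) ||
  hasRM (K - 1) (P.E.filter (compat (u, P.v, c))) ||
  P.hints.any (fun h => match ps[h.1]? with
    | none => false
    | some Q => embOK Q h.2.1 h.2.2 (max m' (u + 1)) (max P.q (c + 1)) ((u, P.v, c) :: P.E))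

def check (K : ℕ) (P : RPat) (ps : List RPat) : Bool :=
  P.E.all (fun e => Nat.blt e.1 P.m && Nat.blt e.2.1 P.m && Nat.blt e.2.2 P.q) &&
  Nat.ble P.v P.m && (Nat.blt P.v P.m || Nat.blt P.m (4 * K - 3)) &&
  Nat.blt P.S.length K && P.S.all (fun c => Nat.blt c P.q) &&
  (List.range (max P.m (P.v + 1) + 1)).all fun u =>
    (List.range (P.q + 1)).all fun c => branchOK K P ps (max P.m (P.v + 1)) u c

def checkAll (K : ℕ) : List RPat → Bool
  | [] => true
  | P :: ps => check K P ps && checkAll K ps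

def cert1 : List RPat := [
  ⟨0, 0, [], 0, [], []⟩]

def cert2 : List RPat := [
  ⟨0, 0, [], 0, [], [(0, [1, 0], [0])]⟩,
  ⟨2, 1, [(0, 1, 0)], 1, [0], [(0, [1, 2, 0], [1, 0])]⟩,
  ⟨3, 2, [(0, 1, 0), (0, 2, 1)], 3, [0], [(1, [0, 1, 3, 2], [0, 1]), (0, [0, 3, 1, 2], [2, 0, 1]), (2, [1, 3, 0, 2], [1])]⟩,
  ⟨4, 3, [(0, 1, 0), (0, 2, 1), (0, 3, 2)], 3, [2], [(1, [1, 3, 0, 2], [1]), (1, [2, 3, 0, 1], [0])]⟩,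
  ⟨4, 2, [(0, 1, 0), (0, 2, 1), (0, 3, 1)], 3, [1], [(0, [2, 3, 0, 1], [0])]⟩,
  ⟨4, 1, [(0, 1, 0), (2, 3, 0)], 4, [0], []⟩]

def cert3 : List RPat := [
  ⟨0, 0, [], 0, [], [(0, [1, 0], [0])]⟩,
  ⟨2, 1, [(0, 1, 0)], 1, [0], [(0, [1, 2, 0], [1, 0])]⟩,
  ⟨3, 2, [(0, 1, 0), (0, 2, 1)], 0, [0, 1], [(0, [0, 1, 2, 3], [0, 1, 2])]⟩,
  ⟨4, 3, [(0, 1, 0), (0, 2, 1), (0, 3, 2)], 1, [0, 1], [(0, [0, 1, 2, 3], [0, 1, 2]), (9, [0, 1, 3, 2], [0, 2, 1, 3]), (11, [0, 2, 1, 3], [1, 0, 2]), (9, [0, 1, 2, 3], [0, 1, 2, 3]), (14, [0, 1, 2, 3, 4], [0, 1, 2]), (22, [0, 2, 3, 1, 4], [1, 2, 0, 3])]⟩,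
  ⟨4, 3, [(0, 1, 0), (0, 2, 1), (1, 2, 2), (0, 3, 2)], 1, [0, 2], [(0, [3, 1, 0, 2], [1, 2]), (8, [0, 1, 2, 3], [0, 1, 2, 3]), (16, [0, 3, 2, 1, 4], [2, 1]), (21, [0, 2, 3, 1, 4], [1, 2, 0, 3])]⟩,
  ⟨4, 2, [(0, 1, 0), (0, 2, 1), (3, 1, 1), (3, 2, 0)], 4, [0], [(15, [0, 4, 1, 3, 2], [1, 0]), (12, [0, 1, 4, 2, 3], [0, 2, 1]), (15, [1, 4, 0, 2, 3], [1, 0]), (12, [1, 0, 4, 3, 2], [0, 2, 1]), (15, [2, 4, 3, 1, 0], [1, 0]), (12, [2, 0, 4, 3, 1], [1, 2, 0]), (15, [3, 4, 2, 0, 1], [1, 0]), (12, [3, 1, 4, 2, 0], [1, 2, 0]), (3, [0, 1, 2, 3, 5, 4], [0, 1]), (0, [0, 1, 2, 3, 5, 4], [0, 1, 2])]⟩,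
  ⟨6, 3, [(0, 1, 0), (0, 2, 1), (3, 1, 1), (3, 2, 0), (4, 5, 2)], 4, [2], [(43, [4, 0, 5, 2, 3, 1], [0, 2, 1]), (43, [4, 0, 5, 1, 3, 2], [1, 2, 0]), (43, [4, 0, 5, 1, 3, 2], [3, 2, 0]), (43, [4, 1, 5, 3, 0, 2], [0, 2, 1]), (43, [4, 1, 5, 0, 3, 2], [1, 2, 0]), (43, [4, 1, 5, 0, 3, 2], [3, 2, 0]), (43, [4, 2, 5, 0, 3, 1], [0, 2, 1]), (43, [4, 2, 5, 3, 0, 1], [1, 2, 0]), (43, [4, 2, 5, 0, 3, 1], [3, 2, 1]), (43, [4, 3, 5, 1, 0, 2], [0, 2, 1]), (43, [4, 3, 5, 2, 0, 1], [1, 2, 0]), (43, [4, 3, 5, 1, 0, 2], [3, 2, 1]), (3, [0, 1, 3, 2, 4, 6, 5], [0, 2]), (3, [0, 2, 3, 1, 4, 6, 5], [1, 2]), (0, [0, 1, 3, 2, 4, 5, 6], [0, 2, 3])]⟩,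
  ⟨7, 3, [(0, 1, 0), (2, 3, 0), (4, 5, 1), (4, 6, 2)], 5, [1, 2], [(42, [4, 5, 6, 0, 2, 3], [1, 2, 0]), (42, [4, 5, 6, 1, 2, 3], [1, 2, 0]), (42, [4, 5, 6, 2, 0, 1], [1, 2, 0]), (42, [4, 5, 6, 3, 0, 1], [1, 2, 0]), (2, [0, 1, 2, 3, 6, 5, 4], [0, 2]), (0, [0, 1, 2, 3, 6, 5, 4], [0, 3, 2, 1]), (42, [4, 5, 6, 7, 0, 1], [1, 2, 0])]⟩,
  ⟨7, 4, [(0, 1, 0), (2, 3, 0), (4, 5, 1), (4, 6, 2), (5, 6, 3)], 4, [1, 2], [(41, [5, 4, 6, 0, 2, 3], [1, 3, 0]), (44, [2, 3, 0, 1, 4, 5, 6], [0, 3]), (41, [5, 4, 6, 1, 2, 3], [1, 3, 0]), (44, [2, 3, 1, 0, 4, 5, 6], [0, 3]), (41, [5, 4, 6, 2, 0, 1], [1, 3, 0]), (44, [0, 1, 2, 3, 4, 5, 6], [0, 3]), (41, [5, 4, 6, 3, 0, 1], [1, 3, 0]), (44, [0, 1, 3, 2, 4, 5, 6], [0, 3]),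 (41, [5, 4, 6, 7, 0, 1], [1, 3, 0]), (3, [7, 4, 5, 6, 0, 1, 2, 3], [3, 0])]⟩,
  ⟨6, 2, [(0, 1, 0), (0, 2, 1), (3, 1, 1), (3, 2, 0), (4, 5, 1)], 4, [1], [(11, [0, 4, 2, 3, 1], [0, 1]), (40, [4, 0, 5, 1, 3, 2], [2, 1, 0]), (11, [1, 4, 3, 2, 0], [0, 1]), (40, [4, 1, 5, 0, 3, 2], [2, 1, 0]), (11, [2, 4, 0, 1, 3], [0, 1]), (40, [4, 2, 5, 3, 0, 1], [2, 1, 0]), (11, [3, 4, 1, 0, 2], [0, 1]), (40, [4, 3, 5, 2, 0, 1], [2, 1, 0]), (0, [0, 1, 3, 2, 4, 6, 5], [0, 1]), (0, [0, 2, 3, 1, 4, 5, 6], [1, 2])]⟩,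
  ⟨7, 2, [(0, 1, 0), (2, 3, 0), (4, 5, 0), (4, 6, 1)], 6, [1, 0], [(39, [6, 0, 4, 1, 2, 3], [2, 1, 0]), (39, [6, 1, 4, 0, 2, 3], [2, 1, 0]), (39, [6, 2, 4, 3, 0, 1], [2, 1, 0]), (39, [6, 3, 4, 2, 0, 1], [2, 1, 0]), (0, [0, 1, 2, 3, 4, 5, 6], [0, 1, 2]), (39, [6, 4, 7, 5, 0, 1], [1, 2, 0])]⟩,
  ⟨7, 3, [(0, 1, 0), (2, 3, 0), (4, 5, 0), (4, 6, 1), (5, 6, 2)], 4, [1, 0], [(41, [2, 3, 0, 1, 4, 5, 6], [0, 2]), (41, [2, 3, 1, 0, 4, 5, 6], [0, 2]), (41, [0, 1, 2, 3, 4, 5, 6], [0, 2]), (41, [0, 1, 3, 2, 4, 5, 6], [0, 2]), (0, [7, 4, 5, 6, 0, 1, 2, 3], [2, 0])]⟩,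
  ⟨8, 2, [(0, 1, 0), (2, 3, 0), (4, 5, 1), (6, 7, 1)], 8, [1, 0], []⟩,
  ⟨4, 4, [(0, 1, 0), (0, 2, 1), (0, 3, 2), (1, 3, 3)], 4, [0, 1], [(12, [0, 4, 2, 1, 3], [2, 1, 0, 3]), (4, [0, 1, 2, 4, 3], [0, 1, 3]), (12, [0, 4, 2, 1, 3], [4, 1, 0, 3]), (12, [1, 4, 3, 0, 2], [2, 3, 0, 1]), (12, [0, 2, 3, 1, 4], [1, 2, 0, 3]), (12, [1, 4, 3, 0, 2], [4, 3, 0, 1]), (4, [0, 2, 1, 3, 4], [1, 0, 2]), (12, [0, 1, 3, 2, 4], [0, 2, 1, 3]), (12, [0, 1, 3, 2, 4], [0, 2, 1, 4]), (0, [0, 1, 2, 3, 4], [0, 1, 2, 3]), (12, [0, 1, 2, 3, 4], [0, 1, 2, 3]), (12, [3, 4, 1, 0, 2], [4, 3, 2, 1]), (36, [0, 1, 2, 3, 5, 4], [0, 1, 3])]⟩,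
  ⟨5, 4, [(0, 1, 0), (0, 2, 1), (0, 3, 2), (1, 3, 3), (3, 4, 2)], 2, [1, 3], [(0, [0, 3, 2, 1], [2, 1, 0]), (3, [1, 3, 0, 2, 4], [3, 0, 2]), (11, [1, 2, 0, 3, 4], [4, 0, 3, 2]), (11, [3, 4, 1, 2, 0], [2, 3, 0, 1]), (0, [0, 1, 2, 3], [0, 1, 2]), (11, [3, 2, 4, 1, 0], [4, 2, 3, 0]), (3, [0, 2, 3, 1, 4], [1, 2, 0]), (3, [0, 2, 1, 3, 4], [1, 0, 2]), (11, [0, 1, 3, 2, 4], [0, 2, 1, 4]), (35, [3, 1, 4, 0, 5, 2], [3, 2, 0]), (35, [0, 2, 1, 5, 3, 4], [1, 0, 2])]⟩,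
  ⟨4, 3, [(0, 1, 0), (0, 2, 1), (0, 3, 2), (2, 3, 2)], 4, [0, 1], [(2, [0, 2, 1, 4, 3], [1, 0, 2]), (10, [0, 4, 1, 2, 3], [3, 0, 1, 2]), (2, [0, 1, 2, 3, 4], [0, 1, 2]), (10, [0, 2, 3, 1, 4], [1, 2, 0, 3]), (2, [0, 2, 1, 3, 4], [1, 0, 2]), (10, [2, 4, 3, 0, 1], [3, 2, 1, 0]), (0, [0, 1, 2, 3, 4], [0, 1, 2]), (10, [0, 1, 2, 3, 4], [0, 1, 2, 3]), (34, [0, 2, 1, 3, 5, 4], [1, 0, 2])]⟩,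
  ⟨5, 3, [(0, 1, 0), (0, 2, 1), (0, 3, 2), (2, 3, 2), (3, 4, 2)], 2, [1, 2], [(0, [0, 1, 2, 3, 4], [0, 1, 2]), (22, [1, 2, 0, 3], [3, 0, 1, 2]), (1, [0, 2, 3, 1, 4], [1, 2, 0]), (9, [0, 1, 3, 2, 4], [0, 2, 1, 3]), (1, [0, 2, 3, 1, 5], [1, 2, 0])]⟩,
  ⟨5, 3, [(0, 1, 0), (1, 2, 0), (0, 2, 1), (0, 3, 2), (3, 4, 2)], 5, [0, 2], [(0, [0, 1, 3, 2, 5], [0, 2, 1]), (0, [0, 3, 1, 2, 5], [2, 0, 1]), (8, [0, 1, 2, 3, 5], [0, 1, 2, 3])]⟩,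
  ⟨5, 3, [(0, 1, 0), (0, 2, 1), (0, 3, 2), (1, 4, 2)], 3, [0, 2], [(2, [0, 2, 3, 1, 4], [1, 2]), (7, [1, 3, 4, 0, 2], [3, 2, 0, 1]), (0, [0, 1, 2, 3, 4], [0, 1, 2]), (27, [1, 0, 4, 3, 2], [0, 2, 3, 1]), (2, [0, 2, 3, 4, 1], [1, 2]), (7, [0, 1, 2, 3, 4], [0, 1, 2, 3]), (31, [1, 0, 4, 2, 5, 3], [0, 2, 1])]⟩,
  ⟨5, 3, [(0, 1, 0), (0, 2, 1), (2, 3, 1), (0, 3, 2), (1, 4, 2)], 5, [1, 2], [(0, [0, 1, 5, 2, 3, 4], [0, 1, 2]), (6, [1, 5, 4, 0, 2], [3, 2, 0, 1]), (30, [2, 3, 5, 0, 1, 4], [1, 0, 2]), (30, [2, 3, 5, 0, 1, 4], [1, 3, 2]), (30, [3, 0, 2, 1, 4, 5], [2, 1, 0])]⟩,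
  ⟨6, 3, [(0, 1, 0), (1, 2, 0), (0, 3, 1), (3, 4, 1), (0, 4, 2), (1, 5, 2)], 2, [0, 2], [(29, [1, 2, 5, 0, 3, 4], [0, 2, 1]), (29, [2, 1, 3, 5, 0, 4], [0, 1, 2]), (29, [3, 4, 2, 0, 1, 5], [1, 3, 2]), (29, [1, 2, 5, 4, 0, 3], [0, 2, 1]), (29, [0, 4, 1, 3, 5, 2], [2, 0, 1]), (32, [6, 2, 0, 3, 4, 1, 5], [1, 2])]⟩,
  ⟨5, 2, [(0, 1, 0), (0, 2, 1), (2, 3, 0), (4, 3, 1)], 2, [0, 1], [(0, [3, 4, 2, 0, 1], [1, 0, 2]), (0, [0, 1, 2, 3, 4], [0, 1, 2])]⟩,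
  ⟨5, 3, [(0, 1, 0), (0, 2, 1), (2, 3, 0), (4, 3, 1), (4, 2, 2)], 3, [0, 1], [(0, [0, 3, 1, 2, 4], [2, 0, 1]), (3, [0, 3, 1, 2, 4], [3, 0, 1, 2]), (0, [2, 3, 0, 4, 1], [0, 1, 2]), (3, [2, 0, 4, 3, 1], [1, 2, 0, 3]), (27, [0, 2, 1, 4, 5, 3], [1, 0, 2])]⟩,
  ⟨5, 3, [(0, 1, 0), (0, 2, 1), (1, 3, 1), (0, 3, 2), (1, 4, 2)], 5, [1, 2], [(0, [1, 0, 5, 4, 3, 2], [0, 2, 1]), (2, [0, 5, 2, 1, 4], [3, 1, 0, 2]), (0, [0, 1, 5, 2, 3, 4], [0, 1, 2]), (2, [1, 5, 4, 0, 2], [3, 2, 0, 1]), (26, [2, 0, 5, 3, 1, 4], [1, 0, 2]), (26, [2, 0, 5, 3, 1, 4], [1, 3, 2]), (26, [4, 1, 5, 3, 0, 2], [2, 0, 1]), (26, [4, 1, 5, 3, 0, 2], [2, 3, 1])]⟩,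
  ⟨6, 3, [(0, 1, 0), (1, 2, 0), (0, 3, 1), (1, 4, 1), (0, 4, 2), (1, 5, 2)], 5, [1, 2], [(0, [0, 1, 2, 5, 4, 3], [0, 2, 1]), (1, [1, 2, 4, 5, 0], [0, 1, 2, 3]), (25, [5, 1, 2, 4, 0, 3], [2, 0, 1]), (25, [2, 1, 5, 4, 0, 3], [0, 3, 1]), (25, [0, 3, 4, 5, 1, 2], [1, 2, 0]), (25, [0, 4, 3, 5, 1, 2], [2, 1, 0]), (28, [6, 5, 1, 2, 4, 0, 3], [0, 1])]⟩,
  ⟨6, 3, [(0, 1, 0), (1, 2, 0), (0, 3, 0), (1, 3, 1), (0, 4, 1), (1, 4, 2), (0, 5, 2)], 4, [2, 1], [(24, [0, 4, 5, 3, 1, 2], [1, 2, 0]), (12, [0, 5, 1, 4, 3], [2, 0, 1]), (24, [4, 0, 5, 3, 1, 2], [1, 3, 0])]⟩,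
  ⟨5, 4, [(0, 1, 0), (0, 2, 1), (0, 3, 2), (3, 4, 3)], 3, [2, 3], [(2, [0, 1, 3, 2, 4], [0, 2, 1, 3]), (8, [0, 1, 2, 3, 4], [0, 1, 2, 3]), (7, [0, 1, 2, 3, 4], [0, 1, 2, 4, 3]), (8, [0, 2, 1, 3, 4], [1, 0, 2, 3]), (2, [0, 2, 3, 1, 4], [1, 2, 0, 3]), (7, [0, 2, 1, 3, 4], [1, 0, 2, 4, 3]), (0, [0, 1, 2, 3, 5, 4], [0, 1, 2, 3]), (0, [0, 2, 1, 3, 5, 4], [1, 0, 2, 3]), (5, [0, 1, 2, 3, 4, 5], [0, 1, 2, 3, 4])]⟩,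
  ⟨6, 4, [(0, 1, 0), (0, 2, 1), (0, 3, 2), (3, 4, 0), (3, 5, 3)], 4, [0, 2], [(7, [0, 4, 1, 3, 5], [1, 0, 2, 3]), (7, [3, 4, 5, 0, 2], [0, 3, 2, 1]), (7, [0, 4, 1, 3, 5], [4, 0, 2, 3]), (22, [3, 4, 5, 1, 0, 2], [0, 3, 1]), (22, [0, 1, 2, 4, 3, 5], [0, 1, 3]), (22, [0, 2, 1, 4, 3, 5], [1, 0, 3]), (18, [0, 3, 1, 4, 5], [2, 0, 1, 3]), (0, [0, 1, 2, 3, 4, 5], [0, 1, 2, 3]), (18, [0, 3, 1, 4, 5], [2, 0, 4, 3]), (22, [0, 3, 1, 5, 6, 4], [2, 0, 3])]⟩,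
  ⟨6, 4, [(0, 1, 0), (0, 2, 1), (0, 3, 2), (3, 4, 0), (3, 5, 3), (5, 4, 3)], 2, [0, 1], [(21, [4, 3, 5, 0, 1, 2], [0, 3, 2]), (21, [0, 1, 3, 2, 5, 4], [0, 2, 3]), (21, [0, 2, 1, 3, 5, 4], [1, 0, 3]), (21, [0, 2, 1, 4, 3, 5], [1, 0, 3]), (21, [5, 4, 2, 3, 0, 1], [3, 2, 0]), (21, [2, 0, 5, 1, 3, 4], [1, 3, 0]), (21, [5, 4, 2, 3, 0, 1], [3, 4, 0]), (24, [6, 2, 3, 5, 4, 0, 1], [3, 0])]⟩,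
  ⟨5, 4, [(0, 1, 0), (1, 2, 0), (0, 2, 1), (0, 3, 2), (2, 4, 3)], 1, [0, 1], [(0, [2, 1, 0, 4, 3], [0, 1, 3, 2]), (6, [0, 1, 3, 2, 4], [0, 2, 3, 1]), (13, [0, 1, 3, 2, 4], [0, 2, 4, 1, 3]), (6, [2, 4, 1, 0, 3], [3, 0, 2, 1]), (0, [0, 1, 2, 3, 4], [0, 1, 2, 3]), (13, [2, 4, 1, 0, 3], [3, 0, 4, 1, 2]), (20, [2, 1, 4, 5, 0, 3], [0, 3, 2]), (20, [0, 1, 3, 5, 2, 4], [0, 2, 3])]⟩,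
  ⟨5, 4, [(0, 1, 0), (1, 2, 0), (0, 2, 1), (0, 3, 2), (2, 4, 3), (1, 4, 3)], 1, [0, 3], [(4, [0, 3, 2, 1, 4], [2, 1, 0, 3]), (0, [0, 1, 3, 2, 4], [0, 2, 1, 3]), (12, [0, 1, 3, 2, 4], [0, 2, 4, 1, 3]), (19, [2, 1, 4, 5, 0, 3], [0, 3, 2])]⟩,
  ⟨5, 4, [(0, 1, 0), (0, 2, 1), (1, 2, 1), (0, 3, 2), (3, 4, 3), (1, 4, 3)], 5, [0, 1], [(18, [1, 0, 2, 5, 3, 4], [0, 1, 3]), (18, [0, 1, 2, 5, 3, 4], [0, 1, 3]), (18, [0, 1, 3, 4, 2, 5], [0, 2, 3]), (18, [0, 1, 2, 4, 3, 5], [0, 1, 3]), (18, [1, 4, 2, 5, 0, 3], [3, 1, 2])]⟩,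
  ⟨6, 5, [(0, 1, 0), (0, 2, 1), (0, 3, 2), (3, 4, 3), (3, 5, 4)], 2, [1, 2], [(0, [3, 4, 5, 0, 2, 1], [3, 4, 2, 1, 0]), (10, [0, 1, 2, 3, 5], [0, 1, 3, 2, 4]), (10, [0, 1, 2, 3, 4], [0, 1, 4, 2, 3]), (10, [0, 1, 2, 3, 4], [0, 1, 5, 2, 3]), (2, [0, 2, 1, 3, 4], [1, 0, 2, 3]), (1, [3, 2, 5, 0, 1], [3, 4, 2, 1, 0]), (1, [3, 2, 4, 0, 1], [4, 3, 2, 1, 0]), (1, [3, 2, 4, 0, 1], [5, 3, 2, 1, 0]), (17, [3, 4, 5, 2, 0, 1], [3, 4, 0]), (17, [0, 2, 1, 4, 3, 5], [1, 0, 4]), (17, [3, 5, 4, 2, 0, 1], [4, 3, 0]), (17, [0, 2, 1, 5, 3, 4], [1, 0, 3]), (17, [3, 0, 4, 1, 6, 2], [2, 3, 0])]⟩,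
  ⟨6, 5, [(0, 1, 0), (0, 2, 1), (0, 3, 2), (3, 4, 3), (3, 5, 4), (4, 5, 4)], 1, [0, 1], [(16, [4, 3, 5, 0, 2, 1], [3, 4, 2]), (16, [0, 1, 3, 2, 4, 5], [0, 2, 4]), (16, [0, 1, 2, 3, 4, 5], [0, 1, 4]), (16, [0, 1, 2, 4, 3, 5], [0, 1, 4]), (16, [0, 1, 2, 5, 3, 4], [0, 1, 3])]⟩,
  ⟨5, 5, [(0, 1, 0), (0, 2, 1), (0, 3, 2), (1, 3, 3), (3, 4, 4)], 1, [0, 3], [(4, [3, 0, 1, 2], [2, 3, 0, 1]), (8, [1, 2, 0, 3, 4], [2, 0, 1, 3, 4]), (11, [3, 1, 4, 2, 0], [3, 4, 1, 0]), (8, [0, 1, 2, 3, 4], [0, 1, 5, 2, 4]), (11, [0, 1, 2, 4, 3], [0, 1, 4, 3]), (8, [1, 3, 4, 0, 2], [3, 2, 4, 0, 1]), (4, [0, 1, 3, 4], [0, 2, 3, 4]), (8, [1, 3, 4, 0, 2], [3, 5, 4, 0, 1]), (15, [3, 0, 4, 2, 5, 1], [2, 4, 1]), (15, [0, 1, 2,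 5, 3, 4], [0, 1, 4])]⟩,
  ⟨5, 4, [(0, 1, 0), (0, 2, 1), (1, 3, 1), (0, 3, 2), (3, 4, 3)], 1, [0, 1], [(1, [0, 1, 2, 3, 4], [0, 1, 2, 3]), (0, [0, 1, 2, 3, 4], [0, 1, 3, 2]), (7, [0, 1, 2, 3, 4], [0, 1, 4, 2, 3]), (10, [0, 1, 2, 3, 4], [0, 1, 3, 2]), (3, [0, 1, 3, 4], [0, 2, 1, 3]), (10, [0, 1, 2, 3, 4], [0, 1, 3, 4]), (14, [0, 1, 2, 5, 3, 4], [0, 1, 3])]⟩,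
  ⟨5, 4, [(0, 1, 0), (0, 2, 1), (1, 2, 2), (0, 3, 3), (3, 4, 2)], 5, [3, 2], [(13, [0, 2, 5, 1, 3, 4], [1, 0, 2]), (13, [0, 1, 5, 2, 3, 4], [0, 1, 2]), (13, [0, 1, 5, 2, 3, 4], [0, 4, 2]), (13, [3, 0, 4, 2, 1, 5], [3, 2, 1]), (13, [3, 0, 4, 1, 2, 5], [3, 2, 0]), (9, [3, 0, 5, 1, 2], [3, 0, 2, 1]), (9, [3, 0, 5, 2, 1], [3, 1, 2, 0]), (6, [0, 1, 2, 3, 5], [0, 1, 2, 3, 4])]⟩,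
  ⟨5, 4, [(0, 1, 0), (0, 2, 1), (1, 2, 2), (0, 3, 2), (1, 3, 1), (3, 4, 3)], 4, [0, 3], [(8, [1, 0, 2, 3, 4], [0, 2, 3, 1]), (0, [0, 2, 3, 1, 4], [1, 2, 3]), (8, [1, 3, 2, 0, 4], [1, 2, 4, 3]), (0, [1, 2, 3, 0, 4], [2, 1, 3]), (8, [0, 1, 2, 3, 4], [0, 1, 3, 2]), (8, [0, 1, 2, 3, 4], [0, 1, 3, 4]), (8, [4, 3, 2, 1, 0], [3, 1, 0, 2]), (8, [4, 3, 2, 0, 1], [3, 2, 0, 1]), (5, [2, 0, 1, 4, 3], [1, 2, 0, 4, 3]), (12, [4, 3, 5, 0, 1, 2], [3, 1, 2]), (12, [4, 3, 5, 1, 0, 2], [3, 2, 1]), (12, [4, 3, 5, 0, 1, 2], [3, 4, 2])]⟩,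
  ⟨5, 3, [(0, 1, 0), (0, 2, 1), (3, 2, 0), (3, 1, 1), (0, 4, 1), (2, 4, 2)], 5, [1], [(11, [3, 2, 1, 4, 0, 5], [0, 1, 2]), (11, [4, 2, 0, 3, 1, 5], [2, 1, 0]), (11, [2, 4, 5, 0, 3, 1], [2, 0, 1]), (11, [2, 3, 5, 1, 0, 4], [0, 2, 1]), (11, [2, 4, 5, 0, 3, 1], [2, 3, 1]), (11, [2, 0, 4, 1, 3, 5], [1, 2, 0]), (11, [0, 2, 1, 4, 3, 5], [1, 0, 2]), (11, [4, 2, 5, 0, 3, 1], [2, 0, 1]), (11, [4, 0, 5, 1, 3, 2], [1, 2, 0]), (11, [4, 0, 5, 1, 3, 2], [1, 3, 0])]⟩,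
  ⟨4, 4, [(0, 1, 0), (0, 2, 1), (1, 2, 2), (2, 3, 3), (1, 3, 3)], 3, [0, 3], [(0, [0, 1, 2, 3], [0, 1, 2, 3]), (1, [0, 1, 2, 3], [0, 1, 2, 3]), (2, [0, 1, 2, 3], [0, 1, 2, 3, 4]), (6, [3, 2, 4, 0, 1], [3, 1, 0, 2]), (6, [3, 2, 4, 1, 0], [3, 2, 0, 1]), (3, [1, 2, 0, 3, 4], [2, 0, 1, 3, 4])]⟩,
  ⟨4, 4, [(0, 1, 0), (0, 2, 1), (1, 2, 2), (0, 3, 1), (2, 3, 3), (1, 3, 3)], 3, [1, 3], [(5, [3, 1, 4, 0, 2], [3, 0, 1, 2]), (5, [3, 2, 4, 1, 0], [3, 2, 0, 1]), (2, [1, 2, 0, 3, 4], [2, 0, 1, 3, 4])]⟩,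
  ⟨4, 4, [(0, 1, 0), (0, 2, 1), (1, 2, 2), (0, 3, 2), (2, 3, 3), (1, 3, 3)], 3, [2, 3], [(4, [3, 1, 4, 0, 2], [3, 0, 1, 2]), (4, [3, 2, 4, 0, 1], [3, 1, 0, 2]), (1, [1, 2, 0, 3, 4], [2, 0, 1, 3, 4])]⟩,
  ⟨4, 5, [(0, 1, 0), (0, 2, 1), (1, 2, 2), (2, 3, 3), (1, 3, 3), (0, 3, 4)], 3, [3, 4], [(3, [3, 1, 4, 0, 2], [3, 0, 1, 2]), (3, [3, 2, 4, 0, 1], [3, 1, 0, 2]), (3, [3, 2, 4, 1, 0], [3, 2, 0, 1]), (0, [0, 1, 2, 3, 4], [0, 1, 2, 4, 5])]⟩,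
  ⟨5, 5, [(0, 1, 0), (0, 2, 1), (1, 2, 2), (0, 3, 3), (3, 4, 4)], 5, [3, 4], [(6, [3, 0, 4, 5, 1, 2], [3, 4, 2]), (6, [3, 0, 4, 2, 1, 5], [3, 4, 1]), (6, [3, 0, 4, 1, 2, 5], [3, 4, 0]), (2, [3, 0, 5, 1, 2], [3, 0, 2, 1]), (2, [3, 0, 5, 2, 1], [3, 1, 2, 0]), (1, [0, 1, 2, 3, 5, 4], [0, 1, 2, 3, 4]), (0, [0, 1, 2, 3, 5, 4], [0, 1, 2, 3, 5, 4]), (6, [0, 1, 3, 2, 4, 5], [0, 3, 2])]⟩,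
  ⟨6, 6, [(0, 1, 0), (0, 2, 1), (1, 2, 2), (0, 3, 3), (3, 4, 4), (3, 5, 5)], 4, [0, 4], [(5, [3, 4, 5, 0, 1, 2], [4, 5, 2]), (5, [1, 0, 2, 4, 3, 5], [0, 2, 5]), (5, [3, 4, 5, 1, 0, 2], [4, 5, 1]), (5, [0, 1, 2, 4, 3, 5], [0, 1, 5]), (5, [0, 2, 1, 4, 3, 5], [1, 0, 5]), (5, [0, 1, 3, 2, 5, 4], [0, 3, 2]), (5, [1, 0, 2, 3, 5, 4], [0, 2, 3])]⟩,
  ⟨6, 5, [(0, 1, 0), (0, 2, 1), (1, 2, 2), (0, 3, 3), (3, 4, 2), (3, 5, 4)], 4, [0, 2], [(4, [1, 0, 2, 4, 3, 5], [0, 2, 4]), (4, [3, 4, 5, 1, 0, 2], [2, 4, 1]), (4, [0, 1, 2, 4, 3, 5], [0, 1, 4]), (4, [0, 2, 1, 4, 3, 5], [1, 0, 4]), (4, [1, 0, 2, 3, 5, 4], [0, 2, 3])]⟩,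
  ⟨5, 4, [(0, 1, 0), (0, 2, 1), (1, 3, 1), (3, 4, 2), (1, 4, 3)], 5, [0, 1], [(2, [0, 1, 2, 3, 4, 5], [0, 1, 2, 3]), (1, [0, 1, 5, 4, 3, 2], [0, 3, 2, 1]), (0, [0, 1, 2, 3, 4, 5], [0, 1, 2, 3, 4]), (3, [0, 1, 2, 5, 3, 4], [0, 1, 2]), (3, [0, 2, 1, 5, 3, 4], [1, 0, 2]), (3, [0, 1, 2, 4, 3, 5], [0, 1, 3]), (3, [4, 1, 5, 3, 0, 2], [3, 2, 1]), (3, [4, 3, 5, 1, 0, 2], [2, 3, 1]), (3, [4, 3, 5, 1, 0, 2], [2, 4, 1])]⟩,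
  ⟨6, 5, [(0, 1, 0), (0, 2, 1), (1, 3, 1), (3, 4, 2), (1, 4, 3), (0, 5, 4)], 2, [0, 1], [(2, [0, 1, 5, 2, 3, 4], [0, 4, 2]), (2, [3, 1, 4, 2, 0, 5], [1, 2, 4]), (2, [0, 1, 5, 4, 3, 2], [0, 4, 3]), (2, [1, 3, 4, 2, 0, 5], [1, 3, 4]), (2, [3, 4, 1, 2, 0, 5], [2, 1, 4]), (2, [0, 2, 1, 5, 3, 4], [1, 0, 2])]⟩,
  ⟨6, 4, [(0, 1, 0), (0, 2, 1), (1, 3, 1), (3, 4, 2), (1, 4, 3), (0, 5, 3)], 2, [1, 3], [(1, [0, 1, 5, 2, 3, 4], [0, 3, 2]), (1, [3, 4, 2, 1, 0, 5], [2, 0, 3]), (1, [2, 0, 3, 5, 1, 4], [1, 2, 3]), (1, [3, 4, 2, 1, 0, 5], [2, 4, 3]), (1, [3, 1, 4, 0, 5, 2], [1, 2, 0]), (1, [0, 2, 1, 5, 3, 4], [1, 0, 2])]⟩,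
  ⟨6, 4, [(0, 1, 0), (0, 2, 1), (1, 3, 1), (3, 4, 2), (1, 4, 3), (0, 5, 2)], 5, [1, 2], [(0, [3, 1, 4, 0, 2, 5], [1, 2, 0]), (0, [0, 1, 2, 4, 3, 5], [0, 1, 3]), (0, [4, 3, 5, 1, 0, 2], [2, 0, 1]), (0, [4, 3, 5, 1, 0, 2], [2, 3, 1]), (0, [4, 3, 5, 1, 0, 2], [2, 4, 1])]⟩,
  ⟨6, 3, [(0, 1, 0), (0, 2, 1), (1, 3, 2), (4, 5, 2)], 6, [0, 2], [(0, [0, 1, 6, 2, 3, 4, 5], [0, 1, 2]), (1, [0, 1, 6, 3, 2, 4, 5], [0, 3, 2, 1]), (2, [0, 2, 1, 6, 3, 4, 5], [1, 2]), (2, [0, 2, 4, 6, 5, 1, 3], [1, 2]), (2, [0, 2, 5, 6, 4, 1, 3], [1, 2])]⟩,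
  ⟨7, 3, [(0, 1, 0), (0, 2, 1), (0, 3, 1), (1, 4, 2), (5, 6, 2)], 3, [1, 2], [(1, [2, 3, 1, 0, 4, 5, 6], [0, 2])]⟩,
  ⟨7, 4, [(0, 1, 0), (0, 2, 1), (1, 3, 2), (0, 4, 3), (5, 6, 2)], 4, [2, 3], [(0, [0, 2, 1, 4, 3, 5, 6], [1, 2]), (0, [2, 4, 1, 0, 3, 5, 6], [0, 2]), (0, [0, 2, 5, 4, 6, 1, 3], [1, 2]), (0, [0, 2, 6, 4, 5, 1, 3], [1, 2])]⟩,
  ⟨7, 2, [(0, 1, 0), (2, 3, 0), (2, 4, 1), (5, 6, 1)], 7, [0, 1], []⟩]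

set_option maxRecDepth 100000 in
theorem cert1_ok : checkAll 1 cert1 = true := by decide +kernel

set_option maxRecDepth 100000 in
theorem cert2_ok : checkAll 2 cert2 = true := by decide +kernel

set_option maxRecDepth 100000 in
theorem cert3_ok : checkAll 3 cert3 = true := by decide +kernel

section
variable {V : Type*} (G : SimpleGraph V) (col : Sym2 V → ℕ)

def InjBelow {α : Type*} (m : ℕ) (f : ℕ → α) : Prop :=
  ∀ i < m, ∀ j < m, f i = f j → i = j

def RealBy (φ : ℕ → V) (ψ : ℕ → ℕ) (m q : ℕ) (E : List (ℕ × ℕ × ℕ)) : Prop :=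
  InjBelow m φ ∧ InjBelow q ψ ∧ (∀ e ∈ E, e.1 < m ∧ e.2.1 < m ∧ e.2.2 < q) ∧
  ∀ e ∈ E, G.Adj (φ e.1) (φ e.2.1) ∧ col s(φ e.1, φ e.2.1) = ψ e.2.2

theorem extend {α : Type*} (m : ℕ) (f : ℕ → α) (hf : InjBelow m f) (x : α) :
    ∃ u ≤ m, ∃ f' : ℕ → α, (∀ i < m, f' i = f i) ∧ f' u = x ∧ InjBelow (max m (u + 1)) f' := by
  by_cases h : ∃ i < m, f i = x
  · obtain ⟨i, hi, hx⟩ := h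
    refine ⟨i, hi.le, f, fun _ _ => rfl, hx, ?_⟩
    rwa [max_eq_left hi]
  · push Not at h
    refine ⟨m, le_rfl, Function.update f m x, ?_, by simp, ?_⟩
    · intro i hi
      rw [Function.update_of_ne hi.ne]
    · intro i hi j hj hij
      have hi' : i < m ∨ i = m := by omega
      have hj' : j < m ∨ j = m := by omega
      rcases hi' with hi' | rfl <;> rcases hj' with hj' | rfl
      · rw [Function.update_of_ne hi'.ne, Function.update_of_ne hj'.ne] at hij
        exact hf _ hi' _ hj' hij
      · rw [Function.update_of_ne hi'.ne, Function.update_self] at hij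
        exact absurd hij (h _ hi')
      · rw [Function.update_of_ne hj'.ne, Function.update_self] at hij
        exact absurd hij.symm (h _ hj')
      · rfl

theorem memb_iff (l : List ℕ) (a : ℕ) : memb l a = true ↔ a ∈ l := by
  simp [memb, Nat.beq_eq]

theorem nodupB_nodup : ∀ l : List ℕ, nodupB l = true → l.Nodup
  | [], _ => List.nodup_nil
  | a :: l, h => by
    simp only [nodupB, Bool.and_eq_true, Bool.not_eq_true', ← Bool.not_eq_true, memb_iff] at h
    exact List.nodup_cons.2 ⟨h.1, nodupB_nodup l h.2⟩

theorem compat_iff (e f : ℕ × ℕ × ℕ) : compat e f = true ↔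
    e.1 ≠ f.1 ∧ e.1 ≠ f.2.1 ∧ e.2.1 ≠ f.1 ∧ e.2.1 ≠ f.2.1 ∧ e.2.2 ≠ f.2.2 := by
  simp only [compat, Bool.and_eq_true, Bool.not_eq_true', ← Bool.not_eq_true, Nat.beq_eq]
  tauto

open Classical in
theorem insert_rm {φ : ℕ → V} {ψ : ℕ → ℕ} {m q : ℕ} {E : List (ℕ × ℕ × ℕ)}
    (hR : RealBy G col φ ψ m q E) (e : ℕ × ℕ × ℕ) (he : e ∈ E) (k : ℕ)
    (M : Finset (Sym2 V)) (hM : IsRainbowMatching G col M) (hk : M.card = k)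
    (hsub : ∀ x ∈ M, ∃ f ∈ E.filter (compat e), x = s(φ f.1, φ f.2.1)) :
    IsRainbowMatching G col (insert s(φ e.1, φ e.2.1) M) ∧
      (insert s(φ e.1, φ e.2.1) M).card = k + 1 := by
  obtain ⟨hφ, hψ, hb, hE⟩ := hR
  obtain ⟨h1, h2, h3⟩ := hM
  obtain ⟨b1, b2, b3⟩ := hb e he
  have key : ∀ x ∈ M, (∀ v, ¬ (v ∈ s(φ e.1, φ e.2.1) ∧ v ∈ x)) ∧
      col s(φ e.1, φ e.2.1) ≠ col x := by
    intro x hx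
    obtain ⟨f, hf, rfl⟩ := hsub x hx
    rw [List.mem_filter, compat_iff] at hf
    obtain ⟨hf, n1, n2, n3, n4, n5⟩ := hf
    obtain ⟨c1, c2, c3⟩ := hb f hf
    constructor
    · rintro v ⟨hv, hv'⟩
      rw [Sym2.mem_iff] at hv hv'
      rcases hv with rfl | rfl <;> rcases hv' with h | h
      · exact n1 (hφ _ b1 _ c1 h)
      · exact n2 (hφ _ b1 _ c2 h)
      · exact n3 (hφ _ b2 _ c1 h)
      · exact n4 (hφ _ b2 _ c2 h)
    · rw [(hE e he).2, (hE f hf).2]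
      exact fun h => n5 (hψ _ b3 _ c3 h)
  refine ⟨⟨?_, ?_, ?_⟩, ?_⟩
  · intro x hx
    rcases Finset.mem_insert.1 hx with rfl | hx
    · exact (hE e he).1
    · exact h1 x hx
  · intro x hx y hy hxy v hv
    rcases Finset.mem_insert.1 hx with rfl | hx <;> rcases Finset.mem_insert.1 hy with rfl | hy
    · exact hxy rfl
    · exact (key y hy).1 v hv
    · exact (key x hx).1 v hv.symm
    · exact h2 x hx y hy hxy v hv
  · intro x hx y hy hxy
    rcases Finset.mem_insert.1 hx with rfl | hx <;> rcases Finset.mem_insert.1 hy with rfl | hy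
    · rfl
    · exact absurd hxy (key y hy).2
    · exact absurd hxy.symm (key x hx).2
    · exact h3 x hx y hy hxy
  · rw [Finset.card_insert_of_notMem, hk]
    intro hx
    exact (key _ hx).2 rfl

theorem hasRM_sound {φ : ℕ → V} {ψ : ℕ → ℕ} {m q : ℕ} : ∀ (k : ℕ) (E : List (ℕ × ℕ × ℕ)),
    RealBy G col φ ψ m q E → hasRM k E = true →
    ∃ M : Finset (Sym2 V), IsRainbowMatching G col M ∧ M.card = k ∧
      ∀ x ∈ M, ∃ f ∈ E, x = s(φ f.1, φ f.2.1)
  | 0, E, _, _ => ⟨∅, by simp [IsRainbowMatching], rfl, by simp⟩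
  | k + 1, E, hR, h => by
    classical
    simp only [hasRM, List.any_eq_true] at h
    obtain ⟨e, he, h⟩ := h
    have hR' : RealBy G col φ ψ m q (E.filter (compat e)) :=
      ⟨hR.1, hR.2.1, fun f hf => hR.2.2.1 f (List.mem_filter.1 hf).1,
        fun f hf => hR.2.2.2 f (List.mem_filter.1 hf).1⟩
    obtain ⟨M, hM, hk, hs⟩ := hasRM_sound k _ hR' h
    obtain ⟨r1, r2⟩ := insert_rm G col hR e he k M hM hk hs
    refine ⟨_, r1, r2, ?_⟩
    intro x hx
    rcases Finset.mem_insert.1 hx with rfl | hx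
    · exact ⟨e, he, rfl⟩
    · obtain ⟨f, hf, rfl⟩ := hs x hx
      exact ⟨f, (List.mem_filter.1 hf).1, rfl⟩

theorem injBelow_comp {α : Type*} {m n : ℕ} {f : ℕ → α} (hf : InjBelow m f) (l : List ℕ)
    (hl : l.length = n) (hlt : ∀ x ∈ l, x < m) (hnd : l.Nodup) :
    InjBelow n (fun i => f (l.getD i 0)) := by
  intro i hi j hj hij
  subst hl
  simp only [List.getD_eq_getElem _ _ hi, List.getD_eq_getElem _ _ hj] at hij
  have := hf _ (hlt _ (List.getElem_mem hi)) _ (hlt _ (List.getElem_mem hj)) hij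
  exact (List.Nodup.getElem_inj_iff hnd).1 this

theorem embOK_sound {φ : ℕ → V} {ψ : ℕ → ℕ} {m q : ℕ} {E : List (ℕ × ℕ × ℕ)}
    (hR : RealBy G col φ ψ m q E) (P : RPat) (vm cm : List ℕ)
    (hP : ∀ e ∈ P.E, e.1 < P.m ∧ e.2.1 < P.m ∧ e.2.2 < P.q)
    (h : embOK P vm cm m q E = true) : ∃ φ' ψ', RealBy G col φ' ψ' P.m P.q P.E := by
  simp only [embOK, Bool.and_eq_true, List.all_eq_true, Nat.beq_eq, Nat.blt_eq] at h
  obtain ⟨⟨⟨⟨⟨⟨h1, h2⟩, h3⟩, h4⟩, h5⟩, h6⟩, h7⟩ := h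
  refine ⟨_, _, injBelow_comp hR.1 vm h1 h4 (nodupB_nodup _ h6),
    injBelow_comp hR.2.1 cm h2 h5 (nodupB_nodup _ h7), hP, ?_⟩
  intro e he
  have := h3 e he
  simp only [isEdge, List.any_eq_true, Bool.and_eq_true, Bool.or_eq_true, Nat.beq_eq] at this
  obtain ⟨f, hf, hc, ⟨ha, hb⟩ | ⟨ha, hb⟩⟩ := this
  · have := hR.2.2.2 f hf
    rw [ha, hb, hc] at this
    exact this
  · have := hR.2.2.2 f hf
    rw [ha, hb, hc] at this
    exact ⟨this.1.symm, by rw [Sym2.eq_swap]; exact this.2⟩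

theorem check_sound [Fintype V] (K : ℕ) (hK : 1 ≤ K)
    (hdeg : ∀ v : V, K ≤ colourDegree G col v) (hn : 4 * K - 3 ≤ Fintype.card V)
    (hno : ¬ ∃ M : Finset (Sym2 V), IsRainbowMatching G col M ∧ M.card = K)
    (P : RPat) (ps : List RPat)
    (hps : ∀ Q ∈ ps, (∀ e ∈ Q.E, e.1 < Q.m ∧ e.2.1 < Q.m ∧ e.2.2 < Q.q) ∧
      ¬ ∃ φ ψ, RealBy G col φ ψ Q.m Q.q Q.E)
    (h : check K P ps = true) :
    (∀ e ∈ P.E, e.1 < P.m ∧ e.2.1 < P.m ∧ e.2.2 < P.q) ∧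
      ¬ ∃ φ ψ, RealBy G col φ ψ P.m P.q P.E := by
  classical
  simp only [check, Bool.and_eq_true, Bool.or_eq_true, List.all_eq_true, Nat.blt_eq, Nat.ble_eq,
    List.mem_range] at h
  obtain ⟨⟨⟨⟨⟨h1, h2⟩, h3⟩, h4⟩, h5⟩, h6⟩ := h
  refine ⟨fun e he => ⟨(h1 e he).1.1, (h1 e he).1.2, (h1 e he).2⟩, ?_⟩
  rintro ⟨φ₀, ψ, hφ₀, hψ, hb, hE₀⟩
  -- introduce the vertex `v`
  obtain ⟨φ, hφ, hE⟩ : ∃ φ : ℕ → V, InjBelow (max P.m (P.v + 1)) φ ∧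
      ∀ e ∈ P.E, G.Adj (φ e.1) (φ e.2.1) ∧ col s(φ e.1, φ e.2.1) = ψ e.2.2 := by
    by_cases hv : P.v < P.m
    · refine ⟨φ₀, ?_, hE₀⟩
      rwa [max_eq_left hv]
    · have hm : P.m < Fintype.card V := by omega
      have hvm : P.v = P.m := by omega
      obtain ⟨x, hx⟩ : ∃ x, x ∉ (Finset.range P.m).image φ₀ := by
        by_contra hcon
        push Not at hcon
        have : (Finset.univ : Finset V) ⊆ (Finset.range P.m).image φ₀ := fun x _ => hcon x
        have := (Finset.card_le_card this).trans Finset.card_image_le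
        rw [Finset.card_univ, Finset.card_range] at this
        omega
      obtain ⟨u, hu, φ, e1, e2, e3⟩ := extend P.m φ₀ hφ₀ x
      have hum : u = P.m := by
        by_contra hne
        have hlt : u < P.m := by omega
        apply hx
        rw [Finset.mem_image]
        exact ⟨u, Finset.mem_range.2 hlt, by rw [← e1 u hlt, e2]⟩
      refine ⟨φ, by rw [hvm]; rw [hum] at e3; exact e3, ?_⟩
      intro e he
      rw [e1 _ (hb e he).1, e1 _ (hb e he).2.1]
      exact hE₀ e he
  -- a further edge at `v`
  obtain ⟨x, hadj, hcol⟩ : ∃ x, G.Adj (φ P.v) x ∧ ∀ c ∈ P.S, col s(φ P.v, x) ≠ ψ c := by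
    by_contra hcon
    push Not at hcon
    have hsub : col '' G.incidenceSet (φ P.v) ⊆ ((P.S.map ψ).toFinset : Set ℕ) := by
      rintro _ ⟨e, he, rfl⟩
      obtain ⟨he1, he2⟩ := he
      obtain ⟨y, rfl⟩ := Sym2.mem_iff_exists.1 he2
      obtain ⟨c, hc, hcc⟩ := hcon y he1
      simp only [List.coe_toFinset, Set.mem_ofPred_eq, List.mem_map]
      exact ⟨c, hc, hcc.symm⟩
    have hle := Set.ncard_le_ncard hsub (Finset.finite_toSet _)
    rw [Set.ncard_coe_finset] at hle
    have h7 := List.toFinset_card_le (P.S.map ψ)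
    rw [List.length_map] at h7
    have h8 := hdeg (φ P.v)
    unfold colourDegree at h8
    omega
  obtain ⟨u, hu, φ', e1, e2, e3⟩ := extend _ φ hφ x
  obtain ⟨c, hc, ψ', f1, f2, f3⟩ := extend _ ψ hψ (col s(φ P.v, x))
  have hvlt : P.v < max P.m (P.v + 1) := by omega
  have hv' : φ' P.v = φ P.v := e1 _ hvlt
  have hedge : G.Adj (φ' u) (φ' P.v) ∧ col s(φ' u, φ' P.v) = ψ' c := by
    rw [e2, hv', f2]
    exact ⟨hadj.symm, by rw [Sym2.eq_swap]⟩
  have hR : RealBy G col φ' ψ' (max (max P.m (P.v + 1)) (u + 1)) (max P.q (c + 1))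
      ((u, P.v, c) :: P.E) := by
    refine ⟨e3, f3, ?_, ?_⟩
    · intro e he
      rcases List.mem_cons.1 he with rfl | he
      · refine ⟨?_, ?_, ?_⟩ <;> simp only [lt_max_iff] <;> omega
      · have := hb e he
        refine ⟨?_, ?_, ?_⟩ <;> simp only [lt_max_iff] <;> omega
    · intro e he
      rcases List.mem_cons.1 he with rfl | he
      · exact hedge
      · have := hb e he
        rw [e1 _ (by omega), e1 _ (by omega), f1 _ this.2.2]
        exact hE e he
  have hbr := h6 u (by omega) c (by omega)
  simp only [branchOK, Bool.or_eq_true, Nat.beq_eq, memb_iff] at hbr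
  rcases hbr with (((hbr | hbr) | hbr) | hbr) | hbr
  · rw [hbr] at hedge
    exact G.loopless.irrefl _ hedge.1
  · exact hcol c hbr (by rw [← f2, f1 _ (h5 c hbr)])
  · simp only [List.any_eq_true, Bool.and_eq_true, Bool.or_eq_true, Nat.beq_eq,
      Bool.not_eq_true', ← Bool.not_eq_true] at hbr
    obtain ⟨f, hf, hfc, hff⟩ := hbr
    have hc2 := (hR.2.2.2 f (List.mem_cons_of_mem _ hf)).2
    have hlt := (hR.2.2.1 f (List.mem_cons_of_mem _ hf)).2.2
    have hcl : c < max P.q (c + 1) := by omega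
    apply hfc
    apply f3 _ hlt _ hcl
    rcases hff with ⟨ha, hb'⟩ | ⟨ha, hb'⟩
    · rw [ha, hb'] at hc2
      rw [← hc2, hedge.2]
    · rw [ha, hb', Sym2.eq_swap] at hc2
      rw [← hc2, hedge.2]
  · have hR' : RealBy G col φ' ψ' (max (max P.m (P.v + 1)) (u + 1)) (max P.q (c + 1))
        (P.E.filter (compat (u, P.v, c))) :=
      ⟨hR.1, hR.2.1,
        fun f hf => hR.2.2.1 f (List.mem_cons_of_mem _ (List.mem_filter.1 hf).1),
        fun f hf => hR.2.2.2 f (List.mem_cons_of_mem _ (List.mem_filter.1 hf).1)⟩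
    obtain ⟨M, hM, hk, hs⟩ := hasRM_sound G col _ _ hR' hbr
    obtain ⟨r1, r2⟩ := insert_rm G col hR (u, P.v, c) List.mem_cons_self _ M hM hk (by
      intro y hy
      obtain ⟨f, hf, hyf⟩ := hs y hy
      rw [List.mem_filter] at hf
      exact ⟨f, List.mem_filter.2 ⟨List.mem_cons_of_mem _ hf.1, hf.2⟩, hyf⟩)
    exact hno ⟨_, r1, by rw [r2]; omega⟩
  · rw [List.any_eq_true] at hbr
    obtain ⟨t, _, ht⟩ := hbr
    split at ht
    · exact absurd ht (by simp)
    · rename_i Q hQ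
      have hmem := List.mem_of_getElem? hQ
      exact (hps Q hmem).2 (embOK_sound G col hR Q _ _ (hps Q hmem).1 ht)

theorem checkAll_sound [Fintype V] (K : ℕ) (hK : 1 ≤ K)
    (hdeg : ∀ v : V, K ≤ colourDegree G col v) (hn : 4 * K - 3 ≤ Fintype.card V)
    (hno : ¬ ∃ M : Finset (Sym2 V), IsRainbowMatching G col M ∧ M.card = K) :
    ∀ ps : List RPat, checkAll K ps = true →
    ∀ Q ∈ ps, (∀ e ∈ Q.E, e.1 < Q.m ∧ e.2.1 < Q.m ∧ e.2.2 < Q.q) ∧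
      ¬ ∃ φ ψ, RealBy G col φ ψ Q.m Q.q Q.E
  | [], _ => by simp
  | P :: ps, h => by
    simp only [checkAll, Bool.and_eq_true] at h
    have ih := checkAll_sound K hK hdeg hn hno ps h.2
    intro Q hQ
    rcases List.mem_cons.1 hQ with rfl | hQ
    · exact check_sound G col K hK hdeg hn hno _ ps ih h.1
    · exact ih Q hQ

theorem final [Fintype V] (K : ℕ) (hK : 1 ≤ K)
    (hdeg : ∀ v : V, K ≤ colourDegree G col v) (hn : 4 * K - 3 ≤ Fintype.card V)
    (ps : List RPat) (hps : checkAll K ps = true)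
    (h0 : ∃ P ∈ ps, P.m = 0 ∧ P.q = 0 ∧ P.E = []) :
    ∃ M : Finset (Sym2 V), IsRainbowMatching G col M ∧ M.card = K := by
  by_contra hno
  obtain ⟨P, hP, hm, hq, hE⟩ := h0
  have hne : Nonempty V := Fintype.card_pos_iff.1 (by omega)
  apply (checkAll_sound G col K hK hdeg hn hno ps hps P hP).2
  refine ⟨fun _ => hne.some, id, ?_, ?_, ?_, ?_⟩
  · rw [hm]; intro i hi; omega
  · rw [hq]; intro i hi; omega
  · simp [hE]
  · simp [hE]

end

end RPat

/-- If `G` is an edge-coloured graph on `n` vertices with minimum colour degree at least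
`k`, where `1 ≤ k ≤ 3`, and `n ≥ 4k - 3`, then `G` contains a rainbow matching of size
`k`. -/
theorem rainbow_matching_of_min_colour_degree_small_k {V : Type*} [Fintype V]
    (G : SimpleGraph V) (c : Sym2 V → ℕ) (k : ℕ) (hk0 : 1 ≤ k) (hk : k ≤ 3)
    (hdeg : ∀ v : V, k ≤ colourDegree G c v)
    (hn : 4 * k - 3 ≤ Fintype.card V) :
    ∃ M : Finset (Sym2 V), IsRainbowMatching G c M ∧ M.card = k := by
  obtain rfl | rfl | rfl : k = 1 ∨ k = 2 ∨ k = 3 := by omega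
  · exact RPat.final G c 1 hk0 hdeg hn _ RPat.cert1_ok
      ⟨_, List.mem_cons_self, rfl, rfl, rfl⟩
  · exact RPat.final G c 2 hk0 hdeg hn _ RPat.cert2_ok
      ⟨_, List.mem_cons_self, rfl, rfl, rfl⟩
  · exact RPat.final G c 3 hk0 hdeg hn _ RPat.cert3_ok
      ⟨_, List.mem_cons_self, rfl, rfl, rfl⟩
end

section
/- Let k ≥ 4 be an integer and let G be a finite simple graph on n ≥ 4k − 4 vertices with minimum degree δ(G) ≥ k, equipped with a proper edge colouring (adjacent edges receive distinct colours). Then G contains a rainbow matching of size k. -/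
/-- `c` is a proper edge colouring of `G`: distinct edges of `G` sharing a vertex
receive distinct colours. -/
def IsProperEdgeColouring {V : Type*} (G : SimpleGraph V) (c : Sym2 V → ℕ) : Prop :=
  ∀ e ∈ G.edgeSet, ∀ f ∈ G.edgeSet, e ≠ f → (∃ v : V, v ∈ e ∧ v ∈ f) → c e ≠ c f

namespace RMProof
open Finset
open scoped Classical

section
variable {V : Type*}

noncomputable def Vs (N : Finset (V × V)) : Finset V := N.image Prod.fst ∪ N.image Prod.snd
noncomputable def Cs (κ : V → V → ℕ) (N : Finset (V × V)) : Finset ℕ := N.image (fun p => κ p.1 p.2)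

def RM (G : SimpleGraph V) (κ : V → V → ℕ) (N : Finset (V × V)) : Prop :=
  (∀ p ∈ N, G.Adj p.1 p.2) ∧
  ∀ p ∈ N, ∀ r ∈ N, p ≠ r → p.1 ≠ r.1 ∧ p.1 ≠ r.2 ∧ p.2 ≠ r.1 ∧ p.2 ≠ r.2 ∧ κ p.1 p.2 ≠ κ r.1 r.2

lemma mem_Vs {N : Finset (V × V)} {v : V} : v ∈ Vs N ↔ ∃ p ∈ N, p.1 = v ∨ p.2 = v := by
  unfold Vs
  simp only [mem_union, mem_image]
  constructor
  · rintro (⟨p, hp, h⟩ | ⟨p, hp, h⟩)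
    · exact ⟨p, hp, Or.inl h⟩
    · exact ⟨p, hp, Or.inr h⟩
  · rintro ⟨p, hp, h | h⟩
    · exact Or.inl ⟨p, hp, h⟩
    · exact Or.inr ⟨p, hp, h⟩

lemma mem_Cs {κ : V → V → ℕ} {N : Finset (V × V)} {a : ℕ} :
    a ∈ Cs κ N ↔ ∃ p ∈ N, κ p.1 p.2 = a := by
  unfold Cs; simp only [mem_image]

lemma card_Vs_le (N : Finset (V × V)) : (Vs N).card ≤ 2 * N.card := by
  unfold Vs
  have h1 := card_union_le (N.image Prod.fst) (N.image Prod.snd)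
  have h2 : (N.image Prod.fst).card ≤ N.card := card_image_le
  have h3 : (N.image Prod.snd).card ≤ N.card := card_image_le
  omega

lemma card_Cs_le (κ : V → V → ℕ) (N : Finset (V × V)) : (Cs κ N).card ≤ N.card := card_image_le

lemma Vs_insert (N : Finset (V × V)) (a b : V) : Vs (insert (a, b) N) = insert a (insert b (Vs N)) := by
  ext v; simp only [mem_Vs, mem_insert, exists_eq_or_imp]; grind

lemma Cs_insert (κ : V → V → ℕ) (N : Finset (V × V)) (a b : V) :
    Cs κ (insert (a, b) N) = insert (κ a b) (Cs κ N) := by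
  unfold Cs; rw [image_insert]

lemma Vs_union (N M : Finset (V × V)) : Vs (N ∪ M) = Vs N ∪ Vs M := by
  ext v; simp only [mem_Vs, mem_union]; grind

lemma Cs_union (κ : V → V → ℕ) (N M : Finset (V × V)) : Cs κ (N ∪ M) = Cs κ N ∪ Cs κ M := by
  unfold Cs; rw [image_union]

lemma Vs_mono {N M : Finset (V × V)} (h : N ⊆ M) {v : V} (hv : v ∈ Vs N) : v ∈ Vs M := by
  rw [mem_Vs] at *; obtain ⟨p, hp, h'⟩ := hv; exact ⟨p, h hp, h'⟩

lemma Cs_mono {κ : V → V → ℕ} {N M : Finset (V × V)} (h : N ⊆ M) {v : ℕ} (hv : v ∈ Cs κ N) :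
    v ∈ Cs κ M := by
  rw [mem_Cs] at *; obtain ⟨p, hp, h'⟩ := hv; exact ⟨p, h hp, h'⟩

lemma fst_mem_Vs {N : Finset (V × V)} {p : V × V} (h : p ∈ N) : p.1 ∈ Vs N :=
  mem_Vs.2 ⟨p, h, Or.inl rfl⟩
lemma snd_mem_Vs {N : Finset (V × V)} {p : V × V} (h : p ∈ N) : p.2 ∈ Vs N :=
  mem_Vs.2 ⟨p, h, Or.inr rfl⟩
lemma col_mem_Cs {κ : V → V → ℕ} {N : Finset (V × V)} {p : V × V} (h : p ∈ N) :
    κ p.1 p.2 ∈ Cs κ N := mem_Cs.2 ⟨p, h, rfl⟩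

variable {G : SimpleGraph V} {κ : V → V → ℕ}

lemma RM.mono {N M : Finset (V × V)} (hM : RM G κ M) (h : N ⊆ M) : RM G κ N :=
  ⟨fun p hp => hM.1 p (h hp), fun p hp r hr => hM.2 p (h hp) r (h hr)⟩

lemma RM.insert {N : Finset (V × V)} (hN : RM G κ N) {a b : V} (hab : G.Adj a b)
    (ha : a ∉ Vs N) (hb : b ∉ Vs N) (hc : κ a b ∉ Cs κ N) :
    RM G κ (insert (a, b) N) ∧ (insert (a, b) N).card = N.card + 1 := by
  have hnot : (a, b) ∉ N := fun h => ha (fst_mem_Vs h)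
  refine ⟨⟨?_, ?_⟩, card_insert_of_notMem hnot⟩
  · intro p hp
    rcases mem_insert.1 hp with rfl | hp
    · exact hab
    · exact hN.1 p hp
  · have key : ∀ r ∈ N, a ≠ r.1 ∧ a ≠ r.2 ∧ b ≠ r.1 ∧ b ≠ r.2 ∧ κ a b ≠ κ r.1 r.2 := by
      intro r hr
      refine ⟨?_, ?_, ?_, ?_, ?_⟩
      · rintro rfl; exact ha (fst_mem_Vs hr)
      · rintro rfl; exact ha (snd_mem_Vs hr)
      · rintro rfl; exact hb (fst_mem_Vs hr)
      · rintro rfl; exact hb (snd_mem_Vs hr)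
      · intro h; rw [h] at hc; exact hc (col_mem_Cs hr)
    intro p hp r hr hne
    rcases mem_insert.1 hp with rfl | hp' <;> rcases mem_insert.1 hr with rfl | hr'
    · exact absurd rfl hne
    · exact key r hr'
    · obtain ⟨h1, h2, h3, h4, h5⟩ := key p hp'
      exact ⟨h1.symm, h3.symm, h2.symm, h4.symm, h5.symm⟩
    · exact hN.2 p hp' r hr' hne

lemma RM.union {N M : Finset (V × V)} (hN : RM G κ N) (hM : RM G κ M)
    (hV : ∀ v ∈ Vs N, v ∉ Vs M) (hC : ∀ a ∈ Cs κ N, a ∉ Cs κ M) :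
    RM G κ (N ∪ M) ∧ (N ∪ M).card = N.card + M.card := by
  have key : ∀ p ∈ N, ∀ r ∈ M,
      p.1 ≠ r.1 ∧ p.1 ≠ r.2 ∧ p.2 ≠ r.1 ∧ p.2 ≠ r.2 ∧ κ p.1 p.2 ≠ κ r.1 r.2 := by
    intro p hp r hr
    have a1 := hV _ (fst_mem_Vs hp)
    have a2 := hV _ (snd_mem_Vs hp)
    have a3 := hC _ (col_mem_Cs hp)
    refine ⟨?_, ?_, ?_, ?_, ?_⟩ <;> intro h
    · rw [h] at a1; exact a1 (fst_mem_Vs hr)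
    · rw [h] at a1; exact a1 (snd_mem_Vs hr)
    · rw [h] at a2; exact a2 (fst_mem_Vs hr)
    · rw [h] at a2; exact a2 (snd_mem_Vs hr)
    · rw [h] at a3; exact a3 (col_mem_Cs hr)
  refine ⟨⟨?_, ?_⟩, card_union_of_disjoint ?_⟩
  · intro p hp
    rcases mem_union.1 hp with hp | hp
    · exact hN.1 p hp
    · exact hM.1 p hp
  · intro p hp r hr hne
    rcases mem_union.1 hp with hp | hp <;> rcases mem_union.1 hr with hr | hr
    · exact hN.2 p hp r hr hne
    · exact key p hp r hr
    · obtain ⟨h1, h2, h3, h4, h5⟩ := key r hr p hp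
      exact ⟨h1.symm, h3.symm, h2.symm, h4.symm, h5.symm⟩
    · exact hM.2 p hp r hr hne
  · rw [Finset.disjoint_left]
    intro p hp hp'
    exact hV _ (fst_mem_Vs hp) (fst_mem_Vs hp')

lemma RM.erase {N : Finset (V × V)} (hN : RM G κ N) {p : V × V} (hp : p ∈ N) :
    p.1 ∉ Vs (N.erase p) ∧ p.2 ∉ Vs (N.erase p) ∧ κ p.1 p.2 ∉ Cs κ (N.erase p) := by
  refine ⟨?_, ?_, ?_⟩ <;> intro h
  · obtain ⟨r, hr, h⟩ := mem_Vs.1 h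
    obtain ⟨h1, h2, h3, h4, h5⟩ := hN.2 p hp r (mem_of_mem_erase hr) (ne_of_mem_erase hr).symm
    rcases h with h | h
    · exact h1 h.symm
    · exact h2 h.symm
  · obtain ⟨r, hr, h⟩ := mem_Vs.1 h
    obtain ⟨h1, h2, h3, h4, h5⟩ := hN.2 p hp r (mem_of_mem_erase hr) (ne_of_mem_erase hr).symm
    rcases h with h | h
    · exact h3 h.symm
    · exact h4 h.symm
  · obtain ⟨r, hr, h⟩ := mem_Cs.1 h
    obtain ⟨h1, h2, h3, h4, h5⟩ := hN.2 p hp r (mem_of_mem_erase hr) (ne_of_mem_erase hr).symm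
    exact h5 h.symm

lemma Vs_erase_or {N : Finset (V × V)} {p : V × V} {v : V} (h : v ∈ Vs N) :
    v ∈ Vs (N.erase p) ∨ v = p.1 ∨ v = p.2 := by
  obtain ⟨r, hr, h⟩ := mem_Vs.1 h
  by_cases e : r = p
  · subst e; right; rcases h with h | h
    · exact Or.inl h.symm
    · exact Or.inr h.symm
  · exact Or.inl (mem_Vs.2 ⟨r, mem_erase.2 ⟨e, hr⟩, h⟩)

/-- a state with hubs -/
structure St (G : SimpleGraph V) (κ : V → V → ℕ) (q : ℕ) (B : Finset (V × V)) (X : Finset V)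
    (Z : Finset ℕ) : Prop where
  rm : RM G κ B
  dX : ∀ v ∈ X, v ∉ Vs B
  dZ : ∀ a ∈ Z, a ∉ Cs κ B
  card : B.card + X.card + Z.card = q
  R : ∀ (A : Finset V) (C : Finset ℕ), A.card ≤ 3 → A.card + C.card ≤ 4 → (∀ v ∈ A, v ∉ X) →
    (∀ a ∈ C, a ∉ Z) → ∃ N, RM G κ N ∧ N.card = X.card + Z.card ∧ (∀ v ∈ Vs N, v ∉ Vs B) ∧
      (∀ v ∈ Vs N, v ∉ A) ∧ (∀ a ∈ Cs κ N, a ∉ Cs κ B) ∧ (∀ a ∈ Cs κ N, a ∉ C) ∧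
      (Vs N \ X).card ≤ X.card + 2 * Z.card ∧ (Cs κ N \ Z).card ≤ X.card

def NoK (G : SimpleGraph V) (κ : V → V → ℕ) (q : ℕ) : Prop := ∀ N, RM G κ N → N.card ≠ q + 1

/-- free adjacency -/
def Fr (G : SimpleGraph V) (κ : V → V → ℕ) (B : Finset (V × V)) (X : Finset V) (Z : Finset ℕ)
    (v u : V) : Prop := (u ∉ Vs B ∧ u ∉ X) ∧ G.Adj v u ∧ κ v u ∉ Cs κ B ∧ κ v u ∉ Z

variable {q : ℕ} {B : Finset (V × V)} {X : Finset V} {Z : Finset ℕ}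

lemma L0 (hS : St G κ q B X Z) (hno : NoK G κ q) {u v : V} (hu : u ∉ Vs B ∧ u ∉ X)
    (h : Fr G κ B X Z u v) : False := by
  obtain ⟨hv, hadj, h1, h2⟩ := h
  have hA : ({u, v} : Finset V).card ≤ 2 := card_le_two
  obtain ⟨N, hN, hNc, n1, n2, n3, n4, -, -⟩ := hS.R {u, v} {κ u v} (by omega)
    (by rw [card_singleton]; omega) (by simp; exact ⟨hu.2, hv.2⟩) (by simpa using h2)
  obtain ⟨hU, hUc⟩ := hN.union hS.rm n1 n3
  have hins := hU.insert hadj (by rw [Vs_union]; grind) (by rw [Vs_union]; grind)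
    (by rw [Cs_union]; grind)
  have := hS.card
  exact hno _ hins.1 (by rw [hins.2, hUc]; omega)

/-- replace p by two edges -/
lemma L12 (hS : St G κ q B X Z) (hno : NoK G κ q) {p : V × V} (hp : p ∈ B) {a b a' b' : V}
    (h1 : G.Adj a b) (h2 : G.Adj a' b') (d1 : a ≠ a') (d2 : a ≠ b') (d3 : b ≠ a') (d4 : b ≠ b')
    (hc : κ a b ≠ κ a' b')
    (A : Finset V) (C : Finset ℕ) (hA : A.card ≤ 3) (hAC : A.card + C.card ≤ 4)
    (hAX : ∀ v ∈ A, v ∉ X) (hCZ : ∀ x ∈ C, x ∉ Z) (hAB : ∀ v ∈ A, v ∉ Vs B)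
    (hCB : ∀ x ∈ C, x ∉ Cs κ B)
    (va : a ∈ A ∨ a = p.1 ∨ a = p.2) (vb : b ∈ A ∨ b = p.1 ∨ b = p.2)
    (va' : a' ∈ A ∨ a' = p.1 ∨ a' = p.2) (vb' : b' ∈ A ∨ b' = p.1 ∨ b' = p.2)
    (c1 : κ a b ∈ C ∨ κ a b = κ p.1 p.2) (c2 : κ a' b' ∈ C ∨ κ a' b' = κ p.1 p.2) : False := by
  obtain ⟨N, hN, hNc, n1, n2, n3, n4, -, -⟩ := hS.R A C hA hAC hAX hCZ
  have sub : B.erase p ⊆ B := erase_subset _ _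
  obtain ⟨hU, hUc⟩ := hN.union (hS.rm.mono sub) (fun v hv h => n1 v hv (Vs_mono sub h))
    (fun v hv h => n3 v hv (Cs_mono sub h))
  have hv : ∀ v, (v ∈ A ∨ v = p.1 ∨ v = p.2) → v ∉ Vs (N ∪ B.erase p) := by
    intro v hv h
    rw [Vs_union, mem_union] at h
    obtain ⟨e1, e2, e3⟩ := hS.rm.erase hp
    have f1 := fst_mem_Vs hp
    have f2 := snd_mem_Vs hp
    rcases hv with hv | rfl | rfl <;> rcases h with h | h
    · exact n2 v h hv
    · exact hAB v hv (Vs_mono sub h)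
    · exact n1 _ h f1
    · exact e1 h
    · exact n1 _ h f2
    · exact e2 h
  have hcc : ∀ x, (x ∈ C ∨ x = κ p.1 p.2) → x ∉ Cs κ (N ∪ B.erase p) := by
    intro x hx h
    rw [Cs_union, mem_union] at h
    obtain ⟨e1, e2, e3⟩ := hS.rm.erase hp
    have f1 := col_mem_Cs (κ := κ) hp
    rcases hx with hx | rfl <;> rcases h with h | h
    · exact n4 x h hx
    · exact hCB x hx (Cs_mono sub h)
    · exact n3 _ h f1
    · exact e3 h
  have i1 := hU.insert h1 (hv a va) (hv b vb) (hcc _ c1)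
  have i2 := i1.1.insert h2
    (by rw [Vs_insert]; simp only [mem_insert, not_or]; exact ⟨d1.symm, d3.symm, hv a' va'⟩)
    (by rw [Vs_insert]; simp only [mem_insert, not_or]; exact ⟨d2.symm, d4.symm, hv b' vb'⟩)
    (by rw [Cs_insert]; simp only [mem_insert, not_or]; exact ⟨hc.symm, hcc _ c2⟩)
  have := hS.card
  have hBp : 0 < B.card := card_pos.2 ⟨p, hp⟩
  refine hno _ i2.1 ?_
  rw [i2.2, i1.2, hUc, card_erase_of_mem hp]; omega

lemma L1 (hS : St G κ q B X Z) (hno : NoK G κ q) {p : V × V} (hp : p ∈ B) {u u' : V}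
    (h : Fr G κ B X Z p.1 u) (h' : Fr G κ B X Z p.2 u') (hne : u ≠ u') : κ p.1 u = κ p.2 u' := by
  by_contra hc
  obtain ⟨hu, ha, h1, h2⟩ := h
  obtain ⟨hu', ha', h1', h2'⟩ := h'
  have hA : ({u, u'} : Finset V).card ≤ 2 := card_le_two
  have hC : ({κ p.1 u, κ p.2 u'} : Finset ℕ).card ≤ 2 := card_le_two
  have f1 := fst_mem_Vs hp
  have f2 := snd_mem_Vs hp
  have := (hS.rm.1 p hp).ne
  refine L12 hS hno hp ha ha' this (by grind) (by grind) hne hc {u, u'} {κ p.1 u, κ p.2 u'}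
    (by omega) (by omega) (by grind) (by grind) (by grind) (by grind) ?_ ?_ ?_ ?_ ?_ ?_ <;> simp

lemma L2 (hS : St G κ q B X Z) (hno : NoK G κ q) {p : V × V} (hp : p ∈ B) {v u z z' : V}
    (hv : v = p.1 ∨ v = p.2)
    (h : Fr G κ B X Z v u) (hz : z ∉ Vs B ∧ z ∉ X) (hz' : z' ∉ Vs B ∧ z' ∉ X) (hzz : G.Adj z z')
    (hc : κ z z' = κ p.1 p.2) : u = z ∨ u = z' := by
  by_contra! hne
  obtain ⟨hu, ha, h1, h2⟩ := h
  have hA : ({u, z, z'} : Finset V).card ≤ 3 := card_le_three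
  have f1 := fst_mem_Vs hp
  have f2 := snd_mem_Vs hp
  have f3 := col_mem_Cs (κ := κ) hp
  have hvB : v ∈ Vs B := by rcases hv with rfl | rfl <;> assumption
  have hcc : κ v u ≠ κ z z' := by rw [hc]; intro e; rw [e] at h1; exact h1 f3
  refine L12 hS hno hp ha hzz (by grind) (by grind) hne.1 hne.2 hcc {u, z, z'} {κ v u}
    (by omega) (by simp only [card_singleton]; omega) (by grind) (by grind) (by grind) (by grind)
    (Or.inr hv) ?_ ?_ ?_ ?_ (Or.inr hc) <;> simp



variable [Fintype V]
set_option linter.unusedSectionVars false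

noncomputable def UU (B : Finset (V × V)) (X : Finset V) : Finset V :=
  univ.filter (fun v => v ∉ Vs B ∧ v ∉ X)
noncomputable def DD (G : SimpleGraph V) (κ : V → V → ℕ) (B : Finset (V × V)) (X : Finset V)
    (Z : Finset ℕ) (v : V) : Finset V := univ.filter (fun u => Fr G κ B X Z v u)
noncomputable def HH (G : SimpleGraph V) (κ : V → V → ℕ) (B : Finset (V × V)) (X : Finset V)
    (a : ℕ) : Finset V :=
  univ.filter (fun z => (z ∉ Vs B ∧ z ∉ X) ∧ ∃ z', (z' ∉ Vs B ∧ z' ∉ X) ∧ G.Adj z z' ∧ κ z z' = a)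

lemma mem_UU {v : V} : v ∈ UU B X ↔ v ∉ Vs B ∧ v ∉ X := by simp [UU]
lemma mem_DD {v u : V} : u ∈ DD G κ B X Z v ↔ Fr G κ B X Z v u := by simp [DD]
lemma mem_HH {a : ℕ} {z : V} : z ∈ HH G κ B X a ↔
    (z ∉ Vs B ∧ z ∉ X) ∧ ∃ z', (z' ∉ Vs B ∧ z' ∉ X) ∧ G.Adj z z' ∧ κ z z' = a := by simp [HH]

def Prop1 (G : SimpleGraph V) (κ : V → V → ℕ) : Prop :=
  ∀ v u w, G.Adj v u → G.Adj v w → κ v u = κ v w → u = w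

lemma two_bound (hpr : Prop1 G κ) (S : Finset V) (v x : V) (a : ℕ)
    (h : ∀ u ∈ S, u ≠ x → G.Adj v u ∧ κ v u = a) : S.card ≤ 2 := by
  have h1 : (S.erase x).card ≤ 1 := by
    rw [card_le_one]
    intro u hu w hw
    obtain ⟨a1, a2⟩ := h u (mem_of_mem_erase hu) (ne_of_mem_erase hu)
    obtain ⟨b1, b2⟩ := h w (mem_of_mem_erase hw) (ne_of_mem_erase hw)
    exact hpr v u w a1 b1 (a2.trans b2.symm)
  have := pred_card_le_card_erase (s := S) (a := x)
  omega

lemma D1_le (hpr : Prop1 G κ) (hS : St G κ q B X Z) (hno : NoK G κ q) {p : V × V} (hp : p ∈ B)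
    (h : (DD G κ B X Z p.2).Nonempty) : (DD G κ B X Z p.1).card ≤ 2 := by
  obtain ⟨u', hu'⟩ := h
  rw [mem_DD] at hu'
  refine two_bound hpr _ p.1 u' (κ p.2 u') ?_
  intro u hu hne
  rw [mem_DD] at hu
  exact ⟨hu.2.1, L1 hS hno hp hu hu' hne⟩

lemma D2_le (hpr : Prop1 G κ) (hS : St G κ q B X Z) (hno : NoK G κ q) {p : V × V} (hp : p ∈ B)
    (h : (DD G κ B X Z p.1).Nonempty) : (DD G κ B X Z p.2).card ≤ 2 := by
  obtain ⟨u', hu'⟩ := h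
  rw [mem_DD] at hu'
  refine two_bound hpr _ p.2 u' (κ p.1 u') ?_
  intro u hu hne
  rw [mem_DD] at hu
  exact ⟨hu.2.1, (L1 hS hno hp hu' hu hne.symm).symm⟩

lemma H_le (hsy : ∀ u v, κ u v = κ v u) (hpr : Prop1 G κ) (hS : St G κ q B X Z) (hno : NoK G κ q)
    {p : V × V} (hp : p ∈ B) {v : V} (hv : v = p.1 ∨ v = p.2)
    (h : (DD G κ B X Z v).Nonempty) : (HH G κ B X (κ p.1 p.2)).card ≤ 2 := by
  obtain ⟨u, hu⟩ := h
  rw [mem_DD] at hu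
  refine two_bound hpr _ u u (κ p.1 p.2) ?_
  intro z hz hne
  obtain ⟨hz1, z', hz', hadj, hc⟩ := mem_HH.1 hz
  rcases L2 hS hno hp hv hu hz1 hz' hadj hc with e | e
  · exact absurd e.symm hne
  · subst e; exact ⟨hadj.symm, by rw [hsy, hc]⟩

lemma D_of_H (hS : St G κ q B X Z) (hno : NoK G κ q)
    {p : V × V} (hp : p ∈ B) (h : (HH G κ B X (κ p.1 p.2)).Nonempty) :
    ∃ z z', (z ∉ Vs B ∧ z ∉ X) ∧ (z' ∉ Vs B ∧ z' ∉ X) ∧ G.Adj z z' ∧ κ z z' = κ p.1 p.2 ∧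
      DD G κ B X Z p.1 ⊆ {z, z'} ∧ DD G κ B X Z p.2 ⊆ {z, z'} := by
  obtain ⟨z, hz⟩ := h
  obtain ⟨hz1, z', hz', hadj, hc⟩ := mem_HH.1 hz
  refine ⟨z, z', hz1, hz', hadj, hc, ?_, ?_⟩
  · intro u hu
    rcases L2 hS hno hp (Or.inl rfl) (mem_DD.1 hu) hz1 hz' hadj hc with e | e <;> simp [e]
  · intro u hu
    rcases L2 hS hno hp (Or.inr rfl) (mem_DD.1 hu) hz1 hz' hadj hc with e | e <;> simp [e]

lemma tri (hsy : ∀ u v, κ u v = κ v u) (hpr : Prop1 G κ) (hS : St G κ q B X Z) (hno : NoK G κ q)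
    {p : V × V} (hp : p ∈ B) {d1 d2 h : ℕ} (e1 : (DD G κ B X Z p.1).card = d1)
    (e2 : (DD G κ B X Z p.2).card = d2) (e3 : (HH G κ B X (κ p.1 p.2)).card = h) :
    (0 < d2 → d1 ≤ 2) ∧ (0 < d1 → d2 ≤ 2) ∧ (0 < d1 → h ≤ 2) ∧ (0 < d2 → h ≤ 2) ∧
    (0 < h → d1 ≤ 2 ∧ d2 ≤ 2) := by
  subst e1 e2 e3
  refine ⟨fun h => D1_le hpr hS hno hp (card_pos.1 h), fun h => D2_le hpr hS hno hp (card_pos.1 h),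
    fun h => H_le hsy hpr hS hno hp (Or.inl rfl) (card_pos.1 h),
    fun h => H_le hsy hpr hS hno hp (Or.inr rfl) (card_pos.1 h), fun h => ?_⟩
  obtain ⟨z, z', -, -, -, -, h1, h2⟩ := D_of_H hS hno hp (card_pos.1 h)
  exact ⟨(card_le_card h1).trans card_le_two, (card_le_card h2).trans card_le_two⟩

lemma hubX (hsy : ∀ u v, κ u v = κ v u) (hpr : Prop1 G κ) (hS : St G κ q B X Z)
    {p : V × V} (hp : p ∈ B) {v y : V} (hv : v = p.1 ∧ y = p.2 ∨ v = p.2 ∧ y = p.1)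
    (hd : 4 + 2 * X.card + 2 * Z.card ≤ (DD G κ B X Z v).card) :
    St G κ q (B.erase p) (insert v X) Z := by
  have sub : B.erase p ⊆ B := erase_subset _ _
  obtain ⟨e1, e2, e3⟩ := hS.rm.erase hp
  have f1 := fst_mem_Vs hp
  have f2 := snd_mem_Vs hp
  have f3 := col_mem_Cs (κ := κ) hp
  have hvB : v ∈ Vs B := by grind
  have hyB : y ∈ Vs B := by grind
  have hvB' : v ∉ Vs (B.erase p) := by grind
  have hyB' : y ∉ Vs (B.erase p) := by grind
  have hadj : G.Adj v y := by
    rcases hv with ⟨rfl, rfl⟩ | ⟨rfl, rfl⟩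
    · exact hS.rm.1 p hp
    · exact (hS.rm.1 p hp).symm
  have hcol : κ v y = κ p.1 p.2 := by
    rcases hv with ⟨rfl, rfl⟩ | ⟨rfl, rfl⟩
    · rfl
    · exact hsy _ _
  have hvX : v ∉ X := fun h => hS.dX v h hvB
  have hBp : 0 < B.card := card_pos.2 ⟨p, hp⟩
  have hXc : (insert v X).card = X.card + 1 := card_insert_of_notMem hvX
  have hScard := hS.card
  refine ⟨hS.rm.mono sub, ?_, ?_, ?_, ?_⟩
  · intro w hw
    rcases mem_insert.1 hw with rfl | hw
    · exact hvB'
    · exact fun h => hS.dX w hw (Vs_mono sub h)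
  · intro a ha h
    exact hS.dZ a ha (Cs_mono sub h)
  · rw [card_erase_of_mem hp, hXc]; omega
  · intro A C hA hAC hAX hCZ
    obtain ⟨N, hN, hNc, n1, n2, n3, n4, n5, n6⟩ := hS.R A C hA hAC
      (fun w hw h => hAX w hw (mem_insert_of_mem h)) hCZ
    -- the options
    set O := insert y (DD G κ B X Z v) with hO
    have hyD : y ∉ DD G κ B X Z v := by
      intro h; exact (mem_DD.1 h).1.1 hyB
    have hOc : O.card = (DD G κ B X Z v).card + 1 := card_insert_of_notMem hyD
    have hOadj : ∀ u ∈ O, G.Adj v u := by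
      intro u hu
      rcases mem_insert.1 hu with rfl | hu
      · exact hadj
      · exact (mem_DD.1 hu).2.1
    have hOV : ∀ u ∈ O, u ∉ Vs (B.erase p) ∧ u ∉ X := by
      intro u hu
      rcases mem_insert.1 hu with rfl | hu
      · exact ⟨hyB', fun h => hS.dX _ h hyB⟩
      · exact ⟨fun h => (mem_DD.1 hu).1.1 (Vs_mono sub h), (mem_DD.1 hu).1.2⟩
    have hOC : ∀ u ∈ O, κ v u ∉ Cs κ (B.erase p) ∧ κ v u ∉ Z := by
      intro u hu
      rcases mem_insert.1 hu with rfl | hu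
      · rw [hcol]; exact ⟨e3, fun h => hS.dZ _ h f3⟩
      · exact ⟨fun h => (mem_DD.1 hu).2.2.1 (Cs_mono sub h), (mem_DD.1 hu).2.2.2⟩
    have hex : ∃ u ∈ O, u ∉ A ∪ (Vs N \ X) ∧ κ v u ∉ C ∪ (Cs κ N \ Z) := by
      by_contra! hcon
      have hsub : O ⊆ (A ∪ (Vs N \ X)) ∪ O.filter (fun u => κ v u ∈ C ∪ (Cs κ N \ Z)) := by
        intro u hu
        by_cases h : u ∈ A ∪ (Vs N \ X)
        · exact mem_union_left _ h
        · exact mem_union_right _ (mem_filter.2 ⟨hu, hcon u hu h⟩)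
      have c1 : (O.filter (fun u => κ v u ∈ C ∪ (Cs κ N \ Z))).card ≤ (C ∪ (Cs κ N \ Z)).card := by
        refine card_le_card_of_injOn (fun u => κ v u) (fun u hu => (mem_filter.1 hu).2) ?_
        intro u hu w hw huw
        exact hpr v u w (hOadj u (mem_filter.1 hu).1) (hOadj w (mem_filter.1 hw).1) huw
      have c2 := card_le_card hsub
      have c3 := card_union_le (A ∪ (Vs N \ X)) (O.filter (fun u => κ v u ∈ C ∪ (Cs κ N \ Z)))
      have c4 := card_union_le A (Vs N \ X)
      have c5 := card_union_le C (Cs κ N \ Z)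
      omega
    obtain ⟨u, hu, hu1, hu2⟩ := hex
    simp only [mem_union, mem_sdiff, not_or, not_and, not_not] at hu1 hu2
    have huN : u ∉ Vs N := fun h => (hOV u hu).2 (hu1.2 h)
    have hcN : κ v u ∉ Cs κ N := fun h => (hOC u hu).2 (hu2.2 h)
    have hvN : v ∉ Vs N := fun h => n1 v h hvB
    obtain ⟨i1, i2⟩ := hN.insert (hOadj u hu) hvN huN hcN
    refine ⟨_, i1, by rw [i2, hXc]; omega, ?_, ?_, ?_, ?_, ?_, ?_⟩
    · intro w hw
      rw [Vs_insert, mem_insert, mem_insert] at hw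
      rcases hw with rfl | rfl | hw
      · exact hvB'
      · exact (hOV _ hu).1
      · exact fun h => n1 w hw (Vs_mono sub h)
    · intro w hw
      rw [Vs_insert, mem_insert, mem_insert] at hw
      rcases hw with rfl | rfl | hw
      · exact fun h => hAX _ h (mem_insert_self _ _)
      · exact hu1.1
      · exact n2 w hw
    · intro a ha
      rw [Cs_insert, mem_insert] at ha
      rcases ha with rfl | ha
      · exact (hOC _ hu).1
      · exact fun h => n3 a ha (Cs_mono sub h)
    · intro a ha
      rw [Cs_insert, mem_insert] at ha
      rcases ha with rfl | ha
      · exact hu2.1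
      · exact n4 a ha
    · have : Vs (insert (v, u) N) \ insert v X ⊆ insert u (Vs N \ X) := by
        rw [Vs_insert]; intro w hw; grind
      have := card_le_card this
      have := card_insert_le u (Vs N \ X)
      omega
    · have : Cs κ (insert (v, u) N) \ Z ⊆ insert (κ v u) (Cs κ N \ Z) := by
        rw [Cs_insert]; intro w hw; grind
      have := card_le_card this
      have := card_insert_le (κ v u) (Cs κ N \ Z)
      omega

lemma hubZ (hsy : ∀ u v, κ u v = κ v u) (hpr : Prop1 G κ) (hS : St G κ q B X Z)
    {p : V × V} (hp : p ∈ B)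
    (hd : 5 + 2 * X.card + 4 * Z.card ≤ (HH G κ B X (κ p.1 p.2)).card) :
    St G κ q (B.erase p) X (insert (κ p.1 p.2) Z) := by
  have sub : B.erase p ⊆ B := erase_subset _ _
  obtain ⟨e1, e2, e3⟩ := hS.rm.erase hp
  have f1 := fst_mem_Vs hp
  have f2 := snd_mem_Vs hp
  have f3 := col_mem_Cs (κ := κ) hp
  have hadj : G.Adj p.1 p.2 := hS.rm.1 p hp
  have hZ : κ p.1 p.2 ∉ Z := fun h => hS.dZ _ h f3
  have hBp : 0 < B.card := card_pos.2 ⟨p, hp⟩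
  have hZc : (insert (κ p.1 p.2) Z).card = Z.card + 1 := card_insert_of_notMem hZ
  have hScard := hS.card
  refine ⟨hS.rm.mono sub, ?_, ?_, ?_, ?_⟩
  · intro w hw h
    exact hS.dX w hw (Vs_mono sub h)
  · intro a ha
    rcases mem_insert.1 ha with rfl | ha
    · exact e3
    · exact fun h => hS.dZ a ha (Cs_mono sub h)
  · rw [card_erase_of_mem hp, hZc]; omega
  · intro A C hA hAC hAX hCZ
    obtain ⟨N, hN, hNc, n1, n2, n3, n4, n5, n6⟩ := hS.R A C hA hAC hAX
      (fun w hw h => hCZ w hw (mem_insert_of_mem h))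
    set O := insert p.1 (insert p.2 (HH G κ B X (κ p.1 p.2))) with hO
    have h2H : p.2 ∉ HH G κ B X (κ p.1 p.2) := fun h => (mem_HH.1 h).1.1 f2
    have h1H : p.1 ∉ insert p.2 (HH G κ B X (κ p.1 p.2)) := by
      intro h
      rcases mem_insert.1 h with h | h
      · exact hadj.ne h
      · exact (mem_HH.1 h).1.1 f1
    have hOc : O.card = (HH G κ B X (κ p.1 p.2)).card + 2 := by
      rw [hO, card_insert_of_notMem h1H, card_insert_of_notMem h2H]
    have hX1 : p.1 ∉ X := fun h => hS.dX _ h f1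
    have hX2 : p.2 ∉ X := fun h => hS.dX _ h f2
    have hOm : ∀ z ∈ O, (z ∉ Vs (B.erase p) ∧ z ∉ X) ∧ ∃ z', (z' ∉ Vs (B.erase p) ∧ z' ∉ X) ∧
        G.Adj z z' ∧ κ z z' = κ p.1 p.2 := by
      intro z hz
      rcases mem_insert.1 hz with rfl | hz
      · exact ⟨⟨e1, hX1⟩, p.2, ⟨e2, hX2⟩, hadj, rfl⟩
      rcases mem_insert.1 hz with rfl | hz
      · exact ⟨⟨e2, hX2⟩, p.1, ⟨e1, hX1⟩, hadj.symm, hsy _ _⟩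
      obtain ⟨a, z', b, d⟩ := mem_HH.1 hz
      exact ⟨⟨fun h => a.1 (Vs_mono sub h), a.2⟩, z', ⟨fun h => b.1 (Vs_mono sub h), b.2⟩, d⟩
    set Bd := A ∪ (Vs N \ X) with hBd
    have hBdc : Bd.card ≤ 3 + X.card + 2 * Z.card := by
      have := card_union_le A (Vs N \ X)
      rw [hBd]; omega
    have hex : ∃ z ∈ O, z ∉ Bd ∧ ∀ z', G.Adj z z' → κ z z' = κ p.1 p.2 → z' ∉ Bd := by
      by_contra! hcon
      have hsub : O ⊆ Bd ∪ Bd.biUnion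
          (fun z' => univ.filter (fun z => G.Adj z z' ∧ κ z z' = κ p.1 p.2)) := by
        intro z hz
        by_cases h : z ∈ Bd
        · exact mem_union_left _ h
        · obtain ⟨z', h1, h2, h3⟩ := hcon z hz h
          refine mem_union_right _ (mem_biUnion.2 ⟨z', h3, ?_⟩)
          simp [h1, h2]
      have c1 : (Bd.biUnion
          (fun z' => univ.filter (fun z => G.Adj z z' ∧ κ z z' = κ p.1 p.2))).card ≤ Bd.card * 1 := by
        refine card_biUnion_le_card_mul _ _ _ ?_
        intro z' _
        rw [card_le_one]
        intro a ha b hb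
        simp only [mem_filter, mem_univ, true_and] at ha hb
        exact hpr z' a b ha.1.symm hb.1.symm (by rw [hsy z' a, hsy z' b, ha.2, hb.2])
      have c2 := card_le_card hsub
      have c3 := card_union_le Bd (Bd.biUnion
          (fun z' => univ.filter (fun z => G.Adj z z' ∧ κ z z' = κ p.1 p.2)))
      omega
    obtain ⟨z, hz, hz1, hz2⟩ := hex
    obtain ⟨hzU, z', hzU', hzadj, hzc⟩ := hOm z hz
    have hz3 := hz2 z' hzadj hzc
    simp only [hBd, mem_union, mem_sdiff, not_or, not_and, not_not] at hz1 hz3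
    have huN : z ∉ Vs N := fun h => hzU.2 (hz1.2 h)
    have huN' : z' ∉ Vs N := fun h => hzU'.2 (hz3.2 h)
    have hcN : κ z z' ∉ Cs κ N := by rw [hzc]; exact fun h => n3 _ h f3
    obtain ⟨i1, i2⟩ := hN.insert hzadj huN huN' hcN
    refine ⟨_, i1, by rw [i2, hZc]; omega, ?_, ?_, ?_, ?_, ?_, ?_⟩
    · intro w hw
      rw [Vs_insert, mem_insert, mem_insert] at hw
      rcases hw with rfl | rfl | hw
      · exact hzU.1
      · exact hzU'.1
      · exact fun h => n1 w hw (Vs_mono sub h)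
    · intro w hw
      rw [Vs_insert, mem_insert, mem_insert] at hw
      rcases hw with rfl | rfl | hw
      · exact hz1.1
      · exact hz3.1
      · exact n2 w hw
    · intro a ha
      rw [Cs_insert, mem_insert, hzc] at ha
      rcases ha with rfl | ha
      · exact e3
      · exact fun h => n3 a ha (Cs_mono sub h)
    · intro a ha
      rw [Cs_insert, mem_insert, hzc] at ha
      rcases ha with rfl | ha
      · exact fun h => hCZ _ h (mem_insert_self _ _)
      · exact n4 a ha
    · have : Vs (insert (z, z') N) \ X ⊆ insert z (insert z' (Vs N \ X)) := by
        rw [Vs_insert]; intro w hw; grind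
      have := card_le_card this
      have := card_insert_le z (insert z' (Vs N \ X))
      have := card_insert_le z' (Vs N \ X)
      omega
    · have : Cs κ (insert (z, z') N) \ insert (κ p.1 p.2) Z ⊆ (Cs κ N \ Z) := by
        rw [Cs_insert, hzc]; intro w hw; grind
      have := card_le_card this
      omega


noncomputable def TT (G : SimpleGraph V) (κ : V → V → ℕ) (B : Finset (V × V)) (X : Finset V)
    (v : V) : Finset V :=
  univ.filter (fun w => (w ∉ Vs B ∧ w ∉ X) ∧ G.Adj v w ∧ κ v w ∈ Cs κ B)

lemma mem_TT {v w : V} : w ∈ TT G κ B X v ↔ (w ∉ Vs B ∧ w ∉ X) ∧ G.Adj v w ∧ κ v w ∈ Cs κ B := by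
  simp [TT]

lemma T_ne (hsy : ∀ u v, κ u v = κ v u) (hpr : Prop1 G κ) (hB : RM G κ B)
    {p : V × V} (hp : p ∈ B) {v w : V} (hv : v = p.1 ∨ v = p.2) (hw : w ∉ Vs B) (h : G.Adj v w) :
    κ v w ≠ κ p.1 p.2 := by
  intro hc
  rcases hv with rfl | rfl
  · have := hpr _ _ _ h (hB.1 p hp) hc
    rw [this] at hw; exact hw (snd_mem_Vs hp)
  · have := hpr _ _ _ h (hB.1 p hp).symm (by rw [hc, hsy])
    rw [this] at hw; exact hw (fst_mem_Vs hp)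

lemma T_le (hsy : ∀ u v, κ u v = κ v u) (hpr : Prop1 G κ) (hB : RM G κ B)
    {p : V × V} (hp : p ∈ B) {v : V} (hv : v = p.1 ∨ v = p.2) :
    (TT G κ B X v).card + 1 ≤ B.card := by
  have h1 : (TT G κ B X v).card ≤ ((Cs κ B).erase (κ p.1 p.2)).card := by
    refine card_le_card_of_injOn (fun w => κ v w) ?_ ?_
    · intro w hw
      obtain ⟨a, b, d⟩ := mem_TT.1 hw
      exact mem_coe.2 (mem_erase.2 ⟨T_ne hsy hpr hB hp hv a.1 b, d⟩)
    · intro u hu w hw huw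
      exact hpr v u w (mem_TT.1 hu).2.1 (mem_TT.1 hw).2.1 huw
  have h2 := card_erase_add_one (col_mem_Cs (κ := κ) hp)
  have h3 := card_Cs_le κ B
  omega

lemma sum_ind (U S : Finset V) : ∑ w ∈ U, (if w ∈ S then 1 else 0) ≤ S.card := by
  rw [← card_filter]
  exact card_le_card (fun w hw => (mem_filter.1 hw).2)

lemma count (hsy : ∀ u v, κ u v = κ v u) (hpr : Prop1 G κ) (hS : St G κ q B X Z) (hno : NoK G κ q)
    (hdeg : ∀ w, ∃ S : Finset V, q + 1 ≤ S.card ∧ ∀ u ∈ S, G.Adj w u) :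
    (UU B X).card * (B.card + 1) ≤ ∑ p ∈ B, ((DD G κ B X Z p.1).card + (TT G κ B X p.1).card
      + (DD G κ B X Z p.2).card + (TT G κ B X p.2).card + (HH G κ B X (κ p.1 p.2)).card) := by
  have key : ∀ w ∈ UU B X, B.card + 1 ≤ ∑ p ∈ B, ((if w ∈ DD G κ B X Z p.1 then 1 else 0)
      + (if w ∈ TT G κ B X p.1 then 1 else 0) + (if w ∈ DD G κ B X Z p.2 then 1 else 0)
      + (if w ∈ TT G κ B X p.2 then 1 else 0) + (if w ∈ HH G κ B X (κ p.1 p.2) then 1 else 0)) := by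
    intro w hw
    rw [mem_UU] at hw
    obtain ⟨S, hSc, hSa⟩ := hdeg w
    let F : V × V → Finset V := fun p =>
      ((if w ∈ DD G κ B X Z p.1 then {p.1} else ∅) ∪ (if w ∈ TT G κ B X p.1 then {p.1} else ∅)
      ∪ (if w ∈ DD G κ B X Z p.2 then {p.2} else ∅) ∪ (if w ∈ TT G κ B X p.2 then {p.2} else ∅)
      ∪ (if w ∈ HH G κ B X (κ p.1 p.2) then
          univ.filter (fun u => G.Adj w u ∧ κ w u = κ p.1 p.2) else ∅))
    have hF : ∀ p, (F p).card ≤ ((if w ∈ DD G κ B X Z p.1 then 1 else 0)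
      + (if w ∈ TT G κ B X p.1 then 1 else 0) + (if w ∈ DD G κ B X Z p.2 then 1 else 0)
      + (if w ∈ TT G κ B X p.2 then 1 else 0) + (if w ∈ HH G κ B X (κ p.1 p.2) then 1 else 0)) := by
      intro p
      refine (card_union_le _ _).trans (add_le_add ?_ ?_)
      · refine (card_union_le _ _).trans (add_le_add ?_ ?_)
        · refine (card_union_le _ _).trans (add_le_add ?_ ?_)
          · refine (card_union_le _ _).trans (add_le_add ?_ ?_)
            · split_ifs <;> simp
            · split_ifs <;> simp
          · split_ifs <;> simp
        · split_ifs <;> simp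
      · split_ifs
        · rw [card_le_one]
          intro a ha b hb
          simp only [mem_filter, mem_univ, true_and] at ha hb
          exact hpr w a b ha.1 hb.1 (ha.2.trans hb.2.symm)
        · simp
    have hsub : S ⊆ (X ∪ S.filter (fun u => κ w u ∈ Z)) ∪ B.biUnion F := by
      intro u hu
      have hadj := hSa u hu
      by_cases hX : u ∈ X
      · simp [hX]
      by_cases hZ : κ w u ∈ Z
      · simp [hu, hZ]
      refine mem_union_right _ ?_
      by_cases hB : u ∈ Vs B
      · obtain ⟨p, hp, h⟩ := mem_Vs.1 hB
        refine mem_biUnion.2 ⟨p, hp, ?_⟩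
        by_cases hC : κ w u ∈ Cs κ B
        · have hT : w ∈ TT G κ B X u := mem_TT.2 ⟨hw, hadj.symm, by rw [hsy]; exact hC⟩
          rcases h with rfl | rfl
          · simp [F, hT]
          · simp [F, hT]
        · have hT : w ∈ DD G κ B X Z u := mem_DD.2 ⟨hw, hadj.symm, by rw [hsy]; exact hC,
            by rw [hsy]; exact hZ⟩
          rcases h with rfl | rfl
          · simp [F, hT]
          · simp [F, hT]
      · by_cases hC : κ w u ∈ Cs κ B
        · obtain ⟨p, hp, h⟩ := mem_Cs.1 hC
          refine mem_biUnion.2 ⟨p, hp, ?_⟩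
          have hH : w ∈ HH G κ B X (κ p.1 p.2) := mem_HH.2 ⟨hw, u, ⟨hB, hX⟩, hadj, h.symm⟩
          refine mem_union_right _ ?_
          rw [if_pos hH]
          simp [hadj, h]
        · exact (L0 hS hno hw ⟨⟨hB, hX⟩, hadj, hC, hZ⟩).elim
    have c1 := card_le_card hsub
    have c2 := card_union_le (X ∪ S.filter (fun u => κ w u ∈ Z)) (B.biUnion F)
    have c3 := card_union_le X (S.filter (fun u => κ w u ∈ Z))
    have c4 : (S.filter (fun u => κ w u ∈ Z)).card ≤ Z.card := by
      refine card_le_card_of_injOn (fun u => κ w u) (fun u hu => (mem_filter.1 hu).2) ?_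
      intro u hu v hv huv
      exact hpr w u v (hSa u (mem_filter.1 hu).1) (hSa v (mem_filter.1 hv).1) huv
    have c5 : (B.biUnion F).card ≤ _ := card_biUnion_le
    have c6 := sum_le_sum (fun p (_ : p ∈ B) => hF p)
    have c7 := hS.card
    omega
  calc (UU B X).card * (B.card + 1) = ∑ w ∈ UU B X, (B.card + 1) := by simp
    _ ≤ _ := sum_le_sum key
    _ = _ := sum_comm
    _ ≤ _ := by
      refine sum_le_sum (fun p _ => ?_)
      simp only [sum_add_distrib]
      have h1 := sum_ind (UU B X) (DD G κ B X Z p.1)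
      have h2 := sum_ind (UU B X) (TT G κ B X p.1)
      have h3 := sum_ind (UU B X) (DD G κ B X Z p.2)
      have h4 := sum_ind (UU B X) (TT G κ B X p.2)
      have h5 := sum_ind (UU B X) (HH G κ B X (κ p.1 p.2))
      omega

lemma card_UU : Fintype.card V ≤ (UU B X).card + 2 * B.card + X.card := by
  have h : (univ : Finset V) ⊆ UU B X ∪ Vs B ∪ X := by
    intro v _
    simp only [mem_union, mem_UU]; tauto
  have h1 := card_le_card h
  have h2 := card_union_le (UU B X ∪ Vs B) X
  have h3 := card_union_le (UU B X) (Vs B)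
  have h4 := card_Vs_le B
  rw [card_univ] at h1
  omega

lemma loop (hsy : ∀ u v, κ u v = κ v u) (hpr : Prop1 G κ) (hno : NoK G κ q)
    (hdeg : ∀ w, ∃ S : Finset V, q + 1 ≤ S.card ∧ ∀ u ∈ S, G.Adj w u) (e : ℕ)
    (hn : 4 * q + e ≤ Fintype.card V) :
    ∀ (b : ℕ) (B : Finset (V × V)) (X : Finset V) (Z : Finset ℕ), B.card = b → St G κ q B X Z →
      3 ≤ 3 * X.card + 4 * Z.card + e → False := by
  intro b
  induction b with
  | zero =>
    intro B X Z hb hS hs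
    have h1 := count hsy hpr hS hno hdeg
    have h2 := card_UU (B := B) (X := X)
    have h3 := hS.card
    rw [card_eq_zero] at hb
    subst hb
    simp at h1 h2 h3
    simp [h1] at h2
    omega
  | succ b ih =>
    intro B X Z hb hS hs
    have h1 := count hsy hpr hS hno hdeg
    have h2 := card_UU (B := B) (X := X)
    have h3 := hS.card
    have hex : ∃ p ∈ B, 5 + (3 * X.card + 4 * Z.card + e) ≤ (DD G κ B X Z p.1).card +
        (DD G κ B X Z p.2).card + (HH G κ B X (κ p.1 p.2)).card := by
      by_contra! hcon
      have h4 : ∑ p ∈ B, ((DD G κ B X Z p.1).card + (TT G κ B X p.1).card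
          + (DD G κ B X Z p.2).card + (TT G κ B X p.2).card + (HH G κ B X (κ p.1 p.2)).card)
          ≤ ∑ p ∈ B, (4 + (3 * X.card + 4 * Z.card + e) + 2 * b) := by
        refine sum_le_sum (fun p hp => ?_)
        have := hcon p hp
        have := T_le (X := X) hsy hpr hS.rm hp (Or.inl rfl)
        have := T_le (X := X) hsy hpr hS.rm hp (Or.inr rfl)
        omega
      rw [sum_const, smul_eq_mul, hb] at h4
      rw [hb] at h1
      have h5 : 2 * (b + 1) + (3 * X.card + 4 * Z.card + e) ≤ (UU B X).card := by omega
      have h6 := Nat.mul_le_mul_right (b + 1 + 1) h5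
      generalize 3 * X.card + 4 * Z.card + e = s at *
      nlinarith
    obtain ⟨p, hp, hD⟩ := hex
    obtain ⟨t1, t2, t3, t4, t5⟩ := tri hsy hpr hS hno hp rfl rfl rfl
    have hbe : (B.erase p).card = b := by rw [card_erase_of_mem hp]; omega
    have f1 := fst_mem_Vs hp
    have f2 := snd_mem_Vs hp
    have f3 := col_mem_Cs (κ := κ) hp
    rcases Nat.eq_zero_or_pos (HH G κ B X (κ p.1 p.2)).card with hH | hH
    · rcases Nat.eq_zero_or_pos (DD G κ B X Z p.1).card with hD1 | hD1
      · refine ih _ _ _ hbe (hubX hsy hpr hS hp (Or.inr ⟨rfl, rfl⟩) (by omega)) ?_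
        rw [card_insert_of_notMem (fun h => hS.dX _ h f2)]; omega
      · refine ih _ _ _ hbe (hubX hsy hpr hS hp (Or.inl ⟨rfl, rfl⟩) (by omega)) ?_
        rw [card_insert_of_notMem (fun h => hS.dX _ h f1)]; omega
    · refine ih _ _ _ hbe (hubZ hsy hpr hS hp (by omega)) ?_
      rw [card_insert_of_notMem (fun h => hS.dZ _ h f3)]; omega


lemma St_base (hB : RM G κ B) (hq : B.card = q) : St G κ q B ∅ ∅ := by
  refine ⟨hB, by simp, by simp, by simpa using hq, ?_⟩
  intro A C _ _ _ _
  refine ⟨∅, ⟨by simp, by simp⟩, ?_⟩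
  simp [Vs, Cs]

lemma blocked (hB : RM G κ B) (hq : B.card = q) (hno : NoK G κ q) {p l : V × V} (hp : p ∈ B)
    (hl : l ∈ B) (hpl : l ≠ p) {v w t z a b : V} (hv : v = p.1 ∨ v = p.2) (hw : w ∉ Vs B)
    (hvw : G.Adj v w) (hc : κ v w = κ l.1 l.2) (ht : t = l.1 ∨ t = l.2) (hz : z ∉ Vs B)
    (htz : G.Adj t z) (hcz : κ t z ∉ Cs κ B) (hzw : z ≠ w) (hab : G.Adj a b)
    (ha : a ∉ Vs B ∨ a = p.1 ∨ a = p.2) (hb : b ∉ Vs B ∨ b = p.1 ∨ b = p.2)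
    (hcab : κ a b ∉ Cs κ B ∨ κ a b = κ p.1 p.2) (hcne : κ a b ≠ κ t z)
    (a1 : a ≠ v) (a2 : a ≠ w) (a3 : a ≠ z) (b1 : b ≠ v) (b2 : b ≠ w) (b3 : b ≠ z) : False := by
  have sub : B.erase p ⊆ B := erase_subset _ _
  have hl' : l ∈ B.erase p := mem_erase.2 ⟨hpl, hl⟩
  have sub' : (B.erase p).erase l ⊆ B.erase p := erase_subset _ _
  obtain ⟨e1, e2, e3⟩ := hB.erase hp
  have hB' := hB.mono sub
  obtain ⟨e1', e2', e3'⟩ := hB'.erase hl'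
  have g1 := fst_mem_Vs hp
  have g2 := snd_mem_Vs hp
  have g3 := col_mem_Cs (κ := κ) hp
  have k1 := fst_mem_Vs hl
  have k2 := snd_mem_Vs hl
  have k3 := col_mem_Cs (κ := κ) hl
  have k1' := fst_mem_Vs hl'
  have k2' := snd_mem_Vs hl'
  have k3' := col_mem_Cs (κ := κ) hl'
  have htB : t ∈ Vs (B.erase p) := by rcases ht with rfl | rfl <;> assumption
  have vP : ∀ x, (x ∉ Vs B ∨ x = p.1 ∨ x = p.2) → x ∉ Vs (B.erase p) := by
    rintro x (h | rfl | rfl)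
    · exact fun h' => h (Vs_mono sub h')
    · exact e1
    · exact e2
  have cP : ∀ x, (x ∉ Cs κ B ∨ x = κ p.1 p.2) → x ∉ Cs κ (B.erase p) := by
    rintro x (h | rfl)
    · exact fun h' => h (Cs_mono sub h')
    · exact e3
  set K := (B.erase p).erase l with hK
  have vK : ∀ x, x ∉ Vs (B.erase p) → x ∉ Vs K := fun x h h' => h (Vs_mono sub' h')
  have cK : ∀ x, x ∉ Cs κ (B.erase p) → x ∉ Cs κ K := fun x h h' => h (Cs_mono sub' h')
  have pv := vP v (Or.inr hv)
  have pw := vP w (Or.inl hw)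
  have pz := vP z (Or.inl hz)
  have pa := vP a ha
  have pb := vP b hb
  have pc := cP _ (Or.inl hcz)
  have pc' := cP _ hcab
  have vB : v ∈ Vs B := by rcases hv with rfl | rfl <;> assumption
  have tK : t ∉ Vs K := by rcases ht with rfl | rfl <;> assumption
  obtain ⟨i1, j1⟩ := (hB'.mono sub').insert hvw (vK _ pv) (vK _ pw) (by rw [hc]; exact e3')
  obtain ⟨i2, j2⟩ := i1.insert htz
    (by rw [Vs_insert]; simp only [mem_insert, not_or]
        exact ⟨fun h => pv (h ▸ htB), fun h => pw (h ▸ htB), tK⟩)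
    (by rw [Vs_insert]; simp only [mem_insert, not_or]
        exact ⟨fun h => hz (h ▸ vB), hzw, vK _ pz⟩)
    (by rw [Cs_insert]; simp only [mem_insert, not_or]
        exact ⟨fun h => by rw [h, hc] at hcz; exact hcz k3, cK _ pc⟩)
  obtain ⟨i3, j3⟩ := i2.insert hab
    (by rw [Vs_insert, Vs_insert]; simp only [mem_insert, not_or]
        exact ⟨fun h => pa (h ▸ htB), a3, a1, a2, vK _ pa⟩)
    (by rw [Vs_insert, Vs_insert]; simp only [mem_insert, not_or]
        exact ⟨fun h => pb (h ▸ htB), b3, b1, b2, vK _ pb⟩)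
    (by rw [Cs_insert, Cs_insert]; simp only [mem_insert, not_or]
        exact ⟨hcne, fun h => pc' (by rw [h, hc]; exact k3'), cK _ pc'⟩)
  refine hno _ i3 ?_
  have q1 := card_erase_add_one hl'
  have q2 := card_erase_add_one hp
  rw [j3, j2, j1, hK]; omega

lemma shape (hsy : ∀ u v, κ u v = κ v u) (hpr : Prop1 G κ) (hB : RM G κ B) (hq : B.card = q)
    (hno : NoK G κ q) {p : V × V} (hp : p ∈ B)
    (h3 : (DD G κ B ∅ ∅ p.1).card ≤ 3) (h3' : (DD G κ B ∅ ∅ p.2).card ≤ 3)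
    (hdeg : 0 < (DD G κ B ∅ ∅ p.1).card + (DD G κ B ∅ ∅ p.2).card)
    (hF : 2 * q + 2 ≤ (DD G κ B ∅ ∅ p.1).card + (TT G κ B ∅ p.1).card
      + (DD G κ B ∅ ∅ p.2).card + (TT G κ B ∅ p.2).card + (HH G κ B ∅ (κ p.1 p.2)).card) :
    ∃ P : Finset V, P.card ≤ 2 ∧ DD G κ B ∅ ∅ p.1 ⊆ P ∧ DD G κ B ∅ ∅ p.2 ⊆ P ∧
      ∀ v, (v = p.1 ∨ v = p.2) → ∀ w, w ∉ Vs B → w ∉ P → G.Adj v w → ∀ l ∈ B,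
        κ v w = κ l.1 l.2 → ∀ z ∈ DD G κ B ∅ ∅ l.1 ∪ DD G κ B ∅ ∅ l.2, z ∈ P ∨ z = w := by
  have hS := St_base hB hq
  have g1 := fst_mem_Vs hp
  have g2 := snd_mem_Vs hp
  have hpa := hB.1 p hp
  have leaf : ∀ l : V × V, ∀ z ∈ DD G κ B ∅ ∅ l.1 ∪ DD G κ B ∅ ∅ l.2,
      ∃ t, (t = l.1 ∨ t = l.2) ∧ Fr G κ B ∅ ∅ t z := by
    intro l z hz
    rcases mem_union.1 hz with h | h
    · exact ⟨l.1, Or.inl rfl, mem_DD.1 h⟩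
    · exact ⟨l.2, Or.inr rfl, mem_DD.1 h⟩
  rcases (HH G κ B ∅ (κ p.1 p.2)).eq_empty_or_nonempty with hH | hH
  · rw [hH, card_empty] at hF
    have T1 := T_le (X := ∅) hsy hpr hB hp (Or.inl rfl)
    have T2 := T_le (X := ∅) hsy hpr hB hp (Or.inr rfl)
    obtain ⟨t1, t2, -, -, -⟩ := tri hsy hpr hS hno hp rfl rfl rfl
    have c1 : (DD G κ B ∅ ∅ p.1).card = 2 := by omega
    have c2 : (DD G κ B ∅ ∅ p.2).card = 2 := by omega
    obtain ⟨u, u', huu, hD1⟩ := card_eq_two.1 c1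
    have hu : Fr G κ B ∅ ∅ p.1 u := mem_DD.1 (by rw [hD1]; simp)
    have hu' : Fr G κ B ∅ ∅ p.1 u' := mem_DD.1 (by rw [hD1]; simp)
    have hsub : DD G κ B ∅ ∅ p.2 ⊆ DD G κ B ∅ ∅ p.1 := by
      intro v hv
      by_contra hv1
      have n1 : u ≠ v := by rintro rfl; exact hv1 (mem_DD.2 hu)
      have n2 : u' ≠ v := by rintro rfl; exact hv1 (mem_DD.2 hu')
      have r1 := L1 hS hno hp hu (mem_DD.1 hv) n1
      have r2 := L1 hS hno hp hu' (mem_DD.1 hv) n2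
      exact huu (hpr _ _ _ hu.2.1 hu'.2.1 (r1.trans r2.symm))
    have heq : DD G κ B ∅ ∅ p.2 = DD G κ B ∅ ∅ p.1 :=
      eq_of_subset_of_card_le hsub (by omega)
    have ku : Fr G κ B ∅ ∅ p.2 u := mem_DD.1 (by rw [heq, hD1]; simp)
    have ku' : Fr G κ B ∅ ∅ p.2 u' := mem_DD.1 (by rw [heq, hD1]; simp)
    refine ⟨{u, u'}, card_le_two, by rw [hD1], by rw [heq, hD1], ?_⟩
    intro v hv w hw hwP hvw l hl hc z hz
    by_contra! hcon
    obtain ⟨hzP, hzw⟩ := hcon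
    simp only [mem_insert, mem_singleton, not_or] at hwP hzP
    obtain ⟨t, ht, htz⟩ := leaf l z hz
    have hlp : l ≠ p := by
      rintro rfl
      exact T_ne hsy hpr hB hp hv hw hvw hc
    -- the other end
    obtain ⟨o, ho, hov, fu, fu'⟩ : ∃ o, (o = p.1 ∨ o = p.2) ∧ o ≠ v ∧ Fr G κ B ∅ ∅ o u ∧
        Fr G κ B ∅ ∅ o u' := by
      rcases hv with rfl | rfl
      · exact ⟨p.2, Or.inr rfl, hpa.ne.symm, ku, ku'⟩
      · exact ⟨p.1, Or.inl rfl, hpa.ne, hu, hu'⟩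
    have oB : o ∈ Vs B := by rcases ho with rfl | rfl <;> assumption
    have vB : v ∈ Vs B := by rcases hv with rfl | rfl <;> assumption
    have fin : ∀ x, Fr G κ B ∅ ∅ o x → x ≠ w → x ≠ z → κ o x ≠ κ t z → False := by
      intro x hx hxw hxz hcx
      exact blocked hB hq hno hp hl hlp hv hw hvw hc ht htz.1.1 htz.2.1 htz.2.2.1 hzw hx.2.1
        (Or.inr ho) (Or.inl hx.1.1) (Or.inl hx.2.2.1) hcx hov (fun h => hw (h ▸ oB))
        (fun h => htz.1.1 (h ▸ oB)) (fun h => hx.1.1 (h ▸ vB)) hxw hxz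
    by_cases hcx : κ o u = κ t z
    · refine fin u' fu' (Ne.symm hwP.2) (Ne.symm hzP.2) ?_
      intro h
      exact huu (hpr _ _ _ fu.2.1 fu'.2.1 (hcx.trans h.symm))
    · exact fin u fu (Ne.symm hwP.1) (Ne.symm hzP.1) hcx
  · obtain ⟨u, u', hu, hu', huu, hcu, s1, s2⟩ := D_of_H hS hno hp hH
    refine ⟨{u, u'}, card_le_two, s1, s2, ?_⟩
    intro v hv w hw hwP hvw l hl hc z hz
    by_contra! hcon
    obtain ⟨hzP, hzw⟩ := hcon
    simp only [mem_insert, mem_singleton, not_or] at hwP hzP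
    obtain ⟨t, ht, htz⟩ := leaf l z hz
    have hlp : l ≠ p := by
      rintro rfl
      exact T_ne hsy hpr hB hp hv hw hvw hc
    have vB : v ∈ Vs B := by rcases hv with rfl | rfl <;> assumption
    exact blocked hB hq hno hp hl hlp hv hw hvw hc ht htz.1.1 htz.2.1 htz.2.2.1 hzw huu
      (Or.inl hu.1) (Or.inl hu'.1) (Or.inr hcu)
      (fun h => htz.2.2.1 (by rw [← h, hcu]; exact col_mem_Cs hp))
      (fun h => hu.1 (h ▸ vB)) (Ne.symm hwP.1) (Ne.symm hzP.1)
      (fun h => hu'.1 (h ▸ vB)) (Ne.symm hwP.2) (Ne.symm hzP.2)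

lemma cover (hsy : ∀ u v, κ u v = κ v u) (hpr : Prop1 G κ) (hB : RM G κ B) (hq : B.card = q)
    (hno : NoK G κ q)
    (hdeg : ∀ w, ∃ S : Finset V, q + 1 ≤ S.card ∧ ∀ u ∈ S, G.Adj w u) {w : V} (hw : w ∉ Vs B) :
    ∃ l ∈ B, w ∈ DD G κ B ∅ ∅ l.1 ∪ DD G κ B ∅ ∅ l.2 := by
  obtain ⟨S, hSc, hSa⟩ := hdeg w
  obtain ⟨u, hu, huc⟩ : ∃ u ∈ S, κ w u ∉ Cs κ B := by
    by_contra! hcon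
    have : S.card ≤ (Cs κ B).card := by
      refine card_le_card_of_injOn (fun u => κ w u) (fun u hu => hcon u hu) ?_
      intro u hu v hv huv
      exact hpr w u v (hSa u hu) (hSa v hv) huv
    have := card_Cs_le κ B
    omega
  have hadj := hSa u hu
  by_cases huB : u ∈ Vs B
  · obtain ⟨l, hl, h⟩ := mem_Vs.1 huB
    refine ⟨l, hl, ?_⟩
    have : w ∈ DD G κ B ∅ ∅ u :=
      mem_DD.2 ⟨⟨hw, by simp⟩, hadj.symm, by rw [hsy]; exact huc, by simp⟩
    rcases h with rfl | rfl
    · exact mem_union_left _ this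
    · exact mem_union_right _ this
  · exact (L0 (St_base hB hq) hno ⟨hw, by simp⟩ ⟨⟨huB, by simp⟩, hadj, huc, by simp⟩).elim

noncomputable def slot (G : SimpleGraph V) (κ : V → V → ℕ) (B : Finset (V × V)) (P : Finset V)
    (v : V) (l : V × V) : Finset V :=
  (TT G κ B ∅ v \ P).filter (fun w => κ v w = κ l.1 l.2)

lemma slot_le (hpr : Prop1 G κ) (P : Finset V) (v : V) (l : V × V) :
    (slot G κ B P v l).card ≤ 1 := by
  rw [card_le_one]
  intro a ha b hb
  simp only [slot, mem_filter, mem_sdiff, mem_TT] at ha hb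
  exact hpr v a b ha.1.1.2.1 hb.1.1.2.1 (ha.2.trans hb.2.symm)

lemma slot_sum (hsy : ∀ u v, κ u v = κ v u) (hpr : Prop1 G κ) (hB : RM G κ B)
    {p : V × V} (hp : p ∈ B) {v : V} (hv : v = p.1 ∨ v = p.2) (P : Finset V) :
    (TT G κ B ∅ v \ P).card ≤ ∑ l ∈ B.erase p, (slot G κ B P v l).card := by
  refine le_trans (card_le_card ?_) card_biUnion_le
  intro w hw
  have hw' := hw
  simp only [mem_sdiff, mem_TT] at hw'
  obtain ⟨l, hl, h⟩ := mem_Cs.1 hw'.1.2.2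
  refine mem_biUnion.2 ⟨l, mem_erase.2 ⟨?_, hl⟩, mem_filter.2 ⟨hw, h.symm⟩⟩
  rintro rfl
  exact T_ne hsy hpr hB hp hv hw'.1.1.1 hw'.1.2.1 h.symm

lemma base_case (hsy : ∀ u v, κ u v = κ v u) (hpr : Prop1 G κ) (hB : RM G κ B) (hq : B.card = q)
    (hno : NoK G κ q) (hq3 : 3 ≤ q)
    (hdeg : ∀ w, ∃ S : Finset V, q + 1 ≤ S.card ∧ ∀ u ∈ S, G.Adj w u)
    (hn : 4 * q ≤ Fintype.card V) : False := by
  have hS := St_base hB hq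
  have hl := loop hsy hpr hno hdeg 0 (by simpa using hn)
  have n1 : ∀ p ∈ B, (DD G κ B ∅ ∅ p.1).card ≤ 3 := by
    intro p hp
    by_contra! h
    exact hl _ _ _ _ rfl (hubX hsy hpr hS hp (Or.inl ⟨rfl, rfl⟩) (by simp only [card_empty]; omega)) (by simp)
  have n2 : ∀ p ∈ B, (DD G κ B ∅ ∅ p.2).card ≤ 3 := by
    intro p hp
    by_contra! h
    exact hl _ _ _ _ rfl (hubX hsy hpr hS hp (Or.inr ⟨rfl, rfl⟩) (by simp only [card_empty]; omega)) (by simp)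
  have n3 : ∀ p ∈ B, (HH G κ B ∅ (κ p.1 p.2)).card ≤ 4 := by
    intro p hp
    by_contra! h
    exact hl _ _ _ _ rfl (hubZ hsy hpr hS hp (by simp only [card_empty]; omega)) (by simp)
  have hU := card_UU (B := B) (X := ∅)
  rw [card_empty] at hU
  have hcount := count hsy hpr hS hno hdeg
  set F : V × V → ℕ := fun p => (DD G κ B ∅ ∅ p.1).card + (TT G κ B ∅ p.1).card
      + (DD G κ B ∅ ∅ p.2).card + (TT G κ B ∅ p.2).card + (HH G κ B ∅ (κ p.1 p.2)).card with hFdef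
  -- main estimate
  have main : ∀ p ∈ B, 0 < (DD G κ B ∅ ∅ p.1).card + (DD G κ B ∅ ∅ p.2).card →
      2 * q + 2 ≤ F p → ∃ (g s : V × V → ℕ),
        (UU B ∅).card ≤ 2 + ∑ l ∈ B.erase p, g l ∧ F p ≤ 6 + ∑ l ∈ B.erase p, s l ∧
        ∀ l ∈ B, s l ≤ 2 ∧ (0 < s l → g l ≤ 1) ∧
          g l ≤ (DD G κ B ∅ ∅ l.1 ∪ DD G κ B ∅ ∅ l.2).card := by
    intro p hp hpos hF
    obtain ⟨P, hP, s1, s2, hbl⟩ := shape hsy hpr hB hq hno hp (n1 p hp) (n2 p hp) hpos hF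
    refine ⟨fun l => ((DD G κ B ∅ ∅ l.1 ∪ DD G κ B ∅ ∅ l.2) \ P).card,
      fun l => (slot G κ B P p.1 l).card + (slot G κ B P p.2 l).card, ?_, ?_, ?_⟩
    · have hsub : UU B ∅ ⊆ P ∪ (B.erase p).biUnion
          (fun l => (DD G κ B ∅ ∅ l.1 ∪ DD G κ B ∅ ∅ l.2) \ P) := by
        intro w hw
        by_cases hwP : w ∈ P
        · exact mem_union_left _ hwP
        obtain ⟨l, hl, hwl⟩ := cover hsy hpr hB hq hno hdeg (mem_UU.1 hw).1
        refine mem_union_right _ (mem_biUnion.2 ⟨l, mem_erase.2 ⟨?_, hl⟩, mem_sdiff.2 ⟨hwl, hwP⟩⟩)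
        rintro rfl
        rcases mem_union.1 hwl with h | h
        · exact hwP (s1 h)
        · exact hwP (s2 h)
      have c1 := card_le_card hsub
      have c2 := card_union_le P ((B.erase p).biUnion
          (fun l => (DD G κ B ∅ ∅ l.1 ∪ DD G κ B ∅ ∅ l.2) \ P))
      have c3 : ((B.erase p).biUnion
          (fun l => (DD G κ B ∅ ∅ l.1 ∪ DD G κ B ∅ ∅ l.2) \ P)).card ≤ _ := card_biUnion_le
      beta_reduce; omega
    · have k1 := slot_sum hsy hpr hB hp (Or.inl rfl) P
      have k2 := slot_sum hsy hpr hB hp (Or.inr rfl) P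
      have io : ∀ v, DD G κ B ∅ ∅ v ⊆ P →
          (DD G κ B ∅ ∅ v).card + (TT G κ B ∅ v).card ≤ 2 + (TT G κ B ∅ v \ P).card := by
        intro v hv
        have d : Disjoint (DD G κ B ∅ ∅ v) (TT G κ B ∅ v ∩ P) := by
          rw [Finset.disjoint_left]
          intro x hx hx'
          exact (mem_DD.1 hx).2.2.1 (mem_TT.1 (mem_inter.1 hx').1).2.2
        have h1 := card_union_of_disjoint d
        have h2 := card_le_card (union_subset hv (inter_subset_right (s₁ := TT G κ B ∅ v)))
        have h3 := card_sdiff_add_card_inter (TT G κ B ∅ v) P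
        omega
      have i1 := io _ s1
      have i2 := io _ s2
      obtain ⟨-, -, t3, t4, -⟩ := tri hsy hpr hS hno hp rfl rfl rfl
      rw [sum_add_distrib]
      simp only [hFdef]
      omega
    · intro l hl
      have l1 := slot_le (B := B) hpr P p.1 l
      have l2 := slot_le (B := B) hpr P p.2 l
      refine ⟨by simp only; omega, ?_, card_le_card sdiff_subset⟩
      intro hs
      have : ∃ v, (v = p.1 ∨ v = p.2) ∧ (slot G κ B P v l).Nonempty := by
        rcases Nat.eq_zero_or_pos (slot G κ B P p.1 l).card with h | h
        · exact ⟨p.2, Or.inr rfl, card_pos.1 (by simp only at hs; omega)⟩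
        · exact ⟨p.1, Or.inl rfl, card_pos.1 h⟩
      obtain ⟨v, hv, w, hw⟩ := this
      simp only [slot, mem_filter, mem_sdiff, mem_TT] at hw
      obtain ⟨⟨⟨hw1, hw2, -⟩, hw3⟩, hw4⟩ := hw
      have := hbl v hv w hw1.1 hw3 hw2 l hl hw4
      simp only
      rw [card_le_one]
      intro a ha b hb
      rw [mem_sdiff] at ha hb
      have r1 := this a ha.1
      have r2 := this b hb.1
      have r1' := r1.resolve_left ha.2
      have r2' := r2.resolve_left hb.2
      rw [r1', r2']
  have hcovle : ∀ l ∈ B, (DD G κ B ∅ ∅ l.1 ∪ DD G κ B ∅ ∅ l.2).card ≤ 4 := by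
    intro l hl
    obtain ⟨t1, t2, -, -, -⟩ := tri hsy hpr hS hno hl rfl rfl rfl
    have := card_union_le (DD G κ B ∅ ∅ l.1) (DD G κ B ∅ ∅ l.2)
    have := n1 l hl
    have := n2 l hl
    omega
  have hTF : ∀ p ∈ B, F p + 2 ≤ 2 * q + (DD G κ B ∅ ∅ p.1).card + (DD G κ B ∅ ∅ p.2).card
      + (HH G κ B ∅ (κ p.1 p.2)).card := by
    intro p hp
    have T1 := T_le (X := ∅) hsy hpr hB hp (Or.inl rfl)
    have T2 := T_le (X := ∅) hsy hpr hB hp (Or.inr rfl)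
    simp only [hFdef]
    omega
  have hce : ∀ p ∈ B, (B.erase p).card = q - 1 := by
    intro p hp; rw [card_erase_of_mem hp, hq]
  by_cases hA : ∃ p ∈ B, 2 * q + 3 ≤ F p
  · obtain ⟨p, hp, hF⟩ := hA
    have hpos : 0 < (DD G κ B ∅ ∅ p.1).card + (DD G κ B ∅ ∅ p.2).card := by
      have := hTF p hp
      have := n3 p hp
      omega
    obtain ⟨g, s, m1, m2, m3⟩ := main p hp hpos (by omega)
    have : ∑ l ∈ B.erase p, (2 * g l + 3 * s l) ≤ ∑ l ∈ B.erase p, 8 := by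
      refine sum_le_sum (fun l hl => ?_)
      obtain ⟨a1, a2, a3⟩ := m3 l (mem_of_mem_erase hl)
      have := hcovle l (mem_of_mem_erase hl)
      omega
    rw [sum_add_distrib, ← mul_sum, ← mul_sum, sum_const, hce p hp, smul_eq_mul] at this
    omega
  · push Not at hA
    have hsum : ∑ p ∈ B, F p = ∑ p ∈ B, (2 * q + 2) := by
      refine le_antisymm (sum_le_sum (fun p hp => by have := hA p hp; omega)) ?_
      refine le_trans ?_ hcount
      rw [sum_const, smul_eq_mul, hq]
      have : 2 * q ≤ (UU B ∅).card := by omega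
      nlinarith
    have hall : ∀ p ∈ B, F p = 2 * q + 2 :=
      (sum_eq_sum_iff_of_le (fun p hp => by have := hA p hp; omega)).1 hsum
    have hcov2 : ∀ l ∈ B, (DD G κ B ∅ ∅ l.1 ∪ DD G κ B ∅ ∅ l.2).card ≤ 2 := by
      intro l hl
      rcases Nat.eq_zero_or_pos ((DD G κ B ∅ ∅ l.1).card + (DD G κ B ∅ ∅ l.2).card) with h | h
      · have := card_union_le (DD G κ B ∅ ∅ l.1) (DD G κ B ∅ ∅ l.2)
        omega
      · obtain ⟨P, hP, s1, s2, -⟩ := shape hsy hpr hB hq hno hl (n1 l hl) (n2 l hl) h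
          (hall l hl).ge
        exact (card_le_card (union_subset s1 s2)).trans hP
    obtain ⟨w, hw⟩ : (UU B ∅).Nonempty := card_pos.1 (by omega)
    obtain ⟨p, hp, hwp⟩ := cover hsy hpr hB hq hno hdeg (mem_UU.1 hw).1
    have hpos : 0 < (DD G κ B ∅ ∅ p.1).card + (DD G κ B ∅ ∅ p.2).card :=
      lt_of_lt_of_le (card_pos.2 ⟨w, hwp⟩) (card_union_le _ _)
    have hFp := hall p hp
    obtain ⟨g, s, m1, m2, m3⟩ := main p hp hpos hFp.ge
    have : ∑ l ∈ B.erase p, (2 * g l + s l) ≤ ∑ l ∈ B.erase p, 4 := by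
      refine sum_le_sum (fun l hl => ?_)
      obtain ⟨a1, a2, a3⟩ := m3 l (mem_of_mem_erase hl)
      have := hcov2 l (mem_of_mem_erase hl)
      omega
    rw [sum_add_distrib, ← mul_sum, sum_const, hce p hp, smul_eq_mul] at this
    omega


lemma RM_inj {V : Type*} {G : SimpleGraph V} {κ : V → V → ℕ} {N : Finset (V × V)} (h : RM G κ N)
    {p r : V × V} (hp : p ∈ N) (hr : r ∈ N) (v : V) (h1 : v ∈ s(p.1, p.2)) (h2 : v ∈ s(r.1, r.2)) :
    p = r := by
  by_contra hne
  obtain ⟨a1, a2, a3, a4, -⟩ := h.2 p hp r hr hne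
  rw [Sym2.mem_iff] at h1 h2
  rcases h1 with h1 | h1 <;> rcases h2 with h2 | h2 <;> rw [h1] at h2 <;> contradiction

end
end RMProof

/-- If `G` is a properly edge-coloured graph on `n` vertices with minimum degree at
least `k ≥ 4` and `n ≥ 4k - 4`, then `G` contains a rainbow matching of size `k`. -/
theorem rainbow_matching_of_min_degree_proper {V : Type*} [Fintype V]
    (G : SimpleGraph V) [DecidableRel G.Adj] (c : Sym2 V → ℕ)
    (hproper : IsProperEdgeColouring G c) (k : ℕ) (hk : 4 ≤ k)
    (hdeg : ∀ v : V, k ≤ G.degree v)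
    (hn : 4 * k - 4 ≤ Fintype.card V) :
    ∃ M : Finset (Sym2 V), IsRainbowMatching G c M ∧ M.card = k := by
  classical
  by_contra hcon
  let κ : V → V → ℕ := fun u v => c s(u, v)
  have hsy : ∀ u v, κ u v = κ v u := fun u v => congrArg c Sym2.eq_swap
  have hpr : RMProof.Prop1 G κ := by
    intro v u w hu hw h
    by_contra hne
    refine hproper s(v, u) hu s(v, w) hw ?_ ⟨v, by simp, by simp⟩ h
    intro h'
    exact hne (Sym2.congr_right.1 h')
  have hnoK : ∀ N, RMProof.RM G κ N → N.card ≠ k := by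
    intro N hN hc
    refine hcon ⟨N.image (fun p => s(p.1, p.2)), ⟨?_, ?_, ?_⟩, ?_⟩
    · intro e he
      obtain ⟨p, hp, rfl⟩ := Finset.mem_image.1 he
      exact hN.1 p hp
    · intro e he f hf hne v hv
      obtain ⟨p, hp, rfl⟩ := Finset.mem_image.1 he
      obtain ⟨r, hr, rfl⟩ := Finset.mem_image.1 hf
      exact hne (by rw [RMProof.RM_inj hN hp hr v hv.1 hv.2])
    · intro e he f hf h
      obtain ⟨p, hp, rfl⟩ := Finset.mem_image.1 he
      obtain ⟨r, hr, rfl⟩ := Finset.mem_image.1 hf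
      by_contra hne
      have hpr' : p ≠ r := by rintro rfl; exact hne rfl
      exact (hN.2 p hp r hr hpr').2.2.2.2 h
    · rw [Finset.card_image_of_injOn, hc]
      intro p hp r hr h
      have h' : s(p.1, p.2) = s(r.1, r.2) := h
      exact RMProof.RM_inj hN hp hr p.1 (by simp) (h' ▸ by simp)
  obtain ⟨q, hqk, B, hB, hq, hno⟩ : ∃ q, q < k ∧ ∃ B, RMProof.RM G κ B ∧ B.card = q ∧
      RMProof.NoK G κ q := by
    by_contra hall
    have : ∀ j, j ≤ k → ∃ B, RMProof.RM G κ B ∧ B.card = j := by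
      intro j
      induction j with
      | zero => intro _; exact ⟨∅, ⟨by simp, by simp⟩, by simp⟩
      | succ j ih =>
        intro hj
        obtain ⟨B, hB, hc⟩ := ih (by omega)
        by_contra hno
        exact hall ⟨j, by omega, B, hB, hc, fun N hN hc' => hno ⟨N, hN, hc'⟩⟩
    obtain ⟨B, hB, hc⟩ := this k le_rfl
    exact hnoK B hB hc
  have hd : ∀ w, ∃ S : Finset V, q + 1 ≤ S.card ∧ ∀ u ∈ S, G.Adj w u := by
    intro w
    refine ⟨G.neighborFinset w, ?_, fun u hu => by simpa using hu⟩
    have := hdeg w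
    rw [SimpleGraph.card_neighborFinset_eq_degree]
    omega
  by_cases hq3 : 3 ≤ q
  · exact RMProof.base_case hsy hpr hB hq hno hq3 hd (by omega)
  · exact RMProof.loop hsy hpr hno hd 4 (by omega) _ B ∅ ∅ rfl (RMProof.St_base hB hq) (by simp)
end
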